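/- arXiv:2012.14175 — 6 statements merged into one kernel-verified Lean document; each statement's English description precedes it below -/
import Mathlib

section
/- Let A and B be non-empty closed discrete subsets of ℂ. If f is an A-continuable holomorphic germ at 0 and g is a B-continuable holomorphic germ at 0, then the set Ω := {0} ∪ (A·B) is a closed discrete subset of ℂ and the Hadamard product f ⊙ g is an Ω-continuable germ. -/
open scoped Pointwise
open Filter

/-- The sum of a power series with coefficients `a`. -/
noncomputable def seriesSum (a : ℕ → ℂ) (ξ : ℂ) : ℂ := ∑' n, a n * ξ ^ n

/-- The radius of convergence of the power series with coefficients `a`. -/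
noncomputable def radiusOf (a : ℕ → ℂ) : ENNReal :=
  (FormalMultilinearSeries.ofScalars ℂ a).radius

/-- `F` is an analytic continuation of the germ `f` (at `γ 0`) along the path `γ : [0,1] → ℂ`:
a family of germs `F t` at `γ t`, starting from `f`, which is locally consistent. -/
def AnalyticContinuationAlong (f : ℂ → ℂ) (γ : ℝ → ℂ) (F : ℝ → ℂ → ℂ) : Prop :=
  (∀ t ∈ Set.Icc (0:ℝ) 1, AnalyticAt ℂ (F t) (γ t)) ∧
  (F 0 =ᶠ[nhds (γ 0)] f) ∧
  ∀ t ∈ Set.Icc (0:ℝ) 1, ∀ᶠ s in nhdsWithin t (Set.Icc (0:ℝ) 1), F s =ᶠ[nhds (γ s)] F t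

/-- The power series with coefficients `a` defines an `Ω`-continuable germ at `0`:
it has positive radius of convergence, and its sum admits analytic continuation along
every path `γ : [0,1] → ℂ ∖ Ω` whose initial point lies in the disc of convergence. -/
def ContinuableGerm (Ω : Set ℂ) (a : ℕ → ℂ) : Prop :=
  0 < radiusOf a ∧
  ∀ γ : ℝ → ℂ, ContinuousOn γ (Set.Icc 0 1) →
    (∀ t ∈ Set.Icc (0:ℝ) 1, γ t ∉ Ω) →
    (‖γ 0‖₊ : ENNReal) < radiusOf a →
    ∃ F : ℝ → ℂ → ℂ, AnalyticContinuationAlong (seriesSum a) γ F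

/-!
In the coordinate `ξ = exp y` the Hadamard product of `f` and `g` is an additive convolution: with
`φ = f ∘ exp` and `ψ = g ∘ exp`,
`2πi (f ⊙ g)(exp y) = ∫ φ u * ψ (y - u) du`, the integral running from `x` to `x + 2πi`. The
branches of `φ` and `ψ` are singular at most on `S = exp⁻¹ A` and `T = exp⁻¹ B`, both
`2πi`-periodic.

The convolution continues as long as `y` avoids `S + T ⊆ exp⁻¹ (A * B)`. Discretise the contour into
a polygon whose vertices `z k` carry branches of `φ` at `z k` and of `ψ` at `y - z k`. When `y`
moves by `w`, move `z k` by `χ k * w`, where the weight `χ k ∈ [0, 1]` is large when `z k` is far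
from `S` and small when `y - z k` is far from `T`; the point `y - z k` then moves by
`(1 - χ k) * w`. Since `dist z S + dist (y - z) T ≥ dist y (S + T)`, some fixed amount of room is
always available, so a step of fixed length is possible everywhere on a compact path avoiding
`S + T`; by Cauchy's theorem the integral does not depend on the polygon.

Paths avoiding `0` lift through `exp`, so this gives the continuation of `f ⊙ g` itself.
-/

section AnalyticGerms

open Set Metric Topology

variable {E : Type*} [NormedAddCommGroup E] [NormedSpace ℂ E] [CompleteSpace E]

theorem eventuallyEq_nhds_of_isPreconnected {U : Set ℂ} (hU : IsOpen U) (hc : IsPreconnected U)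
    {f g : ℂ → E} (hf : DifferentiableOn ℂ f U) (hg : DifferentiableOn ℂ g U) {x y : ℂ}
    (hx : x ∈ U) (hfg : f =ᶠ[𝓝 x] g) (hy : y ∈ U) : f =ᶠ[𝓝 y] g :=
  ((hf.analyticOnNhd hU).eqOn_of_preconnected_of_eventuallyEq
    (hg.analyticOnNhd hU) hc hx hfg).eventuallyEq_of_mem (hU.mem_nhds hy)

theorem eventuallyEq_nhds_of_mem_balls {f g : ℂ → E} {u v x y : ℂ} {r s : ℝ}
    (hf : DifferentiableOn ℂ f (ball u r)) (hg : DifferentiableOn ℂ g (ball v s))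
    (hx : x ∈ ball u r ∩ ball v s) (hfg : f =ᶠ[𝓝 x] g) (hy : y ∈ ball u r ∩ ball v s) :
    f =ᶠ[𝓝 y] g :=
  eventuallyEq_nhds_of_isPreconnected (isOpen_ball.inter isOpen_ball)
    ((convex_ball u r).inter (convex_ball v s)).isPreconnected
    (hf.mono inter_subset_left) (hg.mono inter_subset_right) hx hfg hy

theorem eventually_eventuallyEq_nhds_iff {f g : ℂ → E} {x : ℂ} (hf : AnalyticAt ℂ f x)
    (hg : AnalyticAt ℂ g x) : ∀ᶠ y in 𝓝 x, (f =ᶠ[𝓝 y] g ↔ f =ᶠ[𝓝 x] g) := by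
  obtain ⟨r, hr, hfr⟩ := hf.exists_ball_analyticOnNhd
  obtain ⟨s, hs, hgs⟩ := hg.exists_ball_analyticOnNhd
  have hx : x ∈ ball x r ∩ ball x s := ⟨mem_ball_self hr, mem_ball_self hs⟩
  filter_upwards [ball_mem_nhds x hr, ball_mem_nhds x hs] with y hyr hys
  exact ⟨fun h ↦ eventuallyEq_nhds_of_mem_balls hfr.differentiableOn hgs.differentiableOn
      ⟨hyr, hys⟩ h hx,
    fun h ↦ eventuallyEq_nhds_of_mem_balls hfr.differentiableOn hgs.differentiableOn
      hx h ⟨hyr, hys⟩⟩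

end AnalyticGerms

namespace AnalyticContinuationAlong

open Set Metric Topology

variable {f g : ℂ → ℂ} {γ γ' : ℝ → ℂ} {F G : ℝ → ℂ → ℂ}

theorem congr_start (h : AnalyticContinuationAlong f γ F) (hfg : f =ᶠ[𝓝 (γ 0)] g) :
    AnalyticContinuationAlong g γ F :=
  ⟨h.1, h.2.1.trans hfg, h.2.2⟩

theorem const (hf : ∀ t ∈ Icc (0 : ℝ) 1, AnalyticAt ℂ f (γ t)) :
    AnalyticContinuationAlong f γ fun _ ↦ f :=
  ⟨hf, .rfl, fun _ _ ↦ Eventually.of_forall fun _ ↦ .rfl⟩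

theorem comp (h : AnalyticContinuationAlong f γ F) {p : ℝ → ℝ} (hp : ContinuousOn p (Icc 0 1))
    (hpI : MapsTo p (Icc 0 1) (Icc 0 1)) (hγ' : EqOn γ' (γ ∘ p) (Icc 0 1)) :
    AnalyticContinuationAlong (F (p 0)) γ' (F ∘ p) := by
  refine ⟨fun t ht ↦ ?_, .rfl, fun t ht ↦ ?_⟩
  · rw [hγ' ht]
    exact h.1 _ (hpI ht)
  · filter_upwards [((hp t ht).tendsto_nhdsWithin hpI).eventually (h.2.2 _ (hpI ht)),
      self_mem_nhdsWithin] with s hs hsI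
    rw [hγ' hsI]
    exact hs

theorem congr_path (h : AnalyticContinuationAlong f γ F) (hγ : EqOn γ' γ (Icc 0 1)) :
    AnalyticContinuationAlong f γ' F :=
  (h.comp continuousOn_id (mapsTo_id _) hγ).congr_start
    (hγ (left_mem_Icc.2 zero_le_one) ▸ h.2.1)

theorem const_mul (h : AnalyticContinuationAlong f γ F) (c : ℂ) :
    AnalyticContinuationAlong (fun z ↦ c * f z) γ fun t z ↦ c * F t z :=
  ⟨fun t ht ↦ analyticAt_const.mul (h.1 t ht), h.2.1.fun_comp (c * ·), fun t ht ↦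
    (h.2.2 t ht).mono fun _ hs ↦ hs.fun_comp (c * ·)⟩

theorem pullback {q : ℂ → ℂ} (h : AnalyticContinuationAlong f (q ∘ γ) F)
    (hq : ∀ t ∈ Icc (0 : ℝ) 1, AnalyticAt ℂ q (γ t)) :
    AnalyticContinuationAlong (f ∘ q) γ fun t ↦ F t ∘ q := by
  refine ⟨fun t ht ↦ (h.1 t ht).comp_of_eq (hq t ht) rfl,
    (hq 0 (left_mem_Icc.2 zero_le_one)).continuousAt.eventually h.2.1, fun t ht ↦ ?_⟩
  filter_upwards [h.2.2 t ht, self_mem_nhdsWithin] with s hs hsI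
  exact (hq s hsI).continuousAt.eventually hs

theorem unique (hγ : ContinuousOn γ (Icc 0 1)) (h : AnalyticContinuationAlong f γ F)
    (h' : AnalyticContinuationAlong f γ G) {t : ℝ} (ht : t ∈ Icc (0 : ℝ) 1) :
    F t =ᶠ[𝓝 (γ t)] G t := by
  have agree_iff : F 0 =ᶠ[𝓝 (γ 0)] G 0 ↔ F t =ᶠ[𝓝 (γ t)] G t := by
    refine isPreconnected_Icc.induction₂ (fun s t ↦ F s =ᶠ[𝓝 (γ s)] G s ↔ F t =ᶠ[𝓝 (γ t)] G t)
      (fun t ht ↦ ?_) (fun _ _ _ _ _ _ ↦ Iff.trans) (fun _ _ _ _ ↦ Iff.symm)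
      (left_mem_Icc.2 zero_le_one) ht
    filter_upwards [(hγ t ht).eventually (eventually_eventuallyEq_nhds_iff (h.1 t ht) (h'.1 t ht)),
      h.2.2 t ht, h'.2.2 t ht] with s hs hF hG
    rw [← hs]
    exact ⟨fun e ↦ hF.trans (e.trans hG.symm), fun e ↦ hF.symm.trans (e.trans hG)⟩
  exact agree_iff.1 (h.2.1.trans h'.2.1.symm)

theorem exists_forall_differentiableOn_ball (hγ : ContinuousOn γ (Icc 0 1))
    (h : AnalyticContinuationAlong f γ F) :
    ∃ ε > 0, ∀ t ∈ Icc (0 : ℝ) 1,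
      ∃ g : ℂ → ℂ, DifferentiableOn ℂ g (ball (γ t) ε) ∧ g =ᶠ[𝓝 (γ t)] F t := by
  refine isCompact_Icc.induction_on (p := fun s ↦ ∃ ε > 0, ∀ t ∈ s,
    ∃ g : ℂ → ℂ, DifferentiableOn ℂ g (ball (γ t) ε) ∧ g =ᶠ[𝓝 (γ t)] F t)
    ⟨1, one_pos, by simp⟩ (fun s t hst ⟨ε, hε, H⟩ ↦ ⟨ε, hε, fun x hx ↦ H x (hst hx)⟩) ?_ ?_
  · rintro s t ⟨ε, hε, H⟩ ⟨ε', hε', H'⟩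
    refine ⟨min ε ε', lt_min hε hε', ?_⟩
    rintro x (hx | hx)
    · obtain ⟨g, hg, hgF⟩ := H x hx
      exact ⟨g, hg.mono (ball_subset_ball (min_le_left _ _)), hgF⟩
    · obtain ⟨g, hg, hgF⟩ := H' x hx
      exact ⟨g, hg.mono (ball_subset_ball (min_le_right _ _)), hgF⟩
  · intro t ht
    obtain ⟨r, hr, hFr⟩ := (h.1 t ht).exists_ball_analyticOnNhd
    have hnear := (hγ t ht).eventually (ball_mem_nhds (γ t) (half_pos hr))
    refine ⟨_, (h.2.2 t ht).and hnear, r / 2, half_pos hr, fun s ⟨hFs, hs⟩ ↦ ?_⟩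
    refine ⟨F t, hFr.differentiableOn.mono (ball_subset_ball' ?_), hFs.symm⟩
    linarith [mem_ball.1 hs]

theorem exists_forall_dist_lt (hγ : ContinuousOn γ (Icc 0 1))
    (h : AnalyticContinuationAlong f γ F) :
    ∃ ε > 0, ∃ G : ℝ → ℂ → ℂ, (∀ t ∈ Icc (0 : ℝ) 1, G t =ᶠ[𝓝 (γ t)] F t) ∧
      ∀ γ' : ℝ → ℂ, ContinuousOn γ' (Icc 0 1) → (∀ t ∈ Icc (0 : ℝ) 1, dist (γ' t) (γ t) < ε) →
        AnalyticContinuationAlong (G 0) γ' G := by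
  obtain ⟨ε, hε, H⟩ := h.exists_forall_differentiableOn_ball hγ
  choose! G hG hGF using H
  refine ⟨ε, hε, G, hGF, fun γ' hγ' hd ↦
    ⟨fun t ht ↦ (hG t ht).analyticAt (isOpen_ball.mem_nhds (hd t ht)), .rfl, fun t ht ↦ ?_⟩⟩
  filter_upwards [(hγ t ht).eventually (ball_mem_nhds (γ t) hε),
    (hγ' t ht).eventually (isOpen_ball.mem_nhds (hd t ht)),
    (hγ t ht).eventually (eventually_eventually_nhds.2 (hGF t ht)),
    h.2.2 t ht, self_mem_nhdsWithin] with s hs hs' hGt hFs hsI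
  have hGs : G s =ᶠ[𝓝 (γ s)] G t := (hGF s hsI).trans (hFs.trans (EventuallyEq.symm hGt))
  exact eventuallyEq_nhds_of_mem_balls (hG s hsI) (hG t ht) ⟨mem_ball_self hε, hs⟩ hGs
    ⟨hd s hsI, hs'⟩

end AnalyticContinuationAlong

namespace HadamardProduct

open Set Metric Topology

/-! ### Continuation in small steps -/

/-- `F` is an analytic continuation of the germ `f` along the restriction of `γ` to `[0, T]`, as in
`AnalyticContinuationAlong`; used to build continuations along `γ` in small steps. -/
structure ContinuesUpTo (f : ℂ → ℂ) (γ : ℝ → ℂ) (T : ℝ) (F : ℝ → ℂ → ℂ) : Prop where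
  analyticAt : ∀ t ∈ Icc 0 T, AnalyticAt ℂ (F t) (γ t)
  start : F 0 =ᶠ[𝓝 (γ 0)] f
  consistent : ∀ t ∈ Icc 0 T, ∀ᶠ s in 𝓝[Icc 0 T] t, F s =ᶠ[𝓝 (γ s)] F t

theorem ContinuesUpTo.extend {f J : ℂ → ℂ} {γ : ℝ → ℂ} {T T' r : ℝ} {F : ℝ → ℂ → ℂ}
    (hγ : ContinuousOn γ (Icc 0 T')) (hT : 0 ≤ T) (hTT' : T ≤ T') (h : ContinuesUpTo f γ T F)
    (hJ : DifferentiableOn ℂ J (ball (γ T) r)) (hJF : J =ᶠ[𝓝 (γ T)] F T)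
    (hr : ∀ t ∈ Icc T T', γ t ∈ ball (γ T) r) :
    ContinuesUpTo f γ T' fun t ↦ if t ≤ T then F t else J := by
  have J_eq : ∀ t ∈ Icc T T', J =ᶠ[𝓝 (γ t)] if t ≤ T then F t else J := by
    rintro t ⟨hTt, -⟩
    obtain rfl | hlt := hTt.eq_or_lt
    · simpa using hJF
    · simp [hlt.not_ge]
  have J_analyticAt : ∀ t ∈ Icc T T', AnalyticAt ℂ J (γ t) := fun t ht ↦
    hJ.analyticAt (isOpen_ball.mem_nhds (hr t ht))
  have F_eq : ∀ t ∈ Icc 0 T, (if t ≤ T then F t else J) = F t := fun t ht ↦ if_pos ht.2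
  have split : Icc 0 T' = Icc 0 T ∪ Icc T T' := (Icc_union_Icc_eq_Icc hT hTT').symm
  refine ⟨?_, by simpa [hT] using h.start, ?_⟩
  · rw [split]
    rintro t (ht | ht)
    · rw [F_eq t ht]
      exact h.analyticAt t ht
    · exact (J_analyticAt t ht).congr (J_eq t ht)
  · intro t ht
    rw [split, nhdsWithin_union, eventually_sup]
    constructor
    · by_cases htT : t ≤ T
      · filter_upwards [h.consistent t ⟨ht.1, htT⟩, self_mem_nhdsWithin] with s hs hsI
        rwa [F_eq s hsI, F_eq t ⟨ht.1, htT⟩]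
      · have hbot : t ∉ closure (Icc 0 T) := by simp [htT]
        rw [notMem_closure_iff_nhdsWithin_eq_bot.1 hbot]
        exact eventually_bot
    · by_cases hTt : T ≤ t
      · have near := (hγ t ht).eventually (eventually_eventually_nhds.2 (J_eq t ⟨hTt, ht.2⟩))
        filter_upwards [nhdsWithin_mono t (Icc_subset_Icc_left hT) near, self_mem_nhdsWithin]
          with s hs hsI
        exact (J_eq s hsI).symm.trans hs
      · have hbot : t ∉ closure (Icc T T') := by simp [hTt]
        rw [notMem_closure_iff_nhdsWithin_eq_bot.1 hbot]
        exact eventually_bot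

theorem ContinuesUpTo.const {f : ℂ → ℂ} {γ : ℝ → ℂ} (hf : AnalyticAt ℂ f (γ 0)) :
    ContinuesUpTo f γ 0 fun _ ↦ f := by
  refine ⟨fun t ht ↦ ?_, .rfl, fun _ _ ↦ Eventually.of_forall fun _ ↦ .rfl⟩
  obtain rfl : t = 0 := by simpa using ht
  exact hf

theorem exists_analyticContinuationAlong_of_step {γ : ℝ → ℂ} (hγ : ContinuousOn γ (Icc 0 1))
    {P : ℂ → (ℂ → ℂ) → Prop} {r : ℝ} (hr : 0 < r)
    (step : ∀ t ∈ Icc (0 : ℝ) 1, ∀ f, P (γ t) f → ∃ J, DifferentiableOn ℂ J (ball (γ t) r) ∧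
      J =ᶠ[𝓝 (γ t)] f ∧ ∀ y ∈ ball (γ t) r ∩ γ '' Icc 0 1, P y J)
    {f : ℂ → ℂ} (hf : AnalyticAt ℂ f (γ 0)) (hPf : P (γ 0) f) :
    ∃ F, AnalyticContinuationAlong f γ F := by
  obtain ⟨ε, hε, hεr⟩ := Metric.uniformContinuousOn_iff.1
    (isCompact_Icc.uniformContinuousOn_of_continuous hγ) r hr
  have extend : ∀ T T' F, 0 ≤ T → T ≤ T' → T' ≤ 1 → T' - T < ε → ContinuesUpTo f γ T F →
      P (γ T) (F T) → ∃ F', ContinuesUpTo f γ T' F' ∧ P (γ T') (F' T') := by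
    intro T T' F hT hTT' hT' hlt hF hPF
    obtain ⟨J, hJ, hJF, hPJ⟩ := step T ⟨hT, hTT'.trans hT'⟩ _ hPF
    have hball : ∀ t ∈ Icc T T', γ t ∈ ball (γ T) r := fun t ht ↦
      hεr t ⟨hT.trans ht.1, ht.2.trans hT'⟩ T ⟨hT, hTT'.trans hT'⟩ (by
        rw [Real.dist_eq, abs_of_nonneg (sub_nonneg.2 ht.1)]
        linarith [ht.2])
    refine ⟨_, hF.extend (hγ.mono (Icc_subset_Icc_right hT')) hT hTT' hJ hJF hball, ?_⟩
    split_ifs with hle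
    · rwa [hle.antisymm hTT']
    · exact hPJ _ ⟨hball T' ⟨hTT', le_rfl⟩, mem_image_of_mem γ ⟨hT.trans hTT', hT'⟩⟩
  have reach : ∀ k : ℕ, ∃ F, ContinuesUpTo f γ (min (k * (ε / 2)) 1) F ∧
      P (γ (min (k * (ε / 2)) 1)) (F (min (k * (ε / 2)) 1)) := by
    intro k
    induction k with
    | zero => exact ⟨fun _ ↦ f, by simpa using ContinuesUpTo.const hf, by simpa using hPf⟩
    | succ k ih =>
      obtain ⟨F, hF, hPF⟩ := ih
      refine extend _ _ F (by positivity) (min_le_min_right _ ?_) (min_le_right _ _) ?_ hF hPF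
      · push_cast
        linarith
      · push_cast
        grind
  obtain ⟨k, hk⟩ := exists_nat_ge (1 / (ε / 2))
  obtain ⟨F, hF, -⟩ := reach k
  rw [min_eq_right ((div_le_iff₀ (half_pos hε)).1 hk)] at hF
  exact ⟨F, hF.analyticAt, hF.start, hF.consistent⟩

theorem eventuallyEq_endpoint {φ : ℂ → ℂ} {z x : ℂ} {F : ℂ → ℝ → ℂ → ℂ}
    (hF : ∀ᶠ y in 𝓝 x, AnalyticContinuationAlong φ (AffineMap.lineMap (k := ℝ) z y) (F y)) :
    (fun y ↦ F y 1 y) =ᶠ[𝓝 x] F x 1 := by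
  have one_mem : (1 : ℝ) ∈ Icc (0 : ℝ) 1 := right_mem_Icc.2 zero_le_one
  have seg_cont : ∀ y : ℂ, ContinuousOn (AffineMap.lineMap (k := ℝ) z y) (Icc 0 1) := fun _ ↦
    AffineMap.lineMap_continuous.continuousOn
  obtain ⟨ε, hε, G, hGF, tube⟩ := hF.self_of_nhds.exists_forall_dist_lt (seg_cont x)
  have hG0 : G 0 =ᶠ[𝓝 z] φ := by
    simpa using (hGF 0 (left_mem_Icc.2 zero_le_one)).trans hF.self_of_nhds.2.1
  have hG1 : G 1 =ᶠ[𝓝 x] F x 1 := by simpa using hGF 1 one_mem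
  filter_upwards [hG1, ball_mem_nhds x hε, hF] with y hGy hy hFy
  have hd : ∀ t ∈ Icc (0 : ℝ) 1,
      dist (AffineMap.lineMap z y t) (AffineMap.lineMap z x t) < ε := fun t ht ↦ by
    have hsub : AffineMap.lineMap z y t - AffineMap.lineMap z x t = t • (y - x) := by
      simp [AffineMap.lineMap_apply, mul_sub]
    rw [dist_eq_norm, hsub, norm_smul, Real.norm_of_nonneg ht.1, ← dist_eq_norm]
    exact (mul_le_of_le_one_left dist_nonneg ht.2).trans_lt hy
  have end_eq := (hFy.unique (seg_cont y)
    ((tube _ (seg_cont y) hd).congr_start (by simpa using hG0)) one_mem).eq_of_nhds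
  rw [AffineMap.lineMap_apply_one] at end_eq
  rw [end_eq, hGy]

/-- The germ of `φ` at `z` can be continued analytically along every path in `ℂ ∖ S` starting
at `z`. -/
def ContinuableFrom (S : Set ℂ) (z : ℂ) (φ : ℂ → ℂ) : Prop :=
  ∀ γ : ℝ → ℂ, ContinuousOn γ (Icc 0 1) → γ 0 = z → (∀ t ∈ Icc (0 : ℝ) 1, γ t ∉ S) →
    ∃ F : ℝ → ℂ → ℂ, AnalyticContinuationAlong φ γ F

namespace ContinuableFrom

variable {S : Set ℂ} {z : ℂ} {φ ψ : ℂ → ℂ}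

theorem congr (h : ContinuableFrom S z φ) (e : φ =ᶠ[𝓝 z] ψ) : ContinuableFrom S z ψ :=
  fun γ hγ h0 hS ↦ (h γ hγ h0 hS).imp fun _ hF ↦ hF.congr_start (by rwa [h0])

theorem transport {σ : ℝ → ℂ} {F : ℝ → ℂ → ℂ} (h : ContinuableFrom S (σ 0) φ)
    (hσ : ContinuousOn σ (Icc 0 1)) (hσS : ∀ t ∈ Icc (0 : ℝ) 1, σ t ∉ S)
    (hF : AnalyticContinuationAlong φ σ F) : ContinuableFrom S (σ 1) (F 1) := by
  intro γ hγ hγ0 hγS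
  have hp : MapsTo (fun t : ℝ ↦ min (2 * t) 1) (Icc 0 1) (Icc 0 1) := fun t ht ↦
    ⟨le_min (by linarith [ht.1]) zero_le_one, min_le_right _ _⟩
  have hq : MapsTo (fun t : ℝ ↦ max (2 * t - 1) 0) (Icc 0 1) (Icc 0 1) := fun t ht ↦
    ⟨le_max_right _ _, max_le (by linarith [ht.2]) zero_le_one⟩
  let c : ℝ → ℂ := fun t ↦ σ (min (2 * t) 1) + γ (max (2 * t - 1) 0) - σ 1
  have c_left : ∀ t ≤ (1 / 2 : ℝ), c t = σ (2 * t) := fun t ht ↦ by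
    simp only [c, min_eq_left (by linarith : 2 * t ≤ 1), max_eq_right (by linarith : 2 * t - 1 ≤ 0),
      hγ0, add_sub_cancel_right]
  have c_right : ∀ t ≥ (1 / 2 : ℝ), c t = γ (2 * t - 1) := fun t ht ↦ by
    simp only [c, min_eq_right (by linarith : 1 ≤ 2 * t), max_eq_left (by linarith : 0 ≤ 2 * t - 1),
      add_sub_cancel_left]
  have c_cont : ContinuousOn c (Icc 0 1) :=
    ((hσ.comp (by fun_prop) hp).add (hγ.comp (by fun_prop) hq)).sub continuousOn_const
  obtain ⟨G, hG⟩ := h c c_cont (by simp [c_left]) fun t ht ↦ by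
    rcases le_total t (1 / 2) with hle | hle
    · exact c_left t hle ▸ hσS _ ⟨by linarith [ht.1], by linarith⟩
    · exact c_right t hle ▸ hγS _ ⟨by linarith, by linarith [ht.2]⟩
  have first_half : AnalyticContinuationAlong φ σ (G ∘ fun t ↦ t / 2) :=
    (hG.comp (p := fun t ↦ t / 2) (by fun_prop)
      (fun t ht ↦ ⟨by linarith [ht.1], by linarith [ht.2]⟩) fun t ht ↦ by
        simp only [Function.comp_apply, c_left (t / 2) (by linarith [ht.2]),
          mul_div_cancel₀ t two_ne_zero]).congr_start
      (by simpa [c_left] using hG.2.1)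
  have second_half := hG.comp (p := fun t ↦ (1 + t) / 2) (γ' := γ) (by fun_prop)
    (fun t ht ↦ ⟨by linarith [ht.1], by linarith [ht.2]⟩) fun t ht ↦ by
      simp only [Function.comp_apply, c_right ((1 + t) / 2) (by linarith [ht.1])]
      congr 1
      ring
  refine ⟨_, second_half.congr_start ?_⟩
  simpa [hγ0] using first_half.unique hσ hF (right_mem_Icc.2 zero_le_one)

theorem transport_lineMap (h : ContinuableFrom S z φ) {w : ℂ}
    (hS : ∀ t ∈ Icc (0 : ℝ) 1, AffineMap.lineMap z w t ∉ S)
    (hφ : ∀ t ∈ Icc (0 : ℝ) 1, AnalyticAt ℂ φ (AffineMap.lineMap z w t)) :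
    ContinuableFrom S w φ := by
  simpa using transport (σ := AffineMap.lineMap (k := ℝ) z w) (S := S) (by simpa using h)
    AffineMap.lineMap_continuous.continuousOn hS (.const hφ)

theorem of_convex {V : Set ℂ} (hV : IsOpen V) (hVc : Convex ℝ V) (hφ : DifferentiableOn ℂ φ V)
    (hVS : Disjoint V S) (h : ContinuableFrom S z φ) (hz : z ∈ V) {w : ℂ} (hw : w ∈ V) :
    ContinuableFrom S w φ :=
  h.transport_lineMap (fun _ ht ↦ hVS.notMem_of_mem_left (hVc.lineMap_mem hz hw ht))
    fun _ ht ↦ hφ.analyticAt (hV.mem_nhds (hVc.lineMap_mem hz hw ht))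

theorem const_mul (h : ContinuableFrom S z φ) (c : ℂ) : ContinuableFrom S z fun y ↦ c * φ y :=
  fun γ hγ h0 hS ↦
    let ⟨_, hF⟩ := h γ hγ h0 hS
    ⟨_, hF.const_mul c⟩

theorem exists_differentiableOn_ball (h : ContinuableFrom S z φ) {r : ℝ} (hr : 0 < r)
    (hS : Disjoint (ball z r) S) :
    ∃ Φ : ℂ → ℂ, DifferentiableOn ℂ Φ (ball z r) ∧ Φ =ᶠ[𝓝 z] φ := by
  have hz : z ∈ ball z r := mem_ball_self hr
  have one_mem : (1 : ℝ) ∈ Icc (0 : ℝ) 1 := right_mem_Icc.2 zero_le_one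
  have radial : ∀ x ∈ ball z r, ∃ F,
      AnalyticContinuationAlong φ (AffineMap.lineMap (k := ℝ) z x) F := fun x hx ↦
    h _ AffineMap.lineMap_continuous.continuousOn (by simp) fun t ht ↦
      hS.notMem_of_mem_left ((convex_ball z r).lineMap_mem hz hx ht)
  choose! F hF using radial
  have end_eq : ∀ x ∈ ball z r, (fun y ↦ F y 1 y) =ᶠ[𝓝 x] F x 1 := fun x hx ↦
    eventuallyEq_endpoint (eventually_of_mem (isOpen_ball.mem_nhds hx) hF)
  have analyticAt_end : ∀ x ∈ ball z r, AnalyticAt ℂ (F x 1) x := fun x hx ↦ by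
    simpa using (hF x hx).1 1 one_mem
  refine ⟨fun x ↦ F x 1 x, fun x hx ↦ ((analyticAt_end x hx).differentiableAt.congr_of_eventuallyEq
    (end_eq x hx)).differentiableWithinAt, (end_eq z hz).trans ?_⟩
  have φ_analyticAt : AnalyticAt ℂ φ z := by
    simpa using ((hF z hz).1 0 (left_mem_Icc.2 zero_le_one)).congr (hF z hz).2.1
  simpa using (hF z hz).unique AffineMap.lineMap_continuous.continuousOn
    (.const fun t _ ↦ by simpa using φ_analyticAt) one_mem

end ContinuableFrom

/-! ### Integrals over segments -/

section ParametricIntegrals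

open MeasureTheory

theorem aestronglyMeasurable_deriv_param {E : Type*} [NormedAddCommGroup E] [NormedSpace ℂ E]
    {μ : Measure ℝ} {K : ℂ → ℝ → E} {w : ℂ}
    (hK : ∀ᶠ w' in 𝓝 w, AEStronglyMeasurable (K w') μ)
    (hd : ∀ᵐ s ∂μ, DifferentiableAt ℂ (fun w' ↦ K w' s) w) :
    AEStronglyMeasurable (fun s ↦ deriv (fun w' ↦ K w' s) w) μ := by
  obtain ⟨ε, hε, hKε⟩ := Metric.eventually_nhds_iff.1 hK
  let h : ℕ → ℂ := fun n ↦ ((ε / 2 * (1 / (n + 1 : ℝ)) : ℝ) : ℂ)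
  have h_ne : ∀ n, h n ≠ 0 := fun n ↦ Complex.ofReal_ne_zero.2 (by positivity)
  have h_lt : ∀ n, dist (w + h n) w < ε := fun n ↦ by
    have : 1 / (n + 1 : ℝ) ≤ 1 := by
      rw [div_le_one (by positivity)]
      linarith [n.cast_nonneg (α := ℝ)]
    rw [dist_eq_norm, add_sub_cancel_left, Complex.norm_real,
      Real.norm_of_nonneg (by positivity)]
    nlinarith
  have h_tendsto : Tendsto h atTop (𝓝[≠] 0) := by
    refine tendsto_nhdsWithin_iff.2 ⟨?_, Eventually.of_forall h_ne⟩
    have h_lim := (Complex.continuous_ofReal.tendsto _).comp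
      ((tendsto_one_div_add_atTop_nhds_zero_nat (𝕜 := ℝ)).const_mul (ε / 2))
    rwa [mul_zero, Complex.ofReal_zero] at h_lim
  refine aestronglyMeasurable_of_tendsto_ae atTop
    (f := fun n s ↦ (h n)⁻¹ • (K (w + h n) s - K w s)) (fun n ↦ ?_) ?_
  · exact ((hKε (h_lt n)).sub hK.self_of_nhds).const_smul (h n)⁻¹
  · filter_upwards [hd] with s hs
    exact hs.hasDerivAt.tendsto_slope_zero.comp h_tendsto

theorem differentiableOn_intervalIntegral_param {E : Type*} [NormedAddCommGroup E]
    [NormedSpace ℂ E] [CompleteSpace E] {K : ℂ → ℝ → E} {U : Set ℂ} {a b : ℝ} (hU : IsOpen U)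
    (hc : ContinuousOn (fun q : ℂ × ℝ ↦ K q.1 q.2) (U ×ˢ uIcc a b))
    (hd : ∀ s ∈ uIcc a b, DifferentiableOn ℂ (fun w ↦ K w s) U) :
    DifferentiableOn ℂ (fun w ↦ ∫ s in a..b, K w s) U := by
  intro w hw
  obtain ⟨ρ, hρ, hρU⟩ := nhds_basis_closedBall.mem_iff.1 (hU.mem_nhds hw)
  have K_cont : ∀ w' ∈ U, ContinuousOn (K w') (uIcc a b) := fun w' hw' ↦
    hc.comp (f := fun s : ℝ ↦ (w', s)) (by fun_prop) fun s hs ↦ ⟨hw', hs⟩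
  obtain ⟨M, hM⟩ := ((isCompact_closedBall w ρ).prod isCompact_uIcc).exists_bound_of_continuousOn
    (hc.mono (prod_mono hρU Subset.rfl))
  have K_meas : ∀ᶠ w' in 𝓝 w, AEStronglyMeasurable (K w') (volume.restrict (uIoc a b)) := by
    filter_upwards [hU.mem_nhds hw] with w' hw'
    exact ((K_cont w' hw').mono uIoc_subset_uIcc).aestronglyMeasurable measurableSet_uIoc
  have ball_sub : ∀ w' ∈ ball w (ρ / 2), closedBall w' (ρ / 2) ⊆ closedBall w ρ := fun w' hw' ↦
    closedBall_subset_closedBall' (by linarith [mem_ball.1 hw'])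
  have K_diff : ∀ s ∈ uIoc a b, ∀ w' ∈ ball w (ρ / 2),
      DifferentiableAt ℂ (fun w ↦ K w s) w' := fun s hs w' hw' ↦
    (hd s (uIoc_subset_uIcc hs)).differentiableAt
      (hU.mem_nhds (hρU (ball_sub w' hw' (mem_closedBall_self (half_pos hρ).le))))
  have deriv_le : ∀ s ∈ uIoc a b, ∀ w' ∈ ball w (ρ / 2),
      ‖deriv (fun w ↦ K w s) w'‖ ≤ M / (ρ / 2) := fun s hs w' hw' ↦ by
    refine Complex.norm_deriv_le_of_forall_mem_sphere_norm_le (half_pos hρ)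
      (DifferentiableOn.diffContOnCl ?_) fun x hx ↦
        hM (x, s) ⟨ball_sub w' hw' (sphere_subset_closedBall hx), uIoc_subset_uIcc hs⟩
    rw [closure_ball _ (half_pos hρ).ne']
    exact (hd s (uIoc_subset_uIcc hs)).mono ((ball_sub w' hw').trans hρU)
  have deriv_meas := aestronglyMeasurable_deriv_param K_meas
    ((ae_restrict_iff' measurableSet_uIoc).2 (Eventually.of_forall fun s hs ↦
      K_diff s hs w (mem_ball_self (half_pos hρ))))
  exact (intervalIntegral.hasDerivAt_integral_of_dominated_loc_of_deriv_le
    (ball_mem_nhds w (half_pos hρ)) K_meas (K_cont w hw).intervalIntegrable deriv_meas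
    (Eventually.of_forall deriv_le) intervalIntegrable_const
    (Eventually.of_forall fun s hs w' hw' ↦
      (K_diff s hs w' hw').hasDerivAt)).2.differentiableAt.differentiableWithinAt

end ParametricIntegrals

/-- The integral of `h` along the straight segment from `u` to `v`. -/
noncomputable def segmentIntegral (h : ℂ → ℂ) (u v : ℂ) : ℂ :=
  ∫ s in (0 : ℝ)..1, h (AffineMap.lineMap u v s) * (v - u)

theorem exists_primitive_segmentIntegral {U : Set ℂ} (hU : IsOpen U) (hc : Convex ℝ U)
    {h : ℂ → ℂ} (hh : DifferentiableOn ℂ h U) :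
    ∃ P : ℂ → ℂ, ∀ u ∈ U, ∀ v ∈ U, segmentIntegral h u v = P v - P u := by
  obtain ⟨P, hP⟩ := hc.exists_forall_hasDerivWithinAt hh
  refine ⟨P, fun u hu v hv ↦ ?_⟩
  have hmem : MapsTo (AffineMap.lineMap (k := ℝ) u v) (uIcc 0 1) U := fun s hs ↦ by
    rw [uIcc_of_le zero_le_one] at hs
    exact hc.lineMap_mem hu hv hs
  have := intervalIntegral.integral_eq_sub_of_hasDerivAt (a := (0 : ℝ)) (b := 1)
    (f := P ∘ AffineMap.lineMap (k := ℝ) u v)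
    (fun s hs ↦ ((hP _ (hmem hs)).hasDerivAt (hU.mem_nhds (hmem hs))).comp s
      AffineMap.hasDerivAt_lineMap)
    ((hh.continuousOn.comp AffineMap.lineMap_continuous.continuousOn hmem).mul
      continuousOn_const).intervalIntegrable
  simpa [segmentIntegral] using this

theorem segmentIntegral_congr {U : Set ℂ} (hc : Convex ℝ U) {h k : ℂ → ℂ} (hk : EqOn h k U)
    {u v : ℂ} (hu : u ∈ U) (hv : v ∈ U) : segmentIntegral h u v = segmentIntegral k u v := by
  refine intervalIntegral.integral_congr fun s hs ↦ ?_
  rw [uIcc_of_le zero_le_one] at hs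
  simp only [hk (hc.lineMap_mem hu hv hs)]

theorem segmentIntegral_add_right (h : ℂ → ℂ) (u v p : ℂ) :
    segmentIntegral h (u + p) (v + p) = segmentIntegral (fun x ↦ h (x + p)) u v := by
  refine intervalIntegral.integral_congr fun s _ ↦ ?_
  have : AffineMap.lineMap (u + p) (v + p) s = AffineMap.lineMap u v s + p := by
    simp only [AffineMap.lineMap_apply, vsub_eq_sub, vadd_eq_add, add_sub_add_right_eq_sub]
    ring
  simp only [this, add_sub_add_right_eq_sub]

/-! ### Branches of a multivalued function -/

/-- The distance from `z` to `S`, capped at `1`. The cap bounds the discs on which branches are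
considered, and makes the value positive (namely `1`) for empty `S`, where `Metric.infDist` is
`0`. -/
noncomputable def cappedInfDist {X : Type*} [PseudoMetricSpace X] (S : Set X) (z : X) : ℝ :=
  sInf (insert 1 (dist z '' S))

section CappedInfDist

variable {X : Type*} [PseudoMetricSpace X] {S : Set X} {z x : X}

theorem le_cappedInfDist_iff {r : ℝ} :
    r ≤ cappedInfDist S z ↔ r ≤ 1 ∧ ∀ x ∈ S, r ≤ dist z x := by
  have hbdd : BddBelow (insert 1 (dist z '' S)) :=
    ⟨0, by rintro _ (rfl | ⟨x, -, rfl⟩) <;> positivity⟩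
  simp [cappedInfDist, le_csInf_iff hbdd (insert_nonempty _ _)]

theorem cappedInfDist_le_one : cappedInfDist S z ≤ 1 :=
  (le_cappedInfDist_iff.1 le_rfl).1

theorem cappedInfDist_le_dist (hx : x ∈ S) : cappedInfDist S z ≤ dist z x :=
  (le_cappedInfDist_iff.1 le_rfl).2 x hx

theorem cappedInfDist_nonneg : 0 ≤ cappedInfDist S z :=
  le_cappedInfDist_iff.2 ⟨zero_le_one, fun _ _ ↦ dist_nonneg⟩

theorem cappedInfDist_sub_dist_le (S : Set X) (z x : X) :
    cappedInfDist S z - dist x z ≤ cappedInfDist S x := by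
  refine le_cappedInfDist_iff.2 ⟨?_, fun s hs ↦ ?_⟩
  · linarith [cappedInfDist_le_one (S := S) (z := z), dist_nonneg (x := x) (y := z)]
  · linarith [cappedInfDist_le_dist (z := z) hs, dist_triangle_left z s x]

theorem abs_cappedInfDist_sub_le (S : Set X) (z x : X) :
    |cappedInfDist S z - cappedInfDist S x| ≤ dist z x := by
  have hzx := cappedInfDist_sub_dist_le S z x
  have hxz := cappedInfDist_sub_dist_le S x z
  rw [dist_comm] at hzx
  exact abs_le.2 ⟨by linarith, by linarith⟩

theorem disjoint_ball_cappedInfDist : Disjoint (ball z (cappedInfDist S z)) S :=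
  disjoint_left.2 fun _ hx hxS ↦ (cappedInfDist_le_dist hxS).not_gt (mem_ball'.1 hx)

theorem cappedInfDist_pos (hS : IsClosed S) (hz : z ∉ S) : 0 < cappedInfDist S z := by
  obtain ⟨r, hr, hrS⟩ := Metric.isOpen_iff.1 hS.isOpen_compl z hz
  refine (lt_min one_pos hr).trans_le (le_cappedInfDist_iff.2 ⟨min_le_left _ _, fun x hx ↦ ?_⟩)
  exact (min_le_right _ _).trans (not_lt.1 fun h ↦ hrS (mem_ball'.2 h) hx)

theorem exists_pos_forall_le_cappedInfDist {K : Set X} (hK : IsCompact K) (hS : IsClosed S)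
    (hKS : Disjoint K S) : ∃ δ > 0, ∀ z ∈ K, δ ≤ cappedInfDist S z := by
  obtain rfl | hne := K.eq_empty_or_nonempty
  · exact ⟨1, one_pos, by simp⟩
  have hcont : Continuous (cappedInfDist S) :=
    (LipschitzWith.of_le_add fun z x ↦ by
      linarith [cappedInfDist_sub_dist_le S z x, dist_comm z x]).continuous
  obtain ⟨z, hz, hmin⟩ := hK.exists_isMinOn hne hcont.continuousOn
  exact ⟨_, cappedInfDist_pos hS (hKS.notMem_of_mem_left hz), fun x hx ↦ hmin hx⟩

end CappedInfDist

section CappedInfDistGroup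

variable {E : Type*} [SeminormedAddCommGroup E] {S T W : Set E}

theorem periodic_cappedInfDist {p : E} (hS : Function.Periodic (· ∈ S) p) :
    Function.Periodic (cappedInfDist S) p := by
  refine fun z ↦ eq_of_forall_le_iff fun r ↦ ?_
  rw [le_cappedInfDist_iff, le_cappedInfDist_iff, and_congr_right_iff]
  refine fun _ ↦ ⟨fun h x hx ↦ ?_, fun h x hx ↦ ?_⟩
  · simpa using h (x + p) ((iff_of_eq (hS x)).2 hx)
  · simpa [← sub_add_eq_add_sub, ← dist_add_right z (x - p) p] using
      h (x - p) (by simpa [hS.sub_eq] using hx)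

theorem cappedInfDist_le_add (hST : ∀ s ∈ S, ∀ t ∈ T, s + t ∈ W) (x y : E) :
    cappedInfDist W y ≤ cappedInfDist S x + cappedInfDist T (y - x) := by
  rw [← sub_le_iff_le_add, le_cappedInfDist_iff]
  have hT0 := cappedInfDist_nonneg (S := T) (z := y - x)
  refine ⟨by linarith [cappedInfDist_le_one (S := W) (z := y)], fun s hs ↦ ?_⟩
  rw [sub_le_comm, le_cappedInfDist_iff]
  refine ⟨by linarith [cappedInfDist_le_one (S := W) (z := y), dist_nonneg (x := x) (y := s)],
    fun t ht ↦ ?_⟩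
  have hW := cappedInfDist_le_dist (z := y) (hST s hs t ht)
  have htri := dist_add_add_le x (y - x) s t
  rw [add_sub_cancel] at htri
  linarith

end CappedInfDistGroup

/-- `φ` is a branch of a multivalued function with singular set `S`: it can be continued from `z`
along every path avoiding `S`, and is holomorphic on the disc around `z` whose radius is the capped
distance to `S`. -/
structure IsBranch (S : Set ℂ) (z : ℂ) (φ : ℂ → ℂ) : Prop where
  pos : 0 < cappedInfDist S z
  continuableFrom : ContinuableFrom S z φ
  differentiableOn : DifferentiableOn ℂ φ (ball z (cappedInfDist S z))

theorem ContinuableFrom.exists_isBranch {S : Set ℂ} {z : ℂ} {φ : ℂ → ℂ}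
    (h : ContinuableFrom S z φ) (hz : 0 < cappedInfDist S z) :
    ∃ ψ, IsBranch S z ψ ∧ ψ =ᶠ[𝓝 z] φ := by
  obtain ⟨ψ, hψ, hψφ⟩ := h.exists_differentiableOn_ball hz disjoint_ball_cappedInfDist
  exact ⟨ψ, ⟨hz, h.congr hψφ.symm, hψ⟩, hψφ⟩

theorem IsBranch.exists_isBranch {S : Set ℂ} {z z' : ℂ} {φ : ℂ → ℂ} (h : IsBranch S z φ)
    (hz' : z' ∈ ball z (cappedInfDist S z)) : ∃ ψ, IsBranch S z' ψ ∧ ψ =ᶠ[𝓝 z'] φ :=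
  (h.continuableFrom.of_convex isOpen_ball (convex_ball _ _) h.differentiableOn
    disjoint_ball_cappedInfDist (mem_ball_self h.pos) hz').exists_isBranch
    (by linarith [cappedInfDist_sub_dist_le S z z', mem_ball.1 hz'])

/-- Branches `φ k` at points `z k`, each the continuation of the previous one, which return after
`n` steps to the initial branch translated by `p`. The relative mesh of the points is `ε`. The
sequences are infinite only to avoid index bounds. -/
structure BranchLoop (S : Set ℂ) (p : ℂ) (ε : ℝ) (n : ℕ) (z : ℕ → ℂ) (φ : ℕ → ℂ → ℂ) :
    Prop where
  isBranch : ∀ k, IsBranch S (z k) (φ k)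
  dist_lt : ∀ k, dist (z (k + 1)) (z k) < ε * cappedInfDist S (z k)
  germ_succ : ∀ k, φ (k + 1) =ᶠ[𝓝 (z (k + 1))] φ k
  point_closes : z n = z 0 + p
  germ_closes : (fun x ↦ φ n (x + p)) =ᶠ[𝓝 (z 0)] φ 0

/-- A displacement `τ` of the points `z` that keeps well inside the discs of the branches. -/
structure IsSmallShift (S : Set ℂ) (z τ : ℕ → ℂ) : Prop where
  norm_le : ∀ k, ‖τ k‖ ≤ cappedInfDist S (z k) / 2
  dist_le : ∀ k, dist (z (k + 1) + τ (k + 1)) (z k + τ k) ≤ 2 * dist (z (k + 1)) (z k)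

theorem IsSmallShift.half_le_cappedInfDist {S : Set ℂ} {z τ : ℕ → ℂ}
    (hτ : IsSmallShift S z τ) (k : ℕ) :
    cappedInfDist S (z k) / 2 ≤ cappedInfDist S (z k + τ k) := by
  have := cappedInfDist_sub_dist_le S (z k) (z k + τ k)
  rw [dist_self_add_left] at this
  linarith [hτ.norm_le k]

namespace BranchLoop

variable {S : Set ℂ} {p : ℂ} {ε : ℝ} {n : ℕ} {z τ : ℕ → ℂ} {φ : ℕ → ℂ → ℂ}

theorem mono {ε' : ℝ} (h : BranchLoop S p ε n z φ) (hε : ε ≤ ε') : BranchLoop S p ε' n z φ :=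
  { h with
    dist_lt k := (h.dist_lt k).trans_le
      (mul_le_mul_of_nonneg_right hε (h.isBranch k).pos.le) }

theorem shift_mem_ball (h : BranchLoop S p ε n z φ) (hτ : IsSmallShift S z τ) (k : ℕ) :
    z k + τ k ∈ ball (z k) (cappedInfDist S (z k)) := by
  rw [mem_ball, dist_self_add_left]
  linarith [hτ.norm_le k, (h.isBranch k).pos]

theorem shift_succ_mem_ball (h : BranchLoop S p ε n z φ) (hε : ε ≤ 1 / 4)
    (hτ : IsSmallShift S z τ) (k : ℕ) :
    z (k + 1) + τ (k + 1) ∈ ball (z k) (cappedInfDist S (z k)) := by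
  have hmove : dist (z k + τ k) (z k) ≤ cappedInfDist S (z k) / 2 := by
    simpa using hτ.norm_le k
  rw [mem_ball]
  nlinarith [hτ.dist_le k, h.dist_lt k, (h.isBranch k).pos,
    dist_triangle (z (k + 1) + τ (k + 1)) (z k + τ k) (z k)]

theorem succ_mem_ball (h : BranchLoop S p ε n z φ) (hε : ε ≤ 1) (k : ℕ) :
    z (k + 1) ∈ ball (z k) (cappedInfDist S (z k)) :=
  (h.dist_lt k).trans_le (mul_le_of_le_one_left (h.isBranch k).pos.le hε)

theorem germ_succ_of_mem (h : BranchLoop S p ε n z φ) (hε : ε ≤ 1) {k : ℕ} {x : ℂ}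
    (hx : x ∈ ball (z k) (cappedInfDist S (z k)))
    (hx' : x ∈ ball (z (k + 1)) (cappedInfDist S (z (k + 1)))) : φ (k + 1) =ᶠ[𝓝 x] φ k :=
  eventuallyEq_nhds_of_mem_balls (h.isBranch _).differentiableOn (h.isBranch k).differentiableOn
    ⟨mem_ball_self (h.isBranch _).pos, h.succ_mem_ball hε k⟩ (h.germ_succ k) ⟨hx', hx⟩

theorem germ_closes_of_mem (h : BranchLoop S p ε n z φ) (hS : Function.Periodic (· ∈ S) p)
    {x : ℂ} (hx : x ∈ ball (z 0) (cappedInfDist S (z 0))) :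
    (fun x ↦ φ n (x + p)) =ᶠ[𝓝 x] φ 0 := by
  refine eventuallyEq_nhds_of_isPreconnected isOpen_ball (convex_ball _ _).isPreconnected ?_
    (h.isBranch 0).differentiableOn (mem_ball_self (h.isBranch 0).pos) h.germ_closes hx
  refine (h.isBranch n).differentiableOn.comp (by fun_prop) fun x hx ↦ ?_
  rw [h.point_closes, periodic_cappedInfDist hS, mem_ball, dist_add_right]
  exact hx

theorem exists_shift (h : BranchLoop S p ε n z φ) (hε : ε ≤ 1 / 4)
    (hS : Function.Periodic (· ∈ S) p) (hτ : IsSmallShift S z τ) (hτn : τ n = τ 0) :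
    ∃ φ', BranchLoop S p (4 * ε) n (fun k ↦ z k + τ k) φ' ∧
      ∀ k, φ' k =ᶠ[𝓝 (z k + τ k)] φ k := by
  choose φ' hφ' hφ'φ using fun k ↦ (h.isBranch k).exists_isBranch (h.shift_mem_ball hτ k)
  have dist_lt : ∀ k, dist (z (k + 1) + τ (k + 1)) (z k + τ k) <
      4 * ε * cappedInfDist S (z k + τ k) := fun k ↦ by
    have hε0 : 0 < ε := pos_of_mul_pos_left
      (dist_nonneg.trans_lt (h.dist_lt k)) (h.isBranch k).pos.le
    nlinarith [hτ.dist_le k, h.dist_lt k, hτ.half_le_cappedInfDist k]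
  have germ_succ : ∀ k, φ' (k + 1) =ᶠ[𝓝 (z (k + 1) + τ (k + 1))] φ' k := fun k ↦ by
    have hmem := h.shift_succ_mem_ball hε hτ k
    have hφ_succ := h.germ_succ_of_mem (by linarith) hmem (h.shift_mem_ball hτ (k + 1))
    have hφφ' := eventuallyEq_nhds_of_mem_balls (h.isBranch k).differentiableOn
      (hφ' k).differentiableOn ⟨h.shift_mem_ball hτ k, mem_ball_self (hφ' k).pos⟩ (hφ'φ k).symm
      ⟨hmem, (dist_lt k).trans_le (mul_le_of_le_one_left (hφ' k).pos.le (by linarith))⟩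
    exact (hφ'φ (k + 1)).trans (hφ_succ.trans hφφ')
  have point_closes : z n + τ n = z 0 + τ 0 + p := by
    rw [h.point_closes, hτn, add_right_comm]
  refine ⟨φ', ⟨hφ', dist_lt, germ_succ, point_closes, ?_⟩, hφ'φ⟩
  have hφ'n := hφ'φ n
  rw [point_closes] at hφ'n
  have hpull : (fun x ↦ φ' n (x + p)) =ᶠ[𝓝 (z 0 + τ 0)] fun x ↦ φ n (x + p) :=
    (continuous_add_const p).continuousAt.eventually hφ'n
  exact hpull.trans ((h.germ_closes_of_mem hS (h.shift_mem_ball hτ 0)).trans (hφ'φ 0).symm)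

end BranchLoop

/-! ### Convolution over a discretised contour -/

theorem sum_segmentIntegral_eq_of_deformation {n : ℕ} {p : ℂ} {D : ℕ → Set ℂ} {h : ℕ → ℂ → ℂ}
    {x ζ : ℕ → ℂ} (hD : ∀ k, IsOpen (D k)) (hDc : ∀ k, Convex ℝ (D k))
    (hh : ∀ k, DifferentiableOn ℂ (h k) (D k)) (hx : ∀ k ≤ n, x k ∈ D k)
    (hζ : ∀ k ≤ n, ζ k ∈ D k) (hx_succ : ∀ k < n, x (k + 1) ∈ D k)
    (hζ_succ : ∀ k < n, ζ (k + 1) ∈ D k)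
    (h_succ : ∀ k < n, EqOn (h (k + 1)) (h k) (D k ∩ D (k + 1)))
    (h_closes : EqOn (fun u ↦ h n (u + p)) (h 0) (D 0)) (hxn : x n = x 0 + p)
    (hζn : ζ n = ζ 0 + p) :
    ∑ k ∈ Finset.range n, segmentIntegral (h k) (x k) (x (k + 1)) =
      ∑ k ∈ Finset.range n, segmentIntegral (h k) (ζ k) (ζ (k + 1)) := by
  let rung : ℕ → ℂ := fun k ↦ segmentIntegral (h k) (x k) (ζ k)
  have rung_succ : ∀ k < n, rung (k + 1) = segmentIntegral (h k) (x (k + 1)) (ζ (k + 1)) :=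
    fun k hk ↦ segmentIntegral_congr ((hDc k).inter (hDc (k + 1))) (h_succ k hk)
      ⟨hx_succ k hk, hx (k + 1) hk⟩ ⟨hζ_succ k hk, hζ (k + 1) hk⟩
  have rung_closes : rung n = rung 0 := by
    simp only [rung, hxn, hζn, segmentIntegral_add_right]
    exact segmentIntegral_congr (hDc 0) h_closes (hx 0 n.zero_le) (hζ 0 n.zero_le)
  have quadrilateral : ∀ k < n, segmentIntegral (h k) (ζ k) (ζ (k + 1)) -
      segmentIntegral (h k) (x k) (x (k + 1)) = rung (k + 1) - rung k := fun k hk ↦ by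
    obtain ⟨P, hP⟩ := exists_primitive_segmentIntegral (hD k) (hDc k) (hh k)
    rw [rung_succ k hk, hP _ (hζ k hk.le) _ (hζ_succ k hk), hP _ (hx k hk.le) _ (hx_succ k hk),
      hP _ (hx_succ k hk) _ (hζ_succ k hk),
      show rung k = P (ζ k) - P (x k) from hP _ (hx k hk.le) _ (hζ k hk.le)]
    ring
  rw [eq_comm, ← sub_eq_zero, ← Finset.sum_sub_distrib, Finset.sum_congr rfl fun k hk ↦
    quadrilateral k (Finset.mem_range.1 hk), Finset.sum_range_sub, rung_closes, sub_self]

theorem differentiableOn_segmentIntegral_convolution {φ ψ a b : ℂ → ℂ} {U V W : Set ℂ}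
    (hφ : DifferentiableOn ℂ φ U) (hψ : DifferentiableOn ℂ ψ V) (hU : Convex ℝ U)
    (hV : Convex ℝ V) (hW : IsOpen W) (ha : DifferentiableOn ℂ a W) (hb : DifferentiableOn ℂ b W)
    (haU : MapsTo a W U) (hbU : MapsTo b W U) (haV : MapsTo (fun Y ↦ Y - a Y) W V)
    (hbV : MapsTo (fun Y ↦ Y - b Y) W V) :
    DifferentiableOn ℂ (fun Y ↦ segmentIntegral (fun x ↦ φ x * ψ (Y - x)) (a Y) (b Y)) W := by
  have lineMap_eq : ∀ (u v : ℂ) (s : ℝ), AffineMap.lineMap u v s = u + s * (v - u) :=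
    fun u v s ↦ by simp [AffineMap.lineMap_apply, add_comm]
  have mem_U : ∀ Y ∈ W, ∀ s ∈ uIcc (0 : ℝ) 1, a Y + s * (b Y - a Y) ∈ U := fun Y hY s hs ↦ by
    rw [← lineMap_eq]
    exact hU.lineMap_mem (haU hY) (hbU hY) (by rwa [uIcc_of_le zero_le_one] at hs)
  have mem_V : ∀ Y ∈ W, ∀ s ∈ uIcc (0 : ℝ) 1, Y - (a Y + s * (b Y - a Y)) ∈ V :=
    fun Y hY s hs ↦ by
      have := hV.lineMap_mem (haV hY) (hbV hY) (by rwa [uIcc_of_le zero_le_one] at hs)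
      rw [lineMap_eq] at this
      convert this using 1
      ring
  have a_cont : ContinuousOn (fun q : ℂ × ℝ ↦ a q.1) (W ×ˢ uIcc 0 1) :=
    ha.continuousOn.comp continuousOn_fst fun _ hq ↦ hq.1
  have b_cont : ContinuousOn (fun q : ℂ × ℝ ↦ b q.1) (W ×ˢ uIcc 0 1) :=
    hb.continuousOn.comp continuousOn_fst fun _ hq ↦ hq.1
  have line_cont : ContinuousOn (fun q : ℂ × ℝ ↦ a q.1 + q.2 * (b q.1 - a q.1))
      (W ×ˢ uIcc 0 1) :=
    a_cont.add ((Complex.continuous_ofReal.comp continuous_snd).continuousOn.mul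
      (b_cont.sub a_cont))
  simp only [segmentIntegral, lineMap_eq]
  refine differentiableOn_intervalIntegral_param hW (.mul (.mul ?_ ?_) (b_cont.sub a_cont))
    fun s hs ↦ .mul (.mul ?_ ?_) (hb.sub ha)
  · exact hφ.continuousOn.comp line_cont fun q hq ↦ mem_U q.1 hq.1 q.2 hq.2
  · exact hψ.continuousOn.comp (continuousOn_fst.sub line_cont) fun q hq ↦ mem_V q.1 hq.1 q.2 hq.2
  · exact hφ.comp (by fun_prop) fun Y hY ↦ mem_U Y hY s hs
  · exact hψ.comp (by fun_prop) fun Y hY ↦ mem_V Y hY s hs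

/-- The points `x` at which a branch around `z` can be evaluated and a branch around `y - z` can be
evaluated at `Y - x`, the singular sets being `S` and `T`. -/
def convolutionDomain (S T : Set ℂ) (y z Y : ℂ) : Set ℂ :=
  ball z (cappedInfDist S z) ∩ (Y - ·) ⁻¹' ball (y - z) (cappedInfDist T (y - z))

theorem isOpen_convolutionDomain {S T : Set ℂ} {y z Y : ℂ} :
    IsOpen (convolutionDomain S T y z Y) :=
  isOpen_ball.inter (isOpen_ball.preimage (by fun_prop))

theorem convex_convolutionDomain {S T : Set ℂ} {y z Y : ℂ} :
    Convex ℝ (convolutionDomain S T y z Y) :=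
  (convex_ball _ _).inter
    ((IsometryEquiv.subLeft Y).preimage_ball (y - z) _ ▸ convex_ball _ _)

/-- Loops of branches `φ` along points `z` and `ψ` along the points `y - z`: a discretised contour
for the convolution integral `∫ φ(x) ψ(Y - x) dx` with `Y` near `y`. -/
structure ConvolutionLoop (S T : Set ℂ) (p : ℂ) (ε : ℝ) (n : ℕ) (y : ℂ) (z : ℕ → ℂ)
    (φ ψ : ℕ → ℂ → ℂ) : Prop where
  left : BranchLoop S p ε n z φ
  right : BranchLoop T (-p) ε n (fun k ↦ y - z k) ψ

/-- The convolution integral at `Y` over the polygon with vertices `ζ`, the `k`-th edge using the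
factors `φ k` and `ψ k`. -/
noncomputable def contourSum (n : ℕ) (φ ψ : ℕ → ℂ → ℂ) (ζ : ℕ → ℂ) (Y : ℂ) : ℂ :=
  ∑ k ∈ Finset.range n, segmentIntegral (fun x ↦ φ k x * ψ k (Y - x)) (ζ k) (ζ (k + 1))

/-- When `y` moves by `w`, the points `z k` may move by `χ k * w` and the points `y - z k` then move
by `(1 - χ k) * w`; both displacements are small for `‖w‖ < r`. -/
structure IsSplitting (S T : Set ℂ) (y : ℂ) (n : ℕ) (z χ : ℕ → ℂ) (r : ℝ) : Prop where
  left : ∀ w ∈ ball (0 : ℂ) r, IsSmallShift S z fun k ↦ χ k * w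
  right : ∀ w ∈ ball (0 : ℂ) r, IsSmallShift T (fun k ↦ y - z k) fun k ↦ (1 - χ k) * w
  closes : χ n = χ 0

theorem abs_div_add_sub_div_add_le {a b a' b' d : ℝ} (hab : 0 < a + b) (ha' : 0 ≤ a') (hb' : 0 ≤ b')
    (hab' : 0 < a' + b') (ha : |a - a'| ≤ d) (hb : |b - b'| ≤ d) :
    |a / (a + b) - a' / (a' + b')| ≤ d / (a + b) := by
  have key : a / (a + b) - a' / (a' + b') =
      ((a - a') * b' - a' * (b - b')) / ((a' + b') * (a + b)) := by
    field_simp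
    ring
  rw [key, abs_div, abs_of_pos (mul_pos hab' hab), ← div_div]
  gcongr
  rw [div_le_iff₀ hab']
  refine (abs_sub _ _).trans ?_
  rw [abs_mul, abs_mul, abs_of_nonneg ha', abs_of_nonneg hb']
  nlinarith

theorem isSmallShift_of_weights {S : Set ℂ} {z : ℕ → ℂ} {c : ℕ → ℝ} {δ : ℝ} {w : ℂ}
    (hc : ∀ k, |c k| * δ ≤ cappedInfDist S (z k))
    (hlip : ∀ k, |c (k + 1) - c k| * δ ≤ dist (z (k + 1)) (z k)) (hw : ‖w‖ ≤ δ / 2) :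
    IsSmallShift S z fun k ↦ c k * w where
  norm_le k := by
    rw [norm_mul, Complex.norm_real, Real.norm_eq_abs]
    nlinarith [hc k, abs_nonneg (c k)]
  dist_le k := by
    have hmul : ‖((c (k + 1) : ℂ) * w - c k * w)‖ = |c (k + 1) - c k| * ‖w‖ := by
      rw [← sub_mul, norm_mul, ← Complex.ofReal_sub, Complex.norm_real, Real.norm_eq_abs]
    have htri := dist_add_add_le (z (k + 1)) (c (k + 1) * w) (z k) (c k * w)
    rw [dist_eq_norm (_ * w), hmul] at htri
    nlinarith [hlip k, abs_nonneg (c (k + 1) - c k), dist_nonneg (x := z (k + 1)) (y := z k)]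

theorem mem_convolutionDomain_nhds {S T : Set ℂ} {x y z Y : ℂ}
    (hx : x ∈ convolutionDomain S T y z Y) :
    ∀ᶠ Y' in 𝓝 Y, x ∈ convolutionDomain S T y z Y' :=
  ((continuous_sub_right x).continuousAt.eventually (isOpen_ball.mem_nhds hx.2)).mono
    fun _ h ↦ ⟨hx.1, h⟩

namespace ConvolutionLoop

variable {S T : Set ℂ} {p y y' Y : ℂ} {ε ε' δ r : ℝ} {n : ℕ} {z χ ζ ζ' : ℕ → ℂ}
  {φ ψ φ' ψ' : ℕ → ℂ → ℂ}

theorem mono (h : ConvolutionLoop S T p ε n y z φ ψ) (hε : ε ≤ ε') :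
    ConvolutionLoop S T p ε' n y z φ ψ :=
  ⟨h.left.mono hε, h.right.mono hε⟩

theorem differentiableOn_integrand (h : ConvolutionLoop S T p ε n y z φ ψ) (k : ℕ) (Y : ℂ) :
    DifferentiableOn ℂ (fun x ↦ φ k x * ψ k (Y - x)) (convolutionDomain S T y (z k) Y) :=
  ((h.left.isBranch k).differentiableOn.mono inter_subset_left).mul
    ((h.right.isBranch k).differentiableOn.comp (by fun_prop) fun _ hx ↦ hx.2)

theorem point_mem (h : ConvolutionLoop S T p ε n y z φ ψ) (k : ℕ) :
    z k ∈ convolutionDomain S T y (z k) y :=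
  ⟨mem_ball_self (h.left.isBranch k).pos, mem_ball_self (h.right.isBranch k).pos⟩

theorem point_succ_mem (h : ConvolutionLoop S T p ε n y z φ ψ) (hε : ε ≤ 1) (k : ℕ) :
    z (k + 1) ∈ convolutionDomain S T y (z k) y :=
  ⟨h.left.succ_mem_ball hε k, h.right.succ_mem_ball hε k⟩

theorem exists_isSplitting (h : ConvolutionLoop S T p ε n y z φ ψ)
    (hS : Function.Periodic (· ∈ S) p) (hT : Function.Periodic (· ∈ T) p) (hδ : 0 < δ)
    (hST : ∀ x, δ ≤ cappedInfDist S x + cappedInfDist T (y - x)) :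
    ∃ χ, IsSplitting S T y n z χ (δ / 2) := by
  -- The weights are proportional to the room that the branches have at `z k` and at `y - z k`.
  let a : ℕ → ℝ := fun k ↦ cappedInfDist S (z k)
  let b : ℕ → ℝ := fun k ↦ cappedInfDist T (y - z k)
  let c : ℕ → ℝ := fun k ↦ a k / (a k + b k)
  have ha : ∀ k, 0 ≤ a k := fun k ↦ cappedInfDist_nonneg
  have hb : ∀ k, 0 ≤ b k := fun k ↦ cappedInfDist_nonneg
  have hab : ∀ k, δ ≤ a k + b k := fun k ↦ hST (z k)
  have hpos : ∀ k, 0 < a k + b k := fun k ↦ hδ.trans_le (hab k)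
  have hc : ∀ k, c k * (a k + b k) = a k := fun k ↦ div_mul_cancel₀ _ (hpos k).ne'
  have hc0 : ∀ k, 0 ≤ c k := fun k ↦ div_nonneg (ha k) (hpos k).le
  have hc1 : ∀ k, c k ≤ 1 := fun k ↦ div_le_one_of_le₀ (by linarith [hb k]) (hpos k).le
  have hlip : ∀ k, |c (k + 1) - c k| * δ ≤ dist (z (k + 1)) (z k) := fun k ↦ by
    refine (mul_le_mul_of_nonneg_left (hab (k + 1)) (abs_nonneg _)).trans ?_
    rw [← le_div_iff₀ (hpos _)]
    refine abs_div_add_sub_div_add_le (hpos _) (ha k) (hb k) (hpos k)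
      (abs_cappedInfDist_sub_le S _ _) ?_
    rw [← dist_sub_left y]
    exact abs_cappedInfDist_sub_le T _ _
  refine ⟨fun k ↦ c k, fun w hw ↦ isSmallShift_of_weights (δ := δ) (fun k ↦ ?_) hlip
    (mem_ball_zero_iff.1 hw).le, fun w hw ↦ ?_, ?_⟩
  · rw [abs_of_nonneg (hc0 k)]
    exact (mul_le_mul_of_nonneg_left (hab k) (hc0 k)).trans_eq (hc k)
  · have := isSmallShift_of_weights (S := T) (z := fun k ↦ y - z k) (c := fun k ↦ 1 - c k)
      (δ := δ) (w := w) (fun k ↦ ?_) (fun k ↦ ?_) (mem_ball_zero_iff.1 hw).le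
    · simpa using this
    · rw [abs_of_nonneg (sub_nonneg.2 (hc1 k))]
      refine (mul_le_mul_of_nonneg_left (hab k) (sub_nonneg.2 (hc1 k))).trans_eq ?_
      rw [sub_mul, hc k]
      simp [b]
    · rw [sub_sub_sub_cancel_left, abs_sub_comm, dist_sub_left]
      exact hlip k
  · have hy : y - (z 0 + p) = y - z 0 + -p := by ring
    simp only [c, a, b, h.left.point_closes, periodic_cappedInfDist hS (z 0), hy,
      periodic_cappedInfDist hT.neg (y - z 0)]

theorem contourSum_eq_of_mem_convolutionDomain (h : ConvolutionLoop S T p ε n y z φ ψ)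
    (hε : ε ≤ 1) (hS : Function.Periodic (· ∈ S) p) (hT : Function.Periodic (· ∈ T) p)
    (hζ : ∀ k ≤ n, ζ k ∈ convolutionDomain S T y (z k) Y)
    (hζ_succ : ∀ k < n, ζ (k + 1) ∈ convolutionDomain S T y (z k) Y) (hζn : ζ n = ζ 0 + p)
    (hζ' : ∀ k ≤ n, ζ' k ∈ convolutionDomain S T y (z k) Y)
    (hζ'_succ : ∀ k < n, ζ' (k + 1) ∈ convolutionDomain S T y (z k) Y) (hζ'n : ζ' n = ζ' 0 + p) :
    contourSum n φ ψ ζ Y = contourSum n φ ψ ζ' Y := by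
  refine sum_segmentIntegral_eq_of_deformation (fun _ ↦ isOpen_convolutionDomain)
    (fun _ ↦ convex_convolutionDomain) (fun k ↦ h.differentiableOn_integrand k Y) hζ hζ' hζ_succ
    hζ'_succ (fun k _ x hx ↦ ?_) (fun x hx ↦ ?_) hζn hζ'n
  · simp only [(h.left.germ_succ_of_mem hε hx.1.1 hx.2.1).eq_of_nhds,
      (h.right.germ_succ_of_mem hε hx.1.2 hx.2.2).eq_of_nhds]
  · have hright : ψ n (Y - x + -p) = ψ 0 (Y - x) :=
      (h.right.germ_closes_of_mem hT.neg hx.2).eq_of_nhds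
    rw [← sub_eq_add_neg, ← sub_add_eq_sub_sub] at hright
    simp only [← (h.left.germ_closes_of_mem hS hx.1).eq_of_nhds, hright]

theorem shift_mem (h : ConvolutionLoop S T p ε n y z φ ψ) (hχ : IsSplitting S T y n z χ r)
    (hY : Y ∈ ball y r) (k : ℕ) :
    z k + χ k * (Y - y) ∈ convolutionDomain S T y (z k) Y := by
  have hw : Y - y ∈ ball 0 r := by rwa [mem_ball_zero_iff, ← dist_eq_norm]
  refine ⟨h.left.shift_mem_ball (hχ.left _ hw) k, mem_preimage.2 ?_⟩
  convert h.right.shift_mem_ball (hχ.right _ hw) k using 1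
  ring

theorem shift_succ_mem (h : ConvolutionLoop S T p ε n y z φ ψ) (hε : ε ≤ 1 / 4)
    (hχ : IsSplitting S T y n z χ r) (hY : Y ∈ ball y r) (k : ℕ) :
    z (k + 1) + χ (k + 1) * (Y - y) ∈ convolutionDomain S T y (z k) Y := by
  have hw : Y - y ∈ ball 0 r := by rwa [mem_ball_zero_iff, ← dist_eq_norm]
  refine ⟨h.left.shift_succ_mem_ball hε (hχ.left _ hw) k, mem_preimage.2 ?_⟩
  convert h.right.shift_succ_mem_ball hε (hχ.right _ hw) k using 1
  ring

theorem shift_closes (h : ConvolutionLoop S T p ε n y z φ ψ) (hχ : IsSplitting S T y n z χ r)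
    (Y : ℂ) : z n + χ n * (Y - y) = z 0 + χ 0 * (Y - y) + p := by
  rw [h.left.point_closes, hχ.closes, add_right_comm]

theorem differentiableOn_contourSum_shift (h : ConvolutionLoop S T p ε n y z φ ψ)
    (hε : ε ≤ 1 / 4) (hχ : IsSplitting S T y n z χ r) :
    DifferentiableOn ℂ (fun Y ↦ contourSum n φ ψ (fun k ↦ z k + χ k * (Y - y)) Y) (ball y r) := by
  unfold contourSum
  refine DifferentiableOn.fun_sum fun k _ ↦ differentiableOn_segmentIntegral_convolution
    (h.left.isBranch k).differentiableOn (h.right.isBranch k).differentiableOn (convex_ball _ _)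
    (convex_ball _ _) isOpen_ball (by fun_prop) (by fun_prop) (fun Y hY ↦ ?_) (fun Y hY ↦ ?_)
    (fun Y hY ↦ ?_) fun Y hY ↦ ?_
  · exact (h.shift_mem hχ hY k).1
  · exact (h.shift_succ_mem hε hχ hY k).1
  · exact (h.shift_mem hχ hY k).2
  · exact (h.shift_succ_mem hε hχ hY k).2

theorem contourSum_eventuallyEq_shift (h : ConvolutionLoop S T p ε n y z φ ψ) (hε : ε ≤ 1 / 4)
    (hS : Function.Periodic (· ∈ S) p) (hT : Function.Periodic (· ∈ T) p)
    (hχ : IsSplitting S T y n z χ r) (hy' : y' ∈ ball y r)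
    (h' : ConvolutionLoop S T p ε' n y' (fun k ↦ z k + χ k * (y' - y)) φ' ψ') (hε' : ε' ≤ 1)
    (hφ : ∀ k, φ' k =ᶠ[𝓝 (z k + χ k * (y' - y))] φ k)
    (hψ : ∀ k, ψ' k =ᶠ[𝓝 (y' - (z k + χ k * (y' - y)))] ψ k) :
    contourSum n φ' ψ' (fun k ↦ z k + χ k * (y' - y)) =ᶠ[𝓝 y']
      fun Y ↦ contourSum n φ ψ (fun k ↦ z k + χ k * (Y - y)) Y := by
  set z' : ℕ → ℂ := fun k ↦ z k + χ k * (y' - y)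
  have mem_domains : ∀ᶠ Y in 𝓝 y', ∀ k ∈ Finset.range (n + 1),
      (z' k ∈ convolutionDomain S T y (z k) Y ∧ z' (k + 1) ∈ convolutionDomain S T y (z k) Y) ∧
      z' k ∈ convolutionDomain S T y' (z' k) Y ∧
      z' (k + 1) ∈ convolutionDomain S T y' (z' k) Y :=
    (eventually_all_finset _).2 fun k _ ↦
      ((mem_convolutionDomain_nhds (h.shift_mem hχ hy' k)).and
        (mem_convolutionDomain_nhds (h.shift_succ_mem hε hχ hy' k))).and
      ((mem_convolutionDomain_nhds (h'.point_mem k)).and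
        (mem_convolutionDomain_nhds (h'.point_succ_mem hε' k)))
  filter_upwards [mem_domains, isOpen_ball.mem_nhds hy'] with Y hY hYr
  have hrange : ∀ k ≤ n, k ∈ Finset.range (n + 1) := fun k hk ↦ Finset.mem_range_succ_iff.2 hk
  have same_edges : contourSum n φ' ψ' z' Y = contourSum n φ ψ z' Y := by
    refine Finset.sum_congr rfl fun k hk ↦ ?_
    obtain ⟨⟨hk₀, hk₁⟩, hk₀', hk₁'⟩ := hY k (hrange k (Finset.mem_range.1 hk).le)
    refine segmentIntegral_congr (convex_convolutionDomain.inter convex_convolutionDomain)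
      (fun x hx ↦ ?_) ⟨hk₀, hk₀'⟩ ⟨hk₁, hk₁'⟩
    have hφx := eventuallyEq_nhds_of_mem_balls (h'.left.isBranch k).differentiableOn
      (h.left.isBranch k).differentiableOn ⟨(h'.point_mem k).1, hk₀.1⟩ (hφ k) ⟨hx.2.1, hx.1.1⟩
    have hψx := eventuallyEq_nhds_of_mem_balls (h'.right.isBranch k).differentiableOn
      (h.right.isBranch k).differentiableOn ⟨(h'.point_mem k).2, (h.shift_mem hχ hy' k).2⟩ (hψ k)
      ⟨hx.2.2, hx.1.2⟩
    simp only [hφx.eq_of_nhds, hψx.eq_of_nhds]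
  rw [same_edges]
  exact h.contourSum_eq_of_mem_convolutionDomain (by linarith) hS hT
    (fun k hk ↦ (hY k (hrange k hk)).1.1) (fun k hk ↦ (hY k (hrange k hk.le)).1.2)
    (h.shift_closes hχ y') (fun k _ ↦ h.shift_mem hχ hYr k)
    (fun k _ ↦ h.shift_succ_mem hε hχ hYr k) (h.shift_closes hχ Y)

theorem exists_shift (h : ConvolutionLoop S T p ε n y z φ ψ) (hε : ε ≤ 1 / 4)
    (hS : Function.Periodic (· ∈ S) p) (hT : Function.Periodic (· ∈ T) p)
    (hχ : IsSplitting S T y n z χ r) (hy' : y' ∈ ball y r) :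
    ∃ z' φ' ψ', ConvolutionLoop S T p (4 * ε) n y' z' φ' ψ' ∧
      contourSum n φ' ψ' z' =ᶠ[𝓝 y'] fun Y ↦ contourSum n φ ψ (fun k ↦ z k + χ k * (Y - y)) Y := by
  have hw : y' - y ∈ ball 0 r := by rwa [mem_ball_zero_iff, ← dist_eq_norm]
  obtain ⟨φ', hφ', hφ'φ⟩ := h.left.exists_shift hε hS (hχ.left _ hw) (by simp only [hχ.closes])
  obtain ⟨ψ', hψ', hψ'ψ⟩ :=
    h.right.exists_shift hε hT.neg (hχ.right _ hw) (by simp only [hχ.closes])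
  have hright : ∀ k, y - z k + (1 - χ k) * (y' - y) = y' - (z k + χ k * (y' - y)) := fun k ↦ by
    ring
  simp only [hright] at hψ' hψ'ψ
  exact ⟨_, φ', ψ', ⟨hφ', hψ'⟩, h.contourSum_eventuallyEq_shift hε hS hT hχ hy' ⟨hφ', hψ'⟩
    (by linarith) hφ'φ hψ'ψ⟩

theorem contourSum_eventuallyEq_shift_self (h : ConvolutionLoop S T p ε n y z φ ψ)
    (hε : ε ≤ 1 / 4) (hS : Function.Periodic (· ∈ S) p) (hT : Function.Periodic (· ∈ T) p)
    (hχ : IsSplitting S T y n z χ r) (hr : 0 < r) :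
    contourSum n φ ψ z =ᶠ[𝓝 y] fun Y ↦ contourSum n φ ψ (fun k ↦ z k + χ k * (Y - y)) Y := by
  have hz : (fun k ↦ z k + χ k * (y - y)) = z := by simp
  have := h.contourSum_eventuallyEq_shift hε hS hT hχ (mem_ball_self hr) (hz.symm ▸ h)
    (by linarith) (fun _ ↦ .rfl) fun _ ↦ .rfl
  rwa [hz] at this

end ConvolutionLoop

/-- The germ of `I` at `y` is given by convolution integrals over loops of arbitrarily small mesh
with period `p`. -/
def IsConvolutionGerm (S T : Set ℂ) (p y : ℂ) (I : ℂ → ℂ) : Prop :=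
  ∀ ε > 0, ∃ n z φ ψ, ConvolutionLoop S T p ε n y z φ ψ ∧ contourSum n φ ψ z =ᶠ[𝓝 y] I

namespace IsConvolutionGerm

variable {S T W : Set ℂ} {p y : ℂ} {δ : ℝ} {I : ℂ → ℂ}

theorem exists_differentiableOn_ball_of_mesh (h : IsConvolutionGerm S T p y I)
    (hS : Function.Periodic (· ∈ S) p) (hT : Function.Periodic (· ∈ T) p) (hδ : 0 < δ)
    (hST : ∀ x, δ ≤ cappedInfDist S x + cappedInfDist T (y - x)) {ε : ℝ} (hε : 0 < ε) :
    ∃ J, DifferentiableOn ℂ J (ball y (δ / 2)) ∧ J =ᶠ[𝓝 y] I ∧ ∀ y' ∈ ball y (δ / 2),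
      ∃ n z φ ψ, ConvolutionLoop S T p ε n y' z φ ψ ∧ contourSum n φ ψ z =ᶠ[𝓝 y'] J := by
  obtain ⟨n, z, φ, ψ, hloop, hI⟩ := h (min (ε / 4) (1 / 4)) (by positivity)
  have hmesh : min (ε / 4) (1 / 4) ≤ 1 / 4 := min_le_right _ _
  obtain ⟨χ, hχ⟩ := hloop.exists_isSplitting hS hT hδ hST
  refine ⟨_, hloop.differentiableOn_contourSum_shift hmesh hχ,
    (hloop.contourSum_eventuallyEq_shift_self hmesh hS hT hχ (half_pos hδ)).symm.trans hI,
    fun y' hy' ↦ ?_⟩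
  obtain ⟨z', φ', ψ', hloop', heq⟩ := hloop.exists_shift hmesh hS hT hχ hy'
  exact ⟨n, z', φ', ψ', hloop'.mono (by linarith [min_le_left (ε / 4) (1 / 4)]), heq⟩

theorem exists_differentiableOn_ball (h : IsConvolutionGerm S T p y I)
    (hS : Function.Periodic (· ∈ S) p) (hT : Function.Periodic (· ∈ T) p) (hδ : 0 < δ)
    (hST : ∀ x, δ ≤ cappedInfDist S x + cappedInfDist T (y - x)) :
    ∃ J, DifferentiableOn ℂ J (ball y (δ / 2)) ∧ J =ᶠ[𝓝 y] I ∧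
      ∀ y' ∈ ball y (δ / 2), IsConvolutionGerm S T p y' J := by
  obtain ⟨J, hJ, hJI, -⟩ := h.exists_differentiableOn_ball_of_mesh hS hT hδ hST one_pos
  refine ⟨J, hJ, hJI, fun y' hy' ε hε ↦ ?_⟩
  obtain ⟨J', hJ', hJ'I, hloops⟩ := h.exists_differentiableOn_ball_of_mesh hS hT hδ hST hε
  obtain ⟨n, z, φ, ψ, hloop, heq⟩ := hloops y' hy'
  exact ⟨n, z, φ, ψ, hloop, heq.trans (eventuallyEq_nhds_of_isPreconnected isOpen_ball
    (convex_ball _ _).isPreconnected hJ' hJ (mem_ball_self (half_pos hδ)) (hJ'I.trans hJI.symm)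
    hy')⟩

theorem continuableFrom (h : IsConvolutionGerm S T p y I) (hS : Function.Periodic (· ∈ S) p)
    (hT : Function.Periodic (· ∈ T) p) (hW : IsClosed W) (hSTW : ∀ s ∈ S, ∀ t ∈ T, s + t ∈ W) :
    ContinuableFrom W y I := by
  rintro γ hγ rfl hγW
  obtain ⟨δ, hδ, hδW⟩ := exists_pos_forall_le_cappedInfDist (isCompact_Icc.image_of_continuousOn hγ)
    hW (disjoint_left.2 fun _ ⟨t, ht, ht'⟩ ↦ ht' ▸ hγW t ht)
  have hsum : ∀ t ∈ Icc (0 : ℝ) 1, ∀ x, δ ≤ cappedInfDist S x + cappedInfDist T (γ t - x) :=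
    fun t ht x ↦ (hδW _ (mem_image_of_mem γ ht)).trans (cappedInfDist_le_add hSTW x _)
  refine exists_analyticContinuationAlong_of_step hγ (P := IsConvolutionGerm S T p) (half_pos hδ)
    (fun t ht f hf ↦ ?_) ?_ h
  · obtain ⟨J, hJ, hJf, hJ'⟩ := hf.exists_differentiableOn_ball hS hT hδ (hsum t ht)
    exact ⟨J, hJ, hJf, fun y hy ↦ hJ' y hy.1⟩
  · obtain ⟨J, hJ, hJI, -⟩ := h.exists_differentiableOn_ball hS hT hδ
      (hsum 0 (left_mem_Icc.2 zero_le_one))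
    exact (hJ.analyticAt (ball_mem_nhds _ (half_pos hδ))).congr hJI

end IsConvolutionGerm

/-! ### Convolution of half-plane branches -/

theorem contourSum_eq_segmentIntegral {φ ψ : ℂ → ℂ} {L L' : ℝ}
    (hφ : DifferentiableOn ℂ φ {z | z.re < L})
    (hψ : DifferentiableOn ℂ ψ {z | z.re < L'}) {Y : ℂ} {n : ℕ} {ζ : ℕ → ℂ}
    (hζ : ∀ k, (ζ k).re < L) (hζY : ∀ k, (Y - ζ k).re < L') :
    contourSum n (fun _ ↦ φ) (fun _ ↦ ψ) ζ Y =
      segmentIntegral (fun x ↦ φ x * ψ (Y - x)) (ζ 0) (ζ n) := by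
  have hopen : ∀ c : ℝ, IsOpen {z : ℂ | z.re < c} := fun c ↦
    isOpen_lt Complex.continuous_re continuous_const
  have hconv : Convex ℝ ((Y - ·) ⁻¹' {z : ℂ | z.re < L'}) := by
    convert convex_halfSpace_re_gt (Y.re - L') using 1
    ext x
    simp [sub_lt_comm]
  obtain ⟨P, hP⟩ := exists_primitive_segmentIntegral
    ((hopen L).inter ((hopen L').preimage (continuous_sub_left Y)))
    ((convex_halfSpace_re_lt L).inter hconv)
    ((hφ.mono inter_subset_left).mul (hψ.comp (by fun_prop) fun _ hx ↦ hx.2))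
  have hmem : ∀ k, ζ k ∈ {z : ℂ | z.re < L} ∩ (Y - ·) ⁻¹' {z : ℂ | z.re < L'} := fun k ↦
    ⟨hζ k, hζY k⟩
  have hedge : ∀ j k, segmentIntegral (fun x ↦ φ x * ψ (Y - x)) (ζ j) (ζ k) = P (ζ k) - P (ζ j) :=
    fun j k ↦ hP _ (hmem j) _ (hmem k)
  simp only [contourSum, hedge]
  exact Finset.sum_range_sub (fun k ↦ P (ζ k)) n

/-- `φ` is a single-valued branch on the half-plane `re z < L` of a multivalued function whose
singular set `S` lies outside this half-plane. -/
structure IsHalfPlaneBranch (S : Set ℂ) (L : ℝ) (φ : ℂ → ℂ) : Prop where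
  differentiableOn : DifferentiableOn ℂ φ {z | z.re < L}
  le_re : ∀ s ∈ S, L ≤ s.re
  continuableFrom : ∀ z, z.re < L → ContinuableFrom S z φ

namespace IsHalfPlaneBranch

variable {S T : Set ℂ} {L L' ε : ℝ} {x y z p : ℂ} {φ ψ : ℂ → ℂ}

theorem cappedInfDist_eq_one (h : IsHalfPlaneBranch S L φ) (hz : z.re ≤ L - 1) :
    cappedInfDist S z = 1 := by
  refine cappedInfDist_le_one.antisymm (le_cappedInfDist_iff.2 ⟨le_rfl, fun s hs ↦ ?_⟩)
  have hre := Complex.re_le_norm (s - z)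
  rw [← dist_eq_norm', Complex.sub_re] at hre
  linarith [h.le_re s hs]

theorem isBranch (h : IsHalfPlaneBranch S L φ) (hz : z.re ≤ L - 1) : IsBranch S z φ := by
  have hd := h.cappedInfDist_eq_one hz
  refine ⟨hd ▸ one_pos, h.continuableFrom z (by linarith), h.differentiableOn.mono fun x hx ↦ ?_⟩
  have hre := (Complex.re_le_norm (x - z)).trans_lt (mem_ball_iff_norm.1 (hd ▸ hx))
  rw [Complex.sub_re] at hre
  exact (by linarith : x.re < L)

theorem branchLoop (h : IsHalfPlaneBranch S L φ) (hφ : Function.Periodic φ p) (hp : p.re = 0)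
    (hz : z.re ≤ L - 1) {n : ℕ} (hn : n ≠ 0) (hpn : ‖p / n‖ < ε) :
    BranchLoop S p ε n (fun k ↦ z + k * (p / n)) fun _ ↦ φ := by
  have hre : ∀ k : ℕ, (z + k * (p / n)).re ≤ L - 1 := fun k ↦ by
    simpa [← mul_div_assoc, Complex.div_natCast_re, hp] using hz
  have step : ∀ k : ℕ, z + (k + 1 : ℕ) * (p / n) - (z + k * (p / n)) = p / n := fun k ↦ by
    push_cast
    ring
  refine ⟨fun k ↦ h.isBranch (hre k), fun k ↦ ?_, fun _ ↦ .rfl, ?_, ?_⟩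
  · rw [h.cappedInfDist_eq_one (hre k), mul_one, dist_eq_norm, step k]
    exact hpn
  · simp [mul_div_cancel₀ p (Nat.cast_ne_zero.2 hn)]
  · rw [show (fun x ↦ φ (x + p)) = φ from funext hφ]

theorem isConvolutionGerm (hφ : IsHalfPlaneBranch S L φ) (hψ : IsHalfPlaneBranch T L' ψ)
    (hφp : Function.Periodic φ p) (hψp : Function.Periodic ψ p) (hp : p.re = 0)
    (hx : x.re ≤ L - 1) (hy : (y - x).re ≤ L' - 1) :
    IsConvolutionGerm S T p y fun Y ↦
      segmentIntegral (fun u ↦ φ u * ψ (Y - u)) x (x + p) := by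
  intro ε hε
  obtain ⟨n, hn⟩ := exists_nat_gt (‖p‖ / ε)
  have hn0 : 0 < (n : ℝ) := (by positivity : 0 ≤ ‖p‖ / ε).trans_lt hn
  have hpn : ‖p / n‖ < ε := by
    rw [norm_div, Complex.norm_natCast, div_lt_comm₀ hn0 hε]
    exact hn
  have hnne : n ≠ 0 := (Nat.cast_pos.1 hn0).ne'
  refine ⟨n, fun k ↦ x + k * (p / n), fun _ ↦ φ, fun _ ↦ ψ,
    ⟨hφ.branchLoop hφp hp hx hnne hpn, ?_⟩, ?_⟩
  · convert hψ.branchLoop hψp.neg (by simpa using hp) hy hnne (by simpa [neg_div] using hpn)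
      using 2 with k
    ring
  · have hre : ∀ k : ℕ, (k * (p / n)).re = 0 := fun k ↦ by
      simp [← mul_div_assoc, Complex.div_natCast_re, hp]
    have hnear : ∀ᶠ Y in 𝓝 y, (Y - x).re < L' :=
      (Complex.continuous_re.comp (continuous_sub_right x)).continuousAt.eventually_lt
        continuousAt_const (hy.trans_lt (sub_one_lt L'))
    filter_upwards [hnear] with Y hY
    have hsum := contourSum_eq_segmentIntegral hφ.differentiableOn hψ.differentiableOn (Y := Y)
      (n := n) (ζ := fun k ↦ x + k * (p / n)) (fun k ↦ ?_) fun k ↦ ?_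
    · simpa [mul_div_cancel₀ p (Nat.cast_ne_zero.2 hnne)] using hsum
    · rw [Complex.add_re, hre]
      linarith
    · rw [← sub_sub, Complex.sub_re, hre]
      linarith

end IsHalfPlaneBranch

/-! ### The Hadamard product in the exponential coordinate -/

open Complex

section PowerSeries

variable {a b : ℕ → ℂ} {ξ : ℂ}

theorem summable_norm_of_lt_radiusOf (hξ : (‖ξ‖₊ : ENNReal) < radiusOf a) :
    Summable fun n ↦ ‖a n * ξ ^ n‖ := by
  simpa using (FormalMultilinearSeries.ofScalars ℂ a).summable_norm_mul_pow hξ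

theorem differentiableOn_seriesSum (a : ℕ → ℂ) :
    DifferentiableOn ℂ (seriesSum a) {ξ | (‖ξ‖₊ : ENNReal) < radiusOf a} := by
  intro ξ hξ
  have hsum : (FormalMultilinearSeries.ofScalars ℂ a).sum = seriesSum a :=
    funext fun ξ ↦ FormalMultilinearSeries.ofScalars_sum_eq a ξ
  have hball := (FormalMultilinearSeries.ofScalars ℂ a).hasFPowerSeriesOnBall (pos_of_gt hξ)
  rw [hsum] at hball
  exact (hball.analyticAt_of_mem (mem_eball_zero_iff.2 hξ)).differentiableWithinAt

theorem isOpen_nnnorm_lt (R : ENNReal) : IsOpen {ξ : ℂ | (‖ξ‖₊ : ENNReal) < R} :=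
  isOpen_lt (by fun_prop) continuous_const

theorem radiusOf_mul_pos (ha : 0 < radiusOf a) (hb : 0 < radiusOf b) :
    0 < radiusOf fun n ↦ a n * b n := by
  obtain ⟨r, hr0, hr⟩ := ENNReal.lt_iff_exists_nnreal_btwn.1 (lt_min ha hb)
  obtain ⟨C, hC, hCa⟩ := (FormalMultilinearSeries.ofScalars ℂ a).norm_mul_pow_le_of_lt_radius
    (hr.trans_le (min_le_left _ _))
  obtain ⟨D, -, hDb⟩ := (FormalMultilinearSeries.ofScalars ℂ b).norm_mul_pow_le_of_lt_radius
    (hr.trans_le (min_le_right _ _))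
  simp only [FormalMultilinearSeries.ofScalars_norm] at hCa hDb
  have hr0 : 0 < r := ENNReal.coe_pos.1 hr0
  refine (ENNReal.coe_pos.2 (mul_pos hr0 hr0)).trans_le
    (FormalMultilinearSeries.le_radius_of_bound _ (C * D) fun n ↦ ?_)
  rw [FormalMultilinearSeries.ofScalars_norm, norm_mul, NNReal.coe_mul, mul_pow,
    mul_mul_mul_comm]
  exact mul_le_mul (hCa n) (hDb n) (by positivity) hC.le

end PowerSeries

theorem integral_exp_int_mul_two_pi_mul_I (k : ℤ) :
    ∫ s in (0 : ℝ)..1, exp (k * (s * (2 * Real.pi * I))) = if k = 0 then 1 else 0 := by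
  split_ifs with hk
  · simp [hk]
  · have hcomm : ∀ s : ℝ, (k : ℂ) * (s * (2 * Real.pi * I)) = k * (2 * Real.pi * I) * s :=
      fun s ↦ by ring
    simp only [hcomm]
    rw [integral_exp_mul_complex (by simp [hk, Real.pi_ne_zero])]
    simp [exp_int_mul_two_pi_mul_I]

theorem hasSum_integral_tsum_mul_tsum {ι κ : Type*} [Countable ι] [Countable κ]
    {u : ι → ℝ → ℂ} {v : κ → ℝ → ℂ} {C : ι → ℝ} {D : κ → ℝ} (hu : ∀ i, Continuous (u i))
    (hv : ∀ j, Continuous (v j)) (hC : Summable C) (hD : Summable D)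
    (huC : ∀ i s, ‖u i s‖ ≤ C i) (hvD : ∀ j s, ‖v j s‖ ≤ D j) (a b : ℝ) :
    HasSum (fun q : ι × κ ↦ ∫ s in a..b, u q.1 s * v q.2 s)
      (∫ s in a..b, (∑' i, u i s) * ∑' j, v j s) := by
  have summable_u : ∀ s, Summable fun i ↦ ‖u i s‖ := fun s ↦
    hC.of_nonneg_of_le (fun _ ↦ norm_nonneg _) fun i ↦ huC i s
  have summable_v : ∀ s, Summable fun j ↦ ‖v j s‖ := fun s ↦
    hD.of_nonneg_of_le (fun _ ↦ norm_nonneg _) fun j ↦ hvD j s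
  have C_nonneg : ∀ i, 0 ≤ C i := fun i ↦ (norm_nonneg _).trans (huC i 0)
  have D_nonneg : ∀ j, 0 ≤ D j := fun j ↦ (norm_nonneg _).trans (hvD j 0)
  refine intervalIntegral.hasSum_integral_of_dominated_convergence
    (fun q _ ↦ C q.1 * D q.2) (fun q ↦ ((hu _).mul (hv _)).aestronglyMeasurable) (fun q ↦ ?_)
    (Eventually.of_forall fun _ _ ↦ hC.mul_of_nonneg hD C_nonneg D_nonneg)
    intervalIntegrable_const (Eventually.of_forall fun s _ ↦ ?_)
  · refine Eventually.of_forall fun s _ ↦ ?_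
    rw [norm_mul]
    exact mul_le_mul (huC _ s) (hvD _ s) (norm_nonneg _) (C_nonneg _)
  · rw [tsum_mul_tsum_of_summable_norm (summable_u s) (summable_v s)]
    exact (summable_mul_of_summable_norm (summable_u s) (summable_v s)).hasSum

theorem hasSum_integral_mul_fourier {c d : ℕ → ℂ} (hc : Summable fun n ↦ ‖c n‖)
    (hd : Summable fun n ↦ ‖d n‖) :
    HasSum (fun n ↦ c n * d n) (∫ s in (0 : ℝ)..1,
      (∑' m : ℕ, c m * exp ((m : ℤ) * (s * (2 * Real.pi * I)))) *
        ∑' n : ℕ, d n * exp ((-n : ℤ) * (s * (2 * Real.pi * I)))) := by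
  let e : ℤ → ℝ → ℂ := fun k s ↦ exp (k * (s * (2 * Real.pi * I)))
  have e_cont : ∀ k, Continuous (e k) := fun k ↦ by fun_prop
  have e_norm : ∀ k s, ‖e k s‖ = 1 := fun k s ↦ by simp [e, norm_exp]
  have e_mul : ∀ j k s, e j s * e k s = e (j + k) s := fun j k s ↦ by
    simp only [e, ← exp_add]
    push_cast
    ring_nf
  have prod_sum := hasSum_integral_tsum_mul_tsum (u := fun m : ℕ ↦ fun s ↦ c m * e m s)
    (v := fun n : ℕ ↦ fun s ↦ d n * e (-n) s) (fun _ ↦ (e_cont _).const_mul _)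
    (fun _ ↦ (e_cont _).const_mul _) hc hd (fun m s ↦ by rw [norm_mul, e_norm, mul_one])
    (fun n s ↦ by rw [norm_mul, e_norm, mul_one]) 0 1
  have orthogonality : ∀ q : ℕ × ℕ, ∫ s in (0 : ℝ)..1, (c q.1 * e q.1 s) * (d q.2 * e (-q.2) s) =
      if q.1 = q.2 then c q.1 * d q.2 else 0 := fun q ↦ by
    simp_rw [mul_mul_mul_comm (c q.1), e_mul]
    rw [intervalIntegral.integral_const_mul, integral_exp_int_mul_two_pi_mul_I]
    simp [add_neg_eq_zero]
  have diag_injective : Function.Injective fun n : ℕ ↦ (n, n) := fun m n h ↦ (Prod.ext_iff.1 h).1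
  rw [funext orthogonality, ← diag_injective.hasSum_iff] at prod_sum
  · simpa only [Function.comp_def, if_true] using prod_sum
  · rintro ⟨m, n⟩ hmn
    exact if_neg fun h ↦ hmn ⟨m, Prod.ext rfl h⟩

theorem segmentIntegral_exp_mul_exp_sub {a b : ℕ → ℂ} {x y : ℂ}
    (hx : (‖exp x‖₊ : ENNReal) < radiusOf a) (hy : (‖exp (y - x)‖₊ : ENNReal) < radiusOf b) :
    segmentIntegral (fun u ↦ seriesSum a (exp u) * seriesSum b (exp (y - u))) x
        (x + 2 * Real.pi * I) =
      2 * Real.pi * I * seriesSum (fun n ↦ a n * b n) (exp y) := by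
  have hsum := hasSum_integral_mul_fourier (summable_norm_of_lt_radiusOf hx)
    (summable_norm_of_lt_radiusOf hy)
  have hcoeff : ∀ n, a n * exp x ^ n * (b n * exp (y - x) ^ n) = a n * b n * exp y ^ n :=
    fun n ↦ by
      rw [mul_mul_mul_comm, ← mul_pow, ← exp_add, add_sub_cancel]
  rw [funext hcoeff] at hsum
  rw [seriesSum, hsum.tsum_eq, ← intervalIntegral.integral_const_mul, segmentIntegral]
  refine intervalIntegral.integral_congr fun s _ ↦ ?_
  have hs : AffineMap.lineMap x (x + 2 * Real.pi * I) s = x + s * (2 * Real.pi * I) := by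
    simp [AffineMap.lineMap_apply, add_comm]
  have left_factor : seriesSum a (exp (x + s * (2 * Real.pi * I))) =
      ∑' m : ℕ, a m * exp x ^ m * exp ((m : ℤ) * (s * (2 * Real.pi * I))) :=
    tsum_congr fun m ↦ by
      rw [mul_assoc (a m), exp_int_mul, zpow_natCast, ← mul_pow, exp_add]
  have right_factor : seriesSum b (exp (y - (x + s * (2 * Real.pi * I)))) =
      ∑' n : ℕ, b n * exp (y - x) ^ n * exp ((-n : ℤ) * (s * (2 * Real.pi * I))) :=
    tsum_congr fun n ↦ by
      rw [mul_assoc (b n), exp_int_mul, zpow_neg, zpow_natCast, ← inv_pow, ← exp_neg, ← mul_pow,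
        ← exp_add, ← sub_eq_add_neg, sub_sub]
  simp only [hs, left_factor, right_factor, add_sub_cancel_left]
  exact mul_comm _ _

/-- The branch of the logarithm near `exp v` that takes the value `v` at `exp v`. -/
noncomputable def logBranch (v ξ : ℂ) : ℂ := v + log (ξ * exp (-v))

theorem logBranch_exp {u v : ℂ} (h : |(u - v).im| < Real.pi) : logBranch v (exp u) = u := by
  rw [logBranch, ← exp_add, ← sub_eq_add_neg, log_exp (abs_lt.1 h).1 (abs_lt.1 h).2.le,
    add_sub_cancel]

theorem eventually_logBranch_exp (v : ℂ) : ∀ᶠ u in 𝓝 v, logBranch v (exp u) = u := by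
  have himv : ∀ᶠ u in 𝓝 v, |(u - v).im| < Real.pi :=
    (by fun_prop : Continuous fun u ↦ |(u - v).im|).continuousAt.eventually_lt continuousAt_const
      (by simp [Real.pi_pos])
  exact himv.mono fun u ↦ logBranch_exp

theorem analyticAt_logBranch (v : ℂ) : AnalyticAt ℂ (logBranch v) (exp v) :=
  analyticAt_const.add ((analyticAt_id.mul analyticAt_const).clog (by simp [← exp_add]))

theorem nhds_exp (u : ℂ) : 𝓝 (exp u) = map exp (𝓝 u) :=
  ((hasStrictDerivAt_exp u).map_nhds_eq (exp_ne_zero u)).symm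

theorem exists_analyticContinuationAlong_of_comp_exp {f : ℂ → ℂ} {η : ℝ → ℂ}
    (hη : ContinuousOn η (Icc 0 1)) {F : ℝ → ℂ → ℂ}
    (hF : AnalyticContinuationAlong (f ∘ exp) η F) :
    ∃ G, AnalyticContinuationAlong f (exp ∘ η) G := by
  refine ⟨fun t ↦ F t ∘ logBranch (η t), fun t ht ↦ ?_, ?_, fun t ht ↦ ?_⟩
  · exact (hF.1 t ht).comp_of_eq (analyticAt_logBranch _) (logBranch_exp (by simp [Real.pi_pos]))
  · rw [Function.comp_apply, nhds_exp, EventuallyEq, eventually_map]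
    filter_upwards [hF.2.1, eventually_logBranch_exp (η 0)] with u hu hlog
    simpa [hlog] using hu
  · filter_upwards [hF.2.2 t ht,
      (hη t ht).eventually (eventually_eventually_nhds.2 (eventually_logBranch_exp (η t)))]
      with s hFs hlogt
    rw [Function.comp_apply, nhds_exp, EventuallyEq, eventually_map]
    filter_upwards [hFs, hlogt, eventually_logBranch_exp (η s)] with u hu hlogt hlogs
    simpa [hlogs, hlogt] using hu

theorem exists_continuousOn_exp_eq {γ : ℝ → ℂ} (hγ : ContinuousOn γ (Icc 0 1))
    (h0 : ∀ t ∈ Icc (0 : ℝ) 1, γ t ≠ 0) :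
    ∃ η : ℝ → ℂ, ContinuousOn η (Icc 0 1) ∧ EqOn (exp ∘ η) γ (Icc 0 1) := by
  let g : C(unitInterval, {z : ℂ // z ≠ 0}) := ⟨fun t ↦ ⟨γ t, h0 t t.2⟩, by
    exact (continuousOn_iff_continuous_domRestrict.1 hγ).subtype_mk _⟩
  obtain ⟨Γ, hΓ, -⟩ := isCoveringMap_exp.exists_path_lifts g (log (γ 0))
    (Subtype.ext (exp_log (h0 0 (left_mem_Icc.2 zero_le_one))).symm)
  refine ⟨IccExtend zero_le_one Γ, (Γ.continuous.Icc_extend').continuousOn, fun t ht ↦ ?_⟩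
  rw [Function.comp_apply, IccExtend_of_mem _ _ ht]
  exact congrArg Subtype.val (congrFun hΓ ⟨t, ht⟩)

theorem nnnorm_exp_lt_of_re_lt {R : ENNReal} {L : ℝ} (hL : ENNReal.ofReal (Real.exp L) ≤ R)
    {u : ℂ} (hu : u.re < L) : (‖exp u‖₊ : ENNReal) < R := by
  refine lt_of_lt_of_le ?_ hL
  rw [← enorm_eq_nnnorm, ← ofReal_norm, norm_exp]
  exact (ENNReal.ofReal_lt_ofReal_iff (Real.exp_pos L)).2 (Real.exp_lt_exp.2 hu)

theorem continuableFrom_seriesSum_comp_exp {A : Set ℂ} {a : ℕ → ℂ} (h : ContinuableGerm A a)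
    {x : ℂ} (hx : (‖exp x‖₊ : ENNReal) < radiusOf a) :
    ContinuableFrom (exp ⁻¹' A) x (seriesSum a ∘ exp) := by
  intro γ hγ h0 hS
  obtain ⟨F, hF⟩ := h.2 (exp ∘ γ) (continuous_exp.comp_continuousOn hγ) hS (by simpa [h0] using hx)
  exact ⟨_, hF.pullback fun t _ ↦ by fun_prop⟩

theorem isHalfPlaneBranch_seriesSum_comp_exp {A : Set ℂ} {a : ℕ → ℂ} (h : ContinuableGerm A a)
    {L : ℝ} (hL : ENNReal.ofReal (Real.exp L) ≤ radiusOf a)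
    (hA : ∀ α ∈ A, α ≠ 0 → Real.exp L ≤ ‖α‖) :
    IsHalfPlaneBranch (exp ⁻¹' A) L (seriesSum a ∘ exp) where
  differentiableOn := (differentiableOn_seriesSum a).comp (by fun_prop) fun _ hu ↦
    nnnorm_exp_lt_of_re_lt hL hu
  le_re s hs := by simpa [norm_exp] using hA _ hs (exp_ne_zero s)
  continuableFrom _ hz := continuableFrom_seriesSum_comp_exp h (nnnorm_exp_lt_of_re_lt hL hz)

theorem continuableFrom_seriesSum_mul_comp_exp {A B Ω : Set ℂ} {a b : ℕ → ℂ} {L L' : ℝ}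
    (hΩ : IsClosed Ω) (hAB : A * B ⊆ Ω)
    (ha : IsHalfPlaneBranch (exp ⁻¹' A) L (seriesSum a ∘ exp))
    (hb : IsHalfPlaneBranch (exp ⁻¹' B) L' (seriesSum b ∘ exp))
    (haL : ENNReal.ofReal (Real.exp L) ≤ radiusOf a)
    (hbL : ENNReal.ofReal (Real.exp L') ≤ radiusOf b) {y : ℂ} (hy : y.re ≤ L + L' - 2) :
    ContinuableFrom (exp ⁻¹' Ω) y (seriesSum (fun n ↦ a n * b n) ∘ exp) := by
  have two_pi_I_re : (2 * Real.pi * I : ℂ).re = 0 := by simp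
  have exp_per : ∀ c : ℕ → ℂ, Function.Periodic (seriesSum c ∘ exp) (2 * Real.pi * I) := fun c ↦
    exp_periodic.comp (seriesSum c)
  have conv := ha.isConvolutionGerm hb (exp_per a) (exp_per b) two_pi_I_re
    (x := (L - 1 : ℝ)) (y := y) (by simp) (by rw [sub_re, ofReal_re]; linarith)
  have cont := (conv.continuableFrom (exp_periodic.comp (· ∈ A))
    (exp_periodic.comp (· ∈ B)) (hΩ.preimage continuous_exp) fun s hs t ht ↦ by
      rw [mem_preimage, exp_add]
      exact hAB (mul_mem_mul hs ht)).const_mul (2 * Real.pi * I)⁻¹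
  refine cont.congr ?_
  have hnear : ∀ᶠ Y : ℂ in 𝓝 y, Y.re < L + L' - 1 :=
    continuous_re.continuousAt.eventually_lt continuousAt_const (by linarith)
  filter_upwards [hnear] with Y hY
  simp only [Function.comp_apply]
  rw [segmentIntegral_exp_mul_exp_sub, inv_mul_cancel_left₀ two_pi_I_ne_zero]
  · exact nnnorm_exp_lt_of_re_lt haL (by simp)
  · exact nnnorm_exp_lt_of_re_lt hbL (by rw [sub_re, ofReal_re]; linarith)

/-! ### Descent from the exponential coordinate -/

section DiscreteSets

theorem isClosed_and_isDiscrete_of_finite_inter_closedBall {X : Type*} [MetricSpace X] {S : Set X}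
    (c : X) (h : ∀ R : ℝ, (S ∩ closedBall c R).Finite) : IsClosed S ∧ IsDiscrete S := by
  refine isClosed_and_discrete_iff.2 fun x ↦ ?_
  rw [disjoint_principal_right, mem_nhdsWithin_iff_eventually]
  have hfin : ((S ∩ closedBall c (dist x c + 1)) \ {x}).Finite := (h _).subset sdiff_subset
  filter_upwards [hfin.isClosed.isOpen_compl.mem_nhds (by simp), ball_mem_nhds x one_pos]
    with y hy hyx hne hyS
  exact hy ⟨⟨hyS, by
    rw [mem_closedBall]
    linarith [dist_triangle y x c, mem_ball.1 hyx]⟩, hne⟩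

theorem countable_of_finite_inter_closedBall {X : Type*} [PseudoMetricSpace X] {S : Set X} (c : X)
    (h : ∀ R : ℝ, (S ∩ closedBall c R).Finite) : S.Countable := by
  rw [← inter_univ S, ← iUnion_closedBall_nat c, inter_iUnion]
  exact countable_iUnion fun n ↦ (h n).countable

theorem finite_inter_closedBall {X : Type*} [PseudoMetricSpace X] [ProperSpace X] {S : Set X}
    (hS : IsClosed S) (hd : IsDiscrete S) (c : X) (R : ℝ) : (S ∩ closedBall c R).Finite :=
  ((isCompact_closedBall c R).inter_left hS).finite (hd.mono inter_subset_left)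

theorem exists_pos_le_norm {E : Type*} [NormedAddCommGroup E] {S : Set E} (hS : IsClosed S)
    (hd : IsDiscrete S) : ∃ r > 0, ∀ s ∈ S, s ≠ 0 → r ≤ ‖s‖ := by
  have h := isClosed_and_discrete_iff.1 ⟨hS, hd⟩ 0
  rw [disjoint_principal_right, mem_nhdsWithin_iff_eventually, eventually_nhds_iff_ball] at h
  obtain ⟨r, hr, h⟩ := h
  exact ⟨r, hr, fun s hs hs0 ↦ not_lt.1 fun hlt ↦ h s (mem_ball_zero_iff.2 hlt) hs0 hs⟩

theorem finite_zero_union_mul_inter_closedBall {𝕜 : Type*} [NormedDivisionRing 𝕜] [ProperSpace 𝕜]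
    {A B : Set 𝕜} (hA : IsClosed A) (hB : IsClosed B) (hdA : IsDiscrete A) (hdB : IsDiscrete B)
    (R : ℝ) : (({0} ∪ A * B : Set 𝕜) ∩ closedBall 0 R).Finite := by
  obtain ⟨r, hr, hrA⟩ := exists_pos_le_norm hA hdA
  obtain ⟨s, hs, hsB⟩ := exists_pos_le_norm hB hdB
  refine ((finite_singleton 0).union ((finite_inter_closedBall hA hdA 0 (R / s)).mul
    (finite_inter_closedBall hB hdB 0 (R / r)))).subset ?_
  rintro _ ⟨h0 | ⟨α, hα, β, hβ, rfl⟩, hR⟩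
  · exact Or.inl h0
  by_cases h0 : α * β = 0
  · exact Or.inl h0
  obtain ⟨hα0, hβ0⟩ := mul_ne_zero_iff.1 h0
  rw [mem_closedBall_zero_iff, norm_mul] at hR
  refine Or.inr (mul_mem_mul ⟨hα, ?_⟩ ⟨hβ, ?_⟩)
  · rw [mem_closedBall_zero_iff, le_div_iff₀ hs]
    exact (mul_le_mul_of_nonneg_left (hsB β hβ hβ0) (norm_nonneg α)).trans hR
  · rw [mem_closedBall_zero_iff, le_div_iff₀' hr]
    exact (mul_le_mul_of_nonneg_right (hrA α hα hα0) (norm_nonneg β)).trans hR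

end DiscreteSets

theorem exists_lineMap_notMem_of_countable {W : Set ℂ} (hW : W.Countable) {z : ℂ} (hz : z ∉ W)
    {c : ℝ} (hc : c < z.re) :
    ∃ y : ℂ, y.re = c ∧ ∀ t ∈ Icc (0 : ℝ) 1, AffineMap.lineMap y z t ∉ W := by
  obtain ⟨m, hm⟩ := ((hW.image fun w ↦ (z - w).im / (z - w).re).dense_compl ℝ).nonempty
  have hsub : ∀ t : ℝ, z - AffineMap.lineMap (z - (z.re - c) * (1 + m * I)) z t =
      ((1 - t) * (z.re - c) : ℝ) * (1 + m * I) := fun t ↦ by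
    simp only [AffineMap.lineMap_apply, vsub_eq_sub, vadd_eq_add, real_smul]
    push_cast
    ring
  refine ⟨z - (z.re - c) * (1 + m * I), by simp, fun t ht hmem ↦ ?_⟩
  obtain rfl | hlt := ht.2.eq_or_lt
  · exact hz (by simpa using hmem)
  · refine hm ⟨_, hmem, ?_⟩
    simp only [hsub]
    have : (1 - t) * (z.re - c) ≠ 0 := (mul_pos (sub_pos.2 hlt) (sub_pos.2 hc)).ne'
    rw [re_ofReal_mul, im_ofReal_mul, mul_div_mul_left _ _ this]
    simp

theorem ContinuableFrom.of_forall_re_le {W : Set ℂ} (hW : W.Countable) {z : ℂ} (hz : z ∉ W)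
    {φ : ℂ → ℂ} {M : ℝ} (hφ : ∀ w : ℂ, w.re ≤ z.re → AnalyticAt ℂ φ w)
    (h : ∀ y : ℂ, y.re ≤ M → ContinuableFrom W y φ) : ContinuableFrom W z φ := by
  obtain ⟨y, hy, hseg⟩ := exists_lineMap_notMem_of_countable hW hz
    (c := min M (z.re - 1)) ((min_le_right _ _).trans_lt (sub_one_lt _))
  refine (h y (hy.trans_le (min_le_left _ _))).transport_lineMap hseg fun t ht ↦ hφ _ ?_
  have hyz : y.re ≤ z.re := hy.trans_le ((min_le_right _ _).trans (sub_one_lt _).le)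
  exact (convex_halfSpace_re_le z.re).lineMap_mem hyz (le_refl z.re) ht

theorem exists_isHalfPlaneBranch_seriesSum_comp_exp {A : Set ℂ} (hA : IsClosed A)
    (hd : IsDiscrete A) {a : ℕ → ℂ} (h : ContinuableGerm A a) :
    ∃ L : ℝ, ENNReal.ofReal (Real.exp L) ≤ radiusOf a ∧
      IsHalfPlaneBranch (exp ⁻¹' A) L (seriesSum a ∘ exp) := by
  obtain ⟨r, hr, hrA⟩ := exists_pos_le_norm hA hd
  obtain ⟨R, hR0, hR⟩ := ENNReal.lt_iff_exists_nnreal_btwn.1 h.1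
  have hmin : 0 < min r R := lt_min hr (NNReal.coe_pos.2 (ENNReal.coe_pos.1 hR0))
  have hexp : Real.exp (Real.log (min r R)) = min r R := Real.exp_log hmin
  have hL : ENNReal.ofReal (Real.exp (Real.log (min r R))) ≤ radiusOf a := by
    rw [hexp]
    exact (ENNReal.ofReal_le_of_le_toReal (min_le_right _ _)).trans hR.le
  refine ⟨_, hL, isHalfPlaneBranch_seriesSum_comp_exp h hL fun α hα hα0 ↦ ?_⟩
  rw [hexp]
  exact (min_le_left _ _).trans (hrA α hα hα0)

theorem continuableGerm_of_comp_exp {Ω : Set ℂ} (hΩ : Ω.Countable) (h0 : 0 ∈ Ω) {c : ℕ → ℂ}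
    (hc : 0 < radiusOf c) {M : ℝ}
    (h : ∀ y : ℂ, y.re ≤ M → ContinuableFrom (exp ⁻¹' Ω) y (seriesSum c ∘ exp)) :
    ContinuableGerm Ω c := by
  refine ⟨hc, fun γ hγ hγΩ hγc ↦ ?_⟩
  obtain ⟨η, hη, hηγ⟩ := exists_continuousOn_exp_eq hγ fun t ht h ↦ hγΩ t ht (h ▸ h0)
  have zero_mem : (0 : ℝ) ∈ Icc (0 : ℝ) 1 := left_mem_Icc.2 zero_le_one
  have hηΩ : ∀ t ∈ Icc (0 : ℝ) 1, η t ∉ exp ⁻¹' Ω := fun t ht ↦ by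
    simpa [← hηγ ht] using hγΩ t ht
  have hφ : ∀ w : ℂ, w.re ≤ (η 0).re → AnalyticAt ℂ (seriesSum c ∘ exp) w := fun w hw ↦ by
    have hwc : (‖exp w‖₊ : ENNReal) < radiusOf c := by
      refine lt_of_le_of_lt ?_ (hηγ zero_mem ▸ hγc)
      rw [ENNReal.coe_le_coe, ← NNReal.coe_le_coe]
      simpa [norm_exp] using hw
    exact ((differentiableOn_seriesSum c).analyticAt
      ((isOpen_nnnorm_lt _).mem_nhds hwc)).comp (by fun_prop)
  obtain ⟨F, hF⟩ := ContinuableFrom.of_forall_re_le hΩ.preimage_cexp (hηΩ 0 zero_mem) hφ h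
    η hη rfl hηΩ
  obtain ⟨G, hG⟩ := exists_analyticContinuationAlong_of_comp_exp hη hF
  exact ⟨G, hG.congr_path hηγ.symm⟩

end HadamardProduct

/-- **Theorem A.** If `f` is an `A`-continuable germ and `g` a `B`-continuable germ,
with `A`, `B` non-empty closed discrete subsets of `ℂ`, then `Ω := {0} ∪ A·B` is closed
and discrete and the Hadamard product `f ⊙ g` is an `Ω`-continuable germ. -/
theorem hadamard_product_continuable
    (A B : Set ℂ) (hA : A.Nonempty) (hB : B.Nonempty)
    (hAclosed : IsClosed A) (hBclosed : IsClosed B)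
    (hAdisc : DiscreteTopology A) (hBdisc : DiscreteTopology B)
    (a b : ℕ → ℂ)
    (hf : ContinuableGerm A a) (hg : ContinuableGerm B b) :
    IsClosed ({0} ∪ A * B : Set ℂ) ∧
    DiscreteTopology ({0} ∪ A * B : Set ℂ) ∧
    ContinuableGerm ({0} ∪ A * B) (fun n => a n * b n) := by
  rw [← isDiscrete_iff_discreteTopology] at *
  have hfin :=
    HadamardProduct.finite_zero_union_mul_inter_closedBall hAclosed hBclosed hAdisc hBdisc
  obtain ⟨hΩclosed, hΩdisc⟩ :=
    HadamardProduct.isClosed_and_isDiscrete_of_finite_inter_closedBall 0 hfin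
  obtain ⟨L, hLa, hφ⟩ :=
    HadamardProduct.exists_isHalfPlaneBranch_seriesSum_comp_exp hAclosed hAdisc hf
  obtain ⟨L', hLb, hψ⟩ :=
    HadamardProduct.exists_isHalfPlaneBranch_seriesSum_comp_exp hBclosed hBdisc hg
  refine ⟨hΩclosed, hΩdisc, HadamardProduct.continuableGerm_of_comp_exp (M := L + L' - 2)
    (HadamardProduct.countable_of_finite_inter_closedBall 0 hfin) (Or.inl rfl)
    (HadamardProduct.radiusOf_mul_pos hf.1 hg.1) fun y hy ↦ ?_⟩
  exact HadamardProduct.continuableFrom_seriesSum_mul_comp_exp hΩclosed Set.subset_union_right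
    hφ hψ hLa hLb hy
end

section
/- Let f(ξ) = Σ_{n≥0} aₙξⁿ and g(ξ) = Σ_{n≥0} bₙξⁿ be power series with radii of convergence R_f > 0 and R_g > 0. For any ρ with 0 < ρ < R_f and any ξ ∈ ℂ with |ξ| < ρ·R_g, the Hadamard product satisfies f ⊙ g(ξ) = (1/(2πi)) ∮_{C_ρ} f(ζ) g(ξ/ζ) dζ/ζ, where C_ρ is the positively oriented circle of radius ρ centred at 0, parametrized by s ∈ [0,1] ↦ ζ = ρ e^{2πis}. -/
/-!
On `C_ρ` both series converge absolutely, uniformly in `ζ`, so `f(ζ) g(ξ/ζ) / ζ` is the uniformly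
convergent double series of the Laurent monomials `aₙ bₘ ξᵐ ζ^(n-m-1)` and may be integrated term
by term. Since `∮ ζ^k dζ` vanishes unless `k = -1`, only the diagonal `n = m` survives.
-/

open Metric Set
open scoped Real

theorem tsum_diagonal {ι M : Type*} [AddCommMonoid M] [TopologicalSpace M] [DecidableEq ι]
    (u : ι → M) : ∑' p : ι × ι, (if p.1 = p.2 then u p.1 else 0) = ∑' i, u i := by
  have diag_injective : Function.Injective fun i : ι => (i, i) := fun _ _ h => congrArg Prod.fst h
  have support_subset :
      (Function.support fun p : ι × ι => if p.1 = p.2 then u p.1 else 0) ⊆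
        range fun i : ι => (i, i) := by
    rintro ⟨i, j⟩ hij
    obtain rfl : i = j := by
      by_contra hne
      exact hij (if_neg hne)
    exact mem_range_self i
  simpa only [if_true] using (diag_injective.tsum_eq support_subset).symm

theorem inv_smul_pow_smul_mul_div_pow_smul {K A : Type*} [Field K] [Semiring A] [Algebra K A]
    {ζ : K} (hζ : ζ ≠ 0) (ξ : K) (n m : ℕ) (x y : A) :
    ζ⁻¹ • ((ζ ^ n • x) * ((ξ / ζ) ^ m • y)) = ζ ^ (n - m - 1 : ℤ) • ξ ^ m • (x * y) := by
  rw [smul_mul_smul_comm, smul_smul, smul_smul, zpow_sub₀ hζ, zpow_sub₀ hζ, div_pow]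
  congr 1
  simp only [zpow_natCast, zpow_one]
  field_simp

theorem summable_norm_mul_pow_of_lt_radiusOf {a : ℕ → ℂ} {r : ℝ} (hr : 0 ≤ r)
    (h : ENNReal.ofReal r < radiusOf a) : Summable fun n => ‖a n‖ * r ^ n := by
  lift r to NNReal using hr
  rw [ENNReal.ofReal_coe_nnreal] at h
  simpa only [FormalMultilinearSeries.ofScalars_norm] using
    (FormalMultilinearSeries.ofScalars ℂ a).summable_norm_mul_pow h

section CircleIntegral

variable {E : Type*} [NormedAddCommGroup E] [NormedSpace ℂ E] [CompleteSpace E]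

theorem hasSum_circleIntegral_of_summable_norm {ι : Type*} [Countable ι] {F : ι → ℂ → E}
    {c : ℂ} {R : ℝ} {u : ι → ℝ} (hF : ∀ i, CircleIntegrable (F i) c R) (hu : Summable u)
    (hFu : ∀ i, ∀ z ∈ sphere c |R|, ‖F i z‖ ≤ u i) :
    HasSum (fun i => ∮ z in C(c, R), F i z) (∮ z in C(c, R), ∑' i, F i z) := by
  refine intervalIntegral.hasSum_integral_of_dominated_convergence (fun i _ => |R| * u i)
    (fun i => (hF i).out.def'.aestronglyMeasurable) (fun i => .of_forall fun θ _ => ?_)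
    (.of_forall fun _ _ => hu.mul_left _) intervalIntegrable_const (.of_forall fun θ _ => ?_)
  · calc ‖deriv (circleMap c R) θ • F i (circleMap c R θ)‖
        = |R| * ‖F i (circleMap c R θ)‖ := by simp [norm_smul]
      _ ≤ |R| * u i := by gcongr; exact hFu i _ (circleMap_mem_sphere' c R θ)
  · have hsum : Summable fun i => F i (circleMap c R θ) :=
      .of_norm_bounded hu fun i => hFu i _ (circleMap_mem_sphere' c R θ)
    exact hsum.hasSum.const_smul _

theorem circleIntegral_sub_center_zpow_smul (c : ℂ) {R : ℝ} (hR : R ≠ 0) (k : ℤ) (x : E) :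
    (∮ z in C(c, R), (z - c) ^ k • x) = if k = -1 then (2 * π * Complex.I : ℂ) • x else 0 := by
  rw [circleIntegral.integral_smul_const]
  split_ifs with hk
  · simp only [hk, zpow_neg_one, circleIntegral.integral_sub_center_inv c hR]
  · rw [circleIntegral.integral_sub_zpow_of_ne hk, zero_smul]

end CircleIntegral

section HadamardProduct

variable {A : Type*} [NormedRing A] [NormedAlgebra ℂ A] [CompleteSpace A]

theorem circleIntegral_inv_smul_pow_smul_mul_div_pow_smul {ρ : ℝ} (hρ : 0 < ρ) (ξ : ℂ) (n m : ℕ)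
    (x y : A) :
    (∮ ζ in C(0, ρ), ζ⁻¹ • ((ζ ^ n • x) * ((ξ / ζ) ^ m • y))) =
      if n = m then (2 * π * Complex.I : ℂ) • ξ ^ n • (x * y) else 0 := by
  have monomial : EqOn (fun ζ : ℂ => ζ⁻¹ • ((ζ ^ n • x) * ((ξ / ζ) ^ m • y)))
      (fun ζ => (ζ - 0) ^ (n - m - 1 : ℤ) • ξ ^ m • (x * y)) (sphere 0 ρ) := fun ζ hζ => by
    simpa only [sub_zero] using
      inv_smul_pow_smul_mul_div_pow_smul (ne_of_mem_sphere hζ hρ.ne') ξ n m x y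
  rw [circleIntegral.integral_congr hρ.le monomial,
    circleIntegral_sub_center_zpow_smul 0 hρ.ne']
  have exponent_iff : (n - m - 1 : ℤ) = -1 ↔ n = m := by lia
  simp only [exponent_iff]
  split_ifs with hnm
  · rw [hnm]
  · rfl

theorem hasSum_circleIntegral_inv_smul_tsum_mul_tsum {a b : ℕ → A} {ρ : ℝ} (hρ : 0 < ρ) {ξ : ℂ}
    (ha : Summable fun n => ‖a n‖ * ρ ^ n) (hb : Summable fun n => ‖b n‖ * (‖ξ‖ / ρ) ^ n) :
    HasSum
      (fun p : ℕ × ℕ => ∮ ζ in C(0, ρ), ζ⁻¹ • ((ζ ^ p.1 • a p.1) * ((ξ / ζ) ^ p.2 • b p.2)))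
      (∮ ζ in C(0, ρ), ζ⁻¹ • ((∑' n, ζ ^ n • a n) * ∑' n, (ξ / ζ) ^ n • b n)) := by
  have norm_left {ζ : ℂ} (hζ : ζ ∈ sphere 0 ρ) (n : ℕ) : ‖ζ ^ n • a n‖ = ‖a n‖ * ρ ^ n := by
    rw [norm_smul, norm_pow, mem_sphere_zero_iff_norm.mp hζ, mul_comm]
  have norm_right {ζ : ℂ} (hζ : ζ ∈ sphere 0 ρ) (n : ℕ) :
      ‖(ξ / ζ) ^ n • b n‖ = ‖b n‖ * (‖ξ‖ / ρ) ^ n := by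
    rw [norm_smul, norm_pow, norm_div, mem_sphere_zero_iff_norm.mp hζ, mul_comm]
  have product_eq : EqOn
      (fun ζ : ℂ => ζ⁻¹ • ((∑' n, ζ ^ n • a n) * ∑' n, (ξ / ζ) ^ n • b n))
      (fun ζ => ∑' p : ℕ × ℕ, ζ⁻¹ • ((ζ ^ p.1 • a p.1) * ((ξ / ζ) ^ p.2 • b p.2)))
      (sphere 0 ρ) := fun ζ hζ => by
    have hf : Summable fun n => ‖ζ ^ n • a n‖ := by simpa only [norm_left hζ] using ha
    have hg : Summable fun n => ‖(ξ / ζ) ^ n • b n‖ := by simpa only [norm_right hζ] using hb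
    simp only [tsum_mul_tsum_of_summable_norm hf hg,
      (summable_mul_of_summable_norm hf hg).tsum_const_smul]
  rw [circleIntegral.integral_congr hρ.le product_eq]
  refine hasSum_circleIntegral_of_summable_norm (fun p => ?_)
    ((ha.mul_of_nonneg hb (fun n => by positivity) fun n => by positivity).mul_left ρ⁻¹)
    fun p ζ hζ => ?_
  · have ne_zero : ∀ ζ ∈ sphere (0 : ℂ) ρ, ζ ≠ 0 := fun ζ hζ => ne_of_mem_sphere hζ hρ.ne'
    exact ContinuousOn.circleIntegrable hρ.le (by fun_prop (disch := assumption))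
  · rw [abs_of_pos hρ] at hζ
    rw [norm_smul, norm_inv, mem_sphere_zero_iff_norm.mp hζ, ← norm_left hζ, ← norm_right hζ]
    gcongr
    exact norm_mul_le _ _

theorem hadamard_circle_integral_general {a b : ℕ → A} {ρ : ℝ} (hρ : 0 < ρ) {ξ : ℂ}
    (ha : Summable fun n => ‖a n‖ * ρ ^ n) (hb : Summable fun n => ‖b n‖ * (‖ξ‖ / ρ) ^ n) :
    ∑' n, ξ ^ n • (a n * b n) = (2 * π * Complex.I : ℂ)⁻¹ •
      ∮ ζ in C(0, ρ), ζ⁻¹ • ((∑' n, ζ ^ n • a n) * ∑' n, (ξ / ζ) ^ n • b n) := by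
  rw [eq_inv_smul_iff₀ Complex.two_pi_I_ne_zero]
  calc (2 * π * Complex.I : ℂ) • ∑' n, ξ ^ n • (a n * b n)
      = ∑' n, (2 * π * Complex.I : ℂ) • ξ ^ n • (a n * b n) := (tsum_const_smul'' _).symm
    _ = ∑' p : ℕ × ℕ,
          if p.1 = p.2 then (2 * π * Complex.I : ℂ) • ξ ^ p.1 • (a p.1 * b p.1) else 0 :=
        (tsum_diagonal _).symm
    _ = ∑' p : ℕ × ℕ,
          ∮ ζ in C(0, ρ), ζ⁻¹ • ((ζ ^ p.1 • a p.1) * ((ξ / ζ) ^ p.2 • b p.2)) := by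
        refine tsum_congr fun ⟨n, m⟩ => ?_
        rw [circleIntegral_inv_smul_pow_smul_mul_div_pow_smul hρ]
        split_ifs with hnm
        · rw [hnm]
        · rfl
    _ = _ := (hasSum_circleIntegral_inv_smul_tsum_mul_tsum hρ ha hb).tsum_eq

end HadamardProduct

/-- The classical integral representation of the Hadamard product: for `0 < ρ < R_f` and
`|ξ| < ρ·R_g`, one has `f ⊙ g (ξ) = (1/(2πi)) ∮_{C_ρ} f(ζ) g(ξ/ζ) dζ/ζ` where `C_ρ` is
the positively oriented circle of radius `ρ` centred at `0`. -/
theorem hadamard_circle_integral (a b : ℕ → ℂ)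
    (ha : 0 < radiusOf a) (hb : 0 < radiusOf b)
    (ρ : ℝ) (hρ0 : 0 < ρ) (hρ : ENNReal.ofReal ρ < radiusOf a)
    (ξ : ℂ) (hξ : (‖ξ‖₊ : ENNReal) < ENNReal.ofReal ρ * radiusOf b) :
    seriesSum (fun n => a n * b n) ξ =
      (2 * (Real.pi : ℂ) * Complex.I)⁻¹ *
        circleIntegral (fun ζ => seriesSum a ζ * seriesSum b (ξ / ζ) / ζ) 0 ρ := by
  have hξρ : ENNReal.ofReal (‖ξ‖ / ρ) < radiusOf b := by
    rw [ENNReal.ofReal_div_of_pos hρ0, ofReal_norm]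
    exact ENNReal.div_lt_of_lt_mul' hξ
  simpa only [seriesSum, smul_eq_mul, mul_comm, div_eq_mul_inv] using
    hadamard_circle_integral_general hρ0 (summable_norm_mul_pow_of_lt_radiusOf hρ0.le hρ)
      (summable_norm_mul_pow_of_lt_radiusOf (by positivity) hξρ)
end

section
/- Let A and B be non-empty closed discrete subsets of ℂ, A' := A∖{0}, B' := B∖{0}, Ω := {0} ∪ (A'·B'), and let γ : [0,1] → ℂ∖Ω be a C¹ path whose derivative γ' is Lipschitz. Suppose c : [0,1] × ℂ → ℂ is locally Lipschitz, satisfies |c(t,ζ)| ≤ K|ζ| for some K > 0, and satisfies: c(t,α) = 0 for all t ∈ [0,1] and α ∈ {0} ∪ A', and c(t, γ(t)/β) = 1/β for all t ∈ [0,1] and β ∈ B'. Then the flow maps Ψ_t := Φ^{0,t} of the non-autonomous vector field X(t,z) := c(t,z)γ'(t) form a deformation of the identity adapted to γ: each Ψ_t is a (locally Lipschitz) homeomorphism of ℂ, Ψ₀ = Id_ℂ, Ψ_t(α) = α for all α ∈ {0} ∪ A' and t ∈ [0,1], and Ψ_t(γ(0)/β) = γ(t)/β for all β ∈ B' and t ∈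 [0,1]. -/
open scoped Pointwise

/-!
Put `X(t, z) = c(t, z) γ'(t)`. On bounded sets `X` is Lipschitz uniformly in `t`, and
`‖X(t, z)‖ ≤ M ‖z‖`. By Grönwall's inequality, run both forwards and backwards in time, a solution
stays in a ball determined by its value at any single time, and the distance between two solutions
changes by at most a bounded factor there. Hence `Ψ_t` is locally Lipschitz, and so is `Ψ_t⁻¹` as
soon as `Ψ_t` is onto. Since `X` is bounded by `2 M ‖w‖` on the ball of radius `‖w‖` about `w`, the
Picard-Lindelöf theorem solves the Cauchy problem on time intervals whose length does not depend on
`w`; stepping backwards from time `t` gives surjectivity. Finally, the constant paths at `α` and the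
paths `t ↦ γ(t) / β` are solutions, so the flow follows them.
-/

section Flow

open Set Metric
open scoped NNReal

variable {E : Type*} [NormedAddCommGroup E]

/-- A time-dependent vector field whose Cauchy problem is globally well posed over the times `s`.
The Lipschitz condition is imposed on balls, uniformly in time, which is more than being locally
Lipschitz in infinite dimension. -/
structure IsLinearGrowthField (X : ℝ → E → E) (s : Set ℝ) : Prop where
  continuousOn : ∀ z, ContinuousOn (X · z) s
  exists_lipschitzOnWith : ∀ r, ∃ K, ∀ t ∈ s, LipschitzOnWith K (X t) (closedBall 0 r)
  exists_norm_le : ∃ M : ℝ≥0, ∀ t ∈ s, ∀ z, ‖X t z‖ ≤ M * ‖z‖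

namespace IsLinearGrowthField

variable {X : ℝ → E → E} {s : Set ℝ}

theorem of_locallyLipschitzOn [ProperSpace E] (hs : IsCompact s)
    (hlip : LocallyLipschitzOn (s ×ˢ univ) fun p : ℝ × E ↦ X p.1 p.2) {M : ℝ}
    (hM : ∀ t ∈ s, ∀ z, ‖X t z‖ ≤ M * ‖z‖) : IsLinearGrowthField X s where
  continuousOn z := hlip.continuousOn.comp (f := fun t ↦ (t, z)) (by fun_prop) fun _ ht ↦
    ⟨ht, mem_univ z⟩
  exists_lipschitzOnWith r := by
    have hlip_ball := hlip.mono (prod_mono_right (subset_univ (closedBall 0 r)))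
    obtain ⟨K, hK⟩ :=
      hlip_ball.exists_lipschitzOnWith_of_compact (hs.prod (isCompact_closedBall 0 r))
    refine ⟨K, fun t ht z hz w hw ↦ ?_⟩
    simpa [Prod.edist_eq] using hK (mk_mem_prod ht hz) (mk_mem_prod ht hw)
  exists_norm_le := ⟨M.toNNReal, fun t ht z ↦ (hM t ht z).trans <| by
    gcongr; exact M.le_coe_toNNReal⟩

theorem smul {𝕜 : Type*} [NormedField 𝕜] [NormedSpace 𝕜 E] (hX : IsLinearGrowthField X s)
    (hs : IsCompact s) {φ : ℝ → 𝕜} (hφ : ContinuousOn φ s) :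
    IsLinearGrowthField (fun t z ↦ φ t • X t z) s := by
  obtain ⟨G, hG⟩ : ∃ G : ℝ≥0, ∀ t ∈ s, ‖φ t‖₊ ≤ G := by
    obtain ⟨G, hG⟩ := hs.exists_bound_of_continuousOn hφ
    exact ⟨G.toNNReal, fun t ht ↦ NNReal.le_toNNReal_of_coe_le (hG t ht)⟩
  refine ⟨fun z ↦ hφ.smul (hX.continuousOn z), fun r ↦ ?_, ?_⟩
  · obtain ⟨K, hK⟩ := hX.exists_lipschitzOnWith r
    refine ⟨G * K, fun t ht ↦ ?_⟩
    exact ((lipschitzWith_smul (φ t)).comp_lipschitzOnWith (hK t ht)).weaken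
      (mul_le_mul_left (hG t ht) K)
  · obtain ⟨M, hM⟩ := hX.exists_norm_le
    refine ⟨G * M, fun t ht z ↦ ?_⟩
    rw [norm_smul, NNReal.coe_mul, mul_assoc]
    exact mul_le_mul (hG t ht) (hM t ht z) (norm_nonneg _) G.coe_nonneg

theorem mono {s' : Set ℝ} (hX : IsLinearGrowthField X s) (hs : s' ⊆ s) :
    IsLinearGrowthField X s' where
  continuousOn z := (hX.continuousOn z).mono hs
  exists_lipschitzOnWith r :=
    (hX.exists_lipschitzOnWith r).imp fun _ hK t ht ↦ hK t (hs ht)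
  exists_norm_le := hX.exists_norm_le.imp fun _ hM t ht ↦ hM t (hs ht)

end IsLinearGrowthField

variable [NormedSpace ℝ E] {a b : ℝ}

section Gronwall

variable {f f' : ℝ → E} {M : ℝ}

theorem norm_right_le_norm_left_mul_exp (hab : a ≤ b)
    (hf : ∀ s ∈ Icc a b, HasDerivWithinAt f (f' s) (Icc a b) s)
    (hM : ∀ s ∈ Icc a b, ‖f' s‖ ≤ M * ‖f s‖) :
    ‖f b‖ ≤ ‖f a‖ * Real.exp (M * (b - a)) := by
  have h := norm_le_gronwallBound_of_norm_deriv_right_le (ε := 0)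
    (fun s hs ↦ (hf s hs).continuousWithinAt)
    (fun s hs ↦ (hf s (Ico_subset_Icc_self hs)).mono_of_mem_nhdsWithin (Icc_mem_nhdsGE_of_mem hs))
    le_rfl (fun s hs ↦ by simpa using hM s (Ico_subset_Icc_self hs)) b (right_mem_Icc.2 hab)
  rwa [gronwallBound_ε0] at h

theorem norm_left_le_norm_right_mul_exp (hab : a ≤ b)
    (hf : ∀ s ∈ Icc a b, HasDerivWithinAt f (f' s) (Icc a b) s)
    (hM : ∀ s ∈ Icc a b, ‖f' s‖ ≤ M * ‖f s‖) :
    ‖f a‖ ≤ ‖f b‖ * Real.exp (M * (b - a)) := by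
  have hneg : MapsTo Neg.neg (Icc (-b) (-a)) (Icc a b) := fun s hs ↦
    ⟨le_neg_of_le_neg hs.2, neg_le_of_neg_le hs.1⟩
  have hderiv : ∀ s ∈ Icc (-b) (-a),
      HasDerivWithinAt (fun s ↦ f (-s)) (-f' (-s)) (Icc (-b) (-a)) s := fun s hs ↦ by
    simpa [Function.comp_def] using
      (hf _ (hneg hs)).scomp s (hasDerivAt_neg s).hasDerivWithinAt hneg
  have h := norm_right_le_norm_left_mul_exp (neg_le_neg hab) hderiv
    fun s hs ↦ by simpa using hM _ (hneg hs)
  simpa [neg_add_eq_sub] using h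

theorem norm_le_norm_mul_exp_abs_sub
    (hf : ∀ s ∈ Icc a b, HasDerivWithinAt f (f' s) (Icc a b) s)
    (hM : ∀ s ∈ Icc a b, ‖f' s‖ ≤ M * ‖f s‖) {s t : ℝ} (hs : s ∈ Icc a b) (ht : t ∈ Icc a b) :
    ‖f t‖ ≤ ‖f s‖ * Real.exp (M * |t - s|) := by
  rcases le_total s t with hst | hts
  · have hsub := Icc_subset_Icc hs.1 ht.2
    rw [abs_of_nonneg (sub_nonneg.2 hst)]
    exact norm_right_le_norm_left_mul_exp hst (fun u hu ↦ (hf u (hsub hu)).mono hsub)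
      fun u hu ↦ hM u (hsub hu)
  · have hsub := Icc_subset_Icc ht.1 hs.2
    rw [abs_sub_comm, abs_of_nonneg (sub_nonneg.2 hts)]
    exact norm_left_le_norm_right_mul_exp hts (fun u hu ↦ (hf u (hsub hu)).mono hsub)
      fun u hu ↦ hM u (hsub hu)

end Gronwall

/-- `Ψ t` is the flow map `Φ^{a,t}` of the vector field `X`, for `t ∈ [a, b]`. -/
def IsFlowOn (Ψ : ℝ → E → E) (X : ℝ → E → E) (a b : ℝ) : Prop :=
  ∀ z, Ψ a z = z ∧ IsIntegralCurveOn (fun t ↦ Ψ t z) X (Icc a b)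

namespace IsLinearGrowthField

variable {X : ℝ → E → E} {s : Set ℝ}

theorem exists_norm_integralCurve_le (hX : IsLinearGrowthField X (Icc a b)) :
    ∃ C : ℝ≥0, ∀ f, IsIntegralCurveOn f X (Icc a b) →
      ∀ s ∈ Icc a b, ∀ t ∈ Icc a b, ‖f t‖ ≤ C * ‖f s‖ := by
  obtain ⟨M, hM⟩ := hX.exists_norm_le
  refine ⟨.mk (Real.exp (M * (b - a))) (Real.exp_nonneg _), fun f hf s hs t ht ↦ ?_⟩
  rw [mul_comm]
  refine (norm_le_norm_mul_exp_abs_sub hf (fun u hu ↦ hM u hu _) hs ht).trans ?_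
  rw [NNReal.coe_mk]
  gcongr
  exact abs_sub_le_of_le_of_le ht.1 ht.2 hs.1 hs.2

theorem exists_dist_integralCurve_le (hX : IsLinearGrowthField X (Icc a b)) (r : ℝ) :
    ∃ C : ℝ≥0, ∀ f g, IsIntegralCurveOn f X (Icc a b) → IsIntegralCurveOn g X (Icc a b) →
      ∀ s ∈ Icc a b, ‖f s‖ ≤ r → ‖g s‖ ≤ r → ∀ t ∈ Icc a b,
        dist (f t) (g t) ≤ C * dist (f s) (g s) := by
  obtain ⟨C, hC⟩ := hX.exists_norm_integralCurve_le
  obtain ⟨K, hK⟩ := hX.exists_lipschitzOnWith (C * r)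
  refine ⟨.mk (Real.exp (K * (b - a))) (Real.exp_nonneg _),
    fun f g hf hg s hs hfs hgs t ht ↦ ?_⟩
  have hball : ∀ h, IsIntegralCurveOn h X (Icc a b) → ‖h s‖ ≤ r →
      ∀ u ∈ Icc a b, h u ∈ closedBall 0 (C * r) := fun h hh hhs u hu ↦
    mem_closedBall_zero_iff.2 ((hC h hh s hs u hu).trans (by gcongr))
  have hbound : ∀ u ∈ Icc a b, ‖X u (f u) - X u (g u)‖ ≤ K * ‖f u - g u‖ := fun u hu ↦
    (hK u hu).norm_sub_le (hball f hf hfs u hu) (hball g hg hgs u hu)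
  rw [dist_eq_norm, dist_eq_norm, mul_comm, NNReal.coe_mk]
  refine (norm_le_norm_mul_exp_abs_sub (fun u hu ↦ (hf u hu).sub (hg u hu)) hbound hs ht).trans ?_
  simp only [Pi.sub_apply]
  gcongr
  exact abs_sub_le_of_le_of_le ht.1 ht.2 hs.1 hs.2

theorem eqOn_integralCurve (hX : IsLinearGrowthField X (Icc a b)) {f g : ℝ → E}
    (hf : IsIntegralCurveOn f X (Icc a b)) (hg : IsIntegralCurveOn g X (Icc a b)) {s : ℝ}
    (hs : s ∈ Icc a b) (hfg : f s = g s) : EqOn f g (Icc a b) := by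
  intro t ht
  obtain ⟨C, hC⟩ := hX.exists_dist_integralCurve_le ‖f s‖
  simpa [hfg] using hC f g hf hg s hs le_rfl (by rw [hfg]) t ht

theorem locallyLipschitz_integralCurve_apply (hX : IsLinearGrowthField X (Icc a b))
    {F : E → ℝ → E} (hF : ∀ z, IsIntegralCurveOn (F z) X (Icc a b)) {s t : ℝ}
    (hs : s ∈ Icc a b) (hFs : ∀ z, F z s = z) (ht : t ∈ Icc a b) :
    LocallyLipschitz fun z ↦ F z t := by
  intro x
  obtain ⟨C, hC⟩ := hX.exists_dist_integralCurve_le (‖x‖ + 1)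
  refine ⟨C, closedBall x 1, closedBall_mem_nhds x one_pos,
    LipschitzOnWith.of_dist_le_mul fun y hy z hz ↦ ?_⟩
  have hnorm : ∀ w ∈ closedBall x 1, ‖F w s‖ ≤ ‖x‖ + 1 := fun w hw ↦ by
    rw [hFs]
    exact norm_le_of_mem_closedBall hw
  simpa only [hFs] using hC _ _ (hF y) (hF z) s hs (hnorm y hy) (hnorm z hz) t ht

theorem exists_integralCurve_of_sub_le [CompleteSpace E] (hX : IsLinearGrowthField X s) :
    ∃ δ > 0, ∀ u v, v - u ≤ δ → Icc u v ⊆ s → ∀ t₀ ∈ Icc u v, ∀ w,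
      ∃ f, f t₀ = w ∧ IsIntegralCurveOn f X (Icc u v) := by
  obtain ⟨M, hM⟩ := hX.exists_norm_le
  refine ⟨1 / (2 * M + 1), by positivity, fun u v huv hsub t₀ ht₀ w ↦ ?_⟩
  obtain ⟨K, hK⟩ := hX.exists_lipschitzOnWith (‖w‖ + ‖w‖)
  have hnorm : ∀ z ∈ closedBall w ‖w‖, ‖z‖ ≤ ‖w‖ + ‖w‖ := fun z hz ↦
    norm_le_of_mem_closedBall hz
  have hstep : 2 * M * (v - u) ≤ 1 := by
    rw [le_div_iff₀ (by positivity)] at huv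
    linarith [ht₀.1.trans ht₀.2]
  have hpicard : IsPicardLindelof X ⟨t₀, ht₀⟩ w ‖w‖₊ 0 (M * (‖w‖₊ + ‖w‖₊)) K := {
    lipschitzOnWith := fun t ht ↦ (hK t (hsub ht)).mono fun z hz ↦
      mem_closedBall_zero_iff.2 (hnorm z hz)
    continuousOn := fun z _ ↦ (hX.continuousOn z).mono hsub
    norm_le := fun t ht z hz ↦ (hM t (hsub ht) z).trans <| by
      push_cast; gcongr; exact hnorm z hz
    mul_max_le := by
      have hmax : max (v - t₀) (t₀ - u) ≤ v - u :=
        max_le (sub_le_sub_left ht₀.1 v) (sub_le_sub_right ht₀.2 u)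
      push_cast
      calc M * (‖w‖ + ‖w‖) * max (v - t₀) (t₀ - u) ≤ M * (‖w‖ + ‖w‖) * (v - u) := by gcongr
        _ = ‖w‖ * (2 * M * (v - u)) := by ring
        _ ≤ ‖w‖ - 0 := by
          rw [sub_zero]; exact mul_le_of_le_one_right (norm_nonneg w) hstep }
  exact hpicard.exists_eq_forall_mem_Icc_hasDerivWithinAt₀

end IsLinearGrowthField

namespace IsFlowOn

variable {Ψ X : ℝ → E → E} {t : ℝ}

theorem apply_eq (hΨ : IsFlowOn Ψ X a b) (hX : IsLinearGrowthField X (Icc a b)) {f : ℝ → E}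
    (hf : IsIntegralCurveOn f X (Icc a b)) (ht : t ∈ Icc a b) : Ψ t (f a) = f t :=
  hX.eqOn_integralCurve (hΨ (f a)).2 hf (left_mem_Icc.2 (ht.1.trans ht.2)) (hΨ (f a)).1 ht

theorem locallyLipschitz (hΨ : IsFlowOn Ψ X a b) (hX : IsLinearGrowthField X (Icc a b))
    (ht : t ∈ Icc a b) : LocallyLipschitz (Ψ t) :=
  hX.locallyLipschitz_integralCurve_apply (fun z ↦ (hΨ z).2)
    (left_mem_Icc.2 (ht.1.trans ht.2)) (fun z ↦ (hΨ z).1) ht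

theorem injective (hΨ : IsFlowOn Ψ X a b) (hX : IsLinearGrowthField X (Icc a b))
    (ht : t ∈ Icc a b) : Function.Injective (Ψ t) := by
  intro z w hzw
  rw [← (hΨ z).1, ← (hΨ w).1]
  exact hX.eqOn_integralCurve (hΨ z).2 (hΨ w).2 ht hzw (left_mem_Icc.2 (ht.1.trans ht.2))

theorem surjective [CompleteSpace E] (hΨ : IsFlowOn Ψ X a b)
    (hX : IsLinearGrowthField X (Icc a b)) (ht : t ∈ Icc a b) : Function.Surjective (Ψ t) := by
  obtain ⟨δ, hδ, hsolve⟩ := hX.exists_integralCurve_of_sub_le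
  obtain ⟨n, hn⟩ := Archimedean.arch (t - a) hδ
  induction n generalizing t with
  | zero =>
    obtain rfl : t = a := le_antisymm (by simpa using hn) ht.1
    exact fun w ↦ ⟨w, (hΨ w).1⟩
  | succ n ih =>
    intro w
    set u := max a (t - δ)
    have hut : u ≤ t := max_le ht.1 (sub_le_self t hδ.le)
    have hu : u ∈ Icc a b := ⟨le_max_left _ _, hut.trans ht.2⟩
    have hsub : Icc u t ⊆ Icc a b := Icc_subset_Icc hu.1 ht.2
    obtain ⟨f, rfl, hf⟩ :=
      hsolve u t (sub_le_comm.1 (le_max_right _ _)) hsub t (right_mem_Icc.2 hut) w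
    have hun : u - a ≤ n • δ := by
      rw [succ_nsmul] at hn
      rw [sub_le_iff_le_add]
      exact max_le (le_add_of_nonneg_left (nsmul_nonneg hδ.le n)) (by linarith)
    obtain ⟨z, hz⟩ := ih hu hun (f u)
    exact ⟨z, (hX.mono hsub).eqOn_integralCurve ((hΨ z).2.mono hsub) hf
      (left_mem_Icc.2 hut) hz (right_mem_Icc.2 hut)⟩

theorem isHomeomorph [CompleteSpace E] (hΨ : IsFlowOn Ψ X a b)
    (hX : IsLinearGrowthField X (Icc a b)) (ht : t ∈ Icc a b) : IsHomeomorph (Ψ t) := by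
  have hright := Function.rightInverse_surjInv (hΨ.surjective hX ht)
  set σ := Function.surjInv (hΨ.surjective hX ht)
  -- Indexing the integral curves by their value at time `t` turns evaluation at `a` into `Ψ t⁻¹`.
  have hσ : LocallyLipschitz fun w ↦ Ψ a (σ w) :=
    hX.locallyLipschitz_integralCurve_apply (fun w ↦ (hΨ (σ w)).2) ht hright
      (left_mem_Icc.2 (ht.1.trans ht.2))
  simp only [fun w ↦ (hΨ (σ w)).1] at hσ
  exact isHomeomorph_iff_exists_inverse.2 ⟨(hΨ.locallyLipschitz hX ht).continuous, σ,
    hright.leftInverse_of_injective (hΨ.injective hX ht), hright, hσ.continuous⟩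

end IsFlowOn

end Flow

theorem deformation_of_identity_from_flow_general {𝕜 : Type*} [RCLike 𝕜] (A B : Set 𝕜) {a b : ℝ}
    (γ γ' : ℝ → 𝕜)
    (hγ : ∀ t ∈ Set.Icc a b, HasDerivWithinAt γ (γ' t) (Set.Icc a b) t)
    (hγ' : ContinuousOn γ' (Set.Icc a b)) (c : ℝ → 𝕜 → 𝕜) (K : ℝ)
    (hlip : LocallyLipschitzOn (Set.Icc a b ×ˢ Set.univ) fun p : ℝ × 𝕜 ↦ c p.1 p.2)
    (hbound : ∀ t ∈ Set.Icc a b, ∀ z, ‖c t z‖ ≤ K * ‖z‖)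
    (hA : ∀ t ∈ Set.Icc a b, ∀ α ∈ ({0} : Set 𝕜) ∪ A \ {0}, c t α = 0)
    (hB : ∀ t ∈ Set.Icc a b, ∀ β ∈ B \ ({0} : Set 𝕜), c t (γ t / β) = 1 / β)
    (Ψ : ℝ → 𝕜 → 𝕜) (hΨ : IsFlowOn Ψ (fun t z ↦ c t z * γ' t) a b) :
    (∀ t ∈ Set.Icc a b, LocallyLipschitz (Ψ t) ∧ IsHomeomorph (Ψ t)) ∧
    (Ψ a = id) ∧
    (∀ t ∈ Set.Icc a b, ∀ α ∈ ({0} : Set 𝕜) ∪ A \ {0}, Ψ t α = α) ∧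
    (∀ t ∈ Set.Icc a b, ∀ β ∈ B \ ({0} : Set 𝕜), Ψ t (γ a / β) = γ t / β) := by
  have hX : IsLinearGrowthField (fun t z ↦ c t z * γ' t) (Set.Icc a b) := by
    simpa only [smul_eq_mul, mul_comm] using
      (IsLinearGrowthField.of_locallyLipschitzOn isCompact_Icc hlip hbound).smul isCompact_Icc hγ'
  have hconst : ∀ α ∈ ({0} : Set 𝕜) ∪ A \ {0},
      IsIntegralCurveOn (fun _ ↦ α) (fun t z ↦ c t z * γ' t) (Set.Icc a b) := fun α hα t ht ↦ by
    simpa [hA t ht α hα] using hasDerivWithinAt_const t (Set.Icc a b) α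
  have hquot : ∀ β ∈ B \ ({0} : Set 𝕜),
      IsIntegralCurveOn (fun t ↦ γ t / β) (fun t z ↦ c t z * γ' t) (Set.Icc a b) :=
    fun β hβ t ht ↦ by
      simpa only [hB t ht β hβ, one_div_mul_eq_div] using (hγ t ht).div_const β
  exact ⟨fun t ht ↦ ⟨hΨ.locallyLipschitz hX ht, hΨ.isHomeomorph hX ht⟩, funext fun z ↦ (hΨ z).1,
    fun t ht α hα ↦ hΨ.apply_eq hX (hconst α hα) ht,
    fun t ht β hβ ↦ hΨ.apply_eq hX (hquot β hβ) ht⟩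

/-- **Corollary 3.2.** Let `A`, `B` be non-empty closed discrete subsets of `ℂ`,
`A' := A ∖ {0}`, `B' := B ∖ {0}`, `Ω := {0} ∪ A'·B'`, and let `γ : [0,1] → ℂ ∖ Ω` be a `C¹`
path with Lipschitz derivative `γ'`. Suppose `c : [0,1] × ℂ → ℂ` is locally Lipschitz,
satisfies `|c(t,ζ)| ≤ K|ζ|` for some `K > 0`, vanishes at points of `{0} ∪ A'`, and
satisfies `c(t, γ(t)/β) = 1/β` for `β ∈ B'`. Then the flow maps `Ψ_t := Φ^{0,t}` of the
vector field `X(t,z) := c(t,z)·γ'(t)` form a deformation of the identity adapted to `γ`: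
each `Ψ_t` is a locally Lipschitz homeomorphism of `ℂ`, `Ψ₀ = Id`, `Ψ_t` fixes every point
of `{0} ∪ A'`, and `Ψ_t(γ(0)/β) = γ(t)/β` for every `β ∈ B'`. -/
theorem deformation_of_identity_from_flow
    (A B : Set ℂ) (hA : A.Nonempty) (hB : B.Nonempty)
    (hAclosed : IsClosed A) (hBclosed : IsClosed B)
    (hAdisc : DiscreteTopology A) (hBdisc : DiscreteTopology B)
    (γ γ' : ℝ → ℂ)
    (hγderiv : ∀ t ∈ Set.Icc (0:ℝ) 1, HasDerivWithinAt γ (γ' t) (Set.Icc (0:ℝ) 1) t)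
    (L : NNReal) (hγ'lip : LipschitzOnWith L γ' (Set.Icc 0 1))
    (hγΩ : ∀ t ∈ Set.Icc (0:ℝ) 1, γ t ∉ ({0} ∪ (A \ {0}) * (B \ {0}) : Set ℂ))
    (c : ℝ → ℂ → ℂ) (K : ℝ) (hK : 0 < K)
    (hclip : LocallyLipschitzOn ((Set.Icc (0:ℝ) 1) ×ˢ (Set.univ : Set ℂ))
      (fun p : ℝ × ℂ => c p.1 p.2))
    (hcbound : ∀ t ∈ Set.Icc (0:ℝ) 1, ∀ ζ : ℂ, ‖c t ζ‖ ≤ K * ‖ζ‖)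
    (hcA : ∀ t ∈ Set.Icc (0:ℝ) 1, ∀ α ∈ ({0} : Set ℂ) ∪ A \ {0}, c t α = 0)
    (hcB : ∀ t ∈ Set.Icc (0:ℝ) 1, ∀ β ∈ B \ ({0} : Set ℂ), c t (γ t / β) = 1 / β)
    (Ψ : ℝ → ℂ → ℂ)
    (hΨ : ∀ ζ₀ : ℂ, Ψ 0 ζ₀ = ζ₀ ∧
      ∀ t ∈ Set.Icc (0:ℝ) 1,
        HasDerivWithinAt (fun s => Ψ s ζ₀) (c t (Ψ t ζ₀) * γ' t) (Set.Icc (0:ℝ) 1) t) :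
    (∀ t ∈ Set.Icc (0:ℝ) 1, LocallyLipschitz (Ψ t) ∧ IsHomeomorph (Ψ t)) ∧
    (Ψ 0 = id) ∧
    (∀ t ∈ Set.Icc (0:ℝ) 1, ∀ α ∈ ({0} : Set ℂ) ∪ A \ {0}, Ψ t α = α) ∧
    (∀ t ∈ Set.Icc (0:ℝ) 1, ∀ β ∈ B \ ({0} : Set ℂ), Ψ t (γ 0 / β) = γ t / β) := by
  exact deformation_of_identity_from_flow_general A B γ γ' hγderiv hγ'lip.continuousOn c K hclip
    hcbound hcA hcB Ψ hΨ
end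

section
/- Let A and B be non-empty closed discrete subsets of ℂ, A' := A∖{0}, B' := B∖{0}, a := min{|α| : α ∈ A'}. Let γ : [0,1] → ℂ be a path and δ, M > 0 be such that for every t ∈ [0,1]: δ ≤ |γ(t)| ≤ M and |γ(t) − αβ| ≥ δ for all (α,β) ∈ A × B. If ε > 0 satisfies ε < a/2 and aδ/ε > M + (2M/a)ε, then for every β ∈ B' and every t ∈ [0,1], the distance from γ(t)/β to the set A' is at least ε. -/
/-!
Put `r := ‖z / β - α‖`. Separation of `z` from `α * β` gives `δ ≤ r * ‖β‖`, so
`‖z / β‖ * δ ≤ ‖z‖ * r`; multiplying `‖α‖ ≤ ‖z / β‖ + r` by `δ` then eliminates `β` and leaves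
`‖α‖ * δ ≤ (‖z‖ + δ) * r`. Hence `z / β` is at distance at least `a * δ / (M + δ)` from the points
of norm at least `a`. That `ε` lies below this number comes from `1 / (1 - x) ≤ 1 + 2 * x` for
`0 ≤ x ≤ 1 / 2`, at `x = ε / a`.
-/

section NormedDivisionRing

variable {K : Type*} [NormedDivisionRing K] {z β : K} {δ : ℝ}

theorem norm_sub_mul_eq_norm_div_sub_mul_norm (z α : K) (hβ : β ≠ 0) :
    ‖z - α * β‖ = ‖z / β - α‖ * ‖β‖ := by
  rw [← norm_mul, sub_mul, div_mul_cancel₀ z hβ]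

theorem norm_mul_le_add_mul_norm_div_sub {α : K} (hβ : β ≠ 0) (hδ : 0 ≤ δ)
    (hsep : δ ≤ ‖z - α * β‖) : ‖α‖ * δ ≤ (‖z‖ + δ) * ‖z / β - α‖ := by
  have hz : ‖z / β‖ * δ ≤ ‖z‖ * ‖z / β - α‖ :=
    calc ‖z / β‖ * δ ≤ ‖z / β‖ * (‖z / β - α‖ * ‖β‖) := by
          rw [← norm_sub_mul_eq_norm_div_sub_mul_norm z α hβ]
          gcongr
      _ = ‖z / β * β‖ * ‖z / β - α‖ := by rw [norm_mul]; ring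
      _ = ‖z‖ * ‖z / β - α‖ := by rw [div_mul_cancel₀ z hβ]
  calc ‖α‖ * δ ≤ (‖z / β‖ + ‖z / β - α‖) * δ := by
        gcongr
        exact norm_le_norm_add_norm_sub (z / β) α
    _ = ‖z / β‖ * δ + δ * ‖z / β - α‖ := by ring
    _ ≤ ‖z‖ * ‖z / β - α‖ + δ * ‖z / β - α‖ := by gcongr
    _ = (‖z‖ + δ) * ‖z / β - α‖ := by ring

theorem dist_to_A'_ge_eps_general {S : Set K} {a M : ℝ} (hS : S.Nonempty)
    (ha : ∀ α ∈ S, a ≤ ‖α‖) (hβ : β ≠ 0) (hδ : 0 < δ) (hz : ‖z‖ ≤ M)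
    (hsep : ∀ α ∈ S, δ ≤ ‖z - α * β‖) :
    a * δ / (M + δ) ≤ Metric.infDist (z / β) S := by
  refine (Metric.le_infDist hS).2 fun α hα => ?_
  have hM : 0 ≤ M := (norm_nonneg z).trans hz
  rw [dist_eq_norm, div_le_iff₀' (by positivity)]
  calc a * δ ≤ ‖α‖ * δ := by gcongr; exact ha α hα
    _ ≤ (‖z‖ + δ) * ‖z / β - α‖ := norm_mul_le_add_mul_norm_div_sub hβ hδ.le (hsep α hα)
    _ ≤ (M + δ) * ‖z / β - α‖ := by gcongr

end NormedDivisionRing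

theorem lt_mul_div_add_of_lt_half {𝕜 : Type*} [Field 𝕜] [LinearOrder 𝕜] [IsStrictOrderedRing 𝕜]
    {a δ M ε : 𝕜} (hδ : 0 < δ) (hM : 0 ≤ M) (hε : 0 < ε) (hεa : ε < a / 2)
    (h : M + 2 * M / a * ε < a * δ / ε) : ε < a * δ / (M + δ) := by
  have ha : 0 < a := by linarith
  have hsub : 0 < a - ε := by linarith
  have hMa : a * M ≤ (a - ε) * (M + 2 * M / a * ε) := by
    have : 0 ≤ 2 * M * ε / a * (a / 2 - ε) := mul_nonneg (by positivity) (sub_nonneg.2 hεa.le)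
    calc a * M ≤ a * M + 2 * M * ε / a * (a / 2 - ε) := le_add_of_nonneg_right this
      _ = (a - ε) * (M + 2 * M / a * ε) := by field_simp; ring
  have hlt : a * (M * ε) < a * ((a - ε) * δ) :=
    calc a * (M * ε) = a * M * ε := by ring
      _ ≤ (a - ε) * (M + 2 * M / a * ε) * ε := by gcongr
      _ = (a - ε) * ((M + 2 * M / a * ε) * ε) := by ring
      _ < (a - ε) * (a * δ) := mul_lt_mul_of_pos_left ((lt_div_iff₀ hε).1 h) hsub
      _ = a * ((a - ε) * δ) := by ring
  rw [lt_div_iff₀ (by positivity)]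
  linarith [lt_of_mul_lt_mul_left hlt ha.le]

/-- **Lemma 3.3.** Let `A`, `B` be non-empty closed discrete subsets of `ℂ`,
`A' := A ∖ {0}`, `B' := B ∖ {0}`, `a := min {|α| : α ∈ A'}`. Let `γ : [0,1] → ℂ` and
`δ, M > 0` be such that `δ ≤ |γ(t)| ≤ M` and `|γ(t) − αβ| ≥ δ` for all `t ∈ [0,1]` and
`(α,β) ∈ A × B`. If `ε > 0` satisfies `ε < a/2` and `aδ/ε > M + (2M/a)ε`, then
`dist(γ(t)/β, A') ≥ ε` for every `β ∈ B'` and every `t ∈ [0,1]`. -/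
theorem dist_to_A'_ge_eps
    (A B : Set ℂ) (hA : A.Nonempty) (hB : B.Nonempty)
    (hAclosed : IsClosed A) (hBclosed : IsClosed B)
    (hAdisc : DiscreteTopology A) (hBdisc : DiscreteTopology B)
    (a : ℝ) (ha : IsLeast ((fun α : ℂ => ‖α‖) '' (A \ {0})) a)
    (γ : ℝ → ℂ) (δ M : ℝ) (hδ : 0 < δ) (hM : 0 < M)
    (hγbounds : ∀ t ∈ Set.Icc (0:ℝ) 1, δ ≤ ‖γ t‖ ∧ ‖γ t‖ ≤ M)
    (hγAB : ∀ t ∈ Set.Icc (0:ℝ) 1, ∀ α ∈ A, ∀ β ∈ B, δ ≤ ‖γ t - α * β‖)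
    (ε : ℝ) (hε0 : 0 < ε) (hε1 : ε < a / 2) (hε2 : M + (2 * M / a) * ε < a * δ / ε) :
    ∀ β ∈ B \ ({0} : Set ℂ), ∀ t ∈ Set.Icc (0:ℝ) 1,
      ε ≤ Metric.infDist (γ t / β) (A \ {0}) := fun β hβ t ht =>
  (lt_mul_div_add_of_lt_half hδ hM.le hε0 hε1 hε2).le.trans <|
    dist_to_A'_ge_eps_general ha.nonempty.of_image (fun _ hα => ha.2 (Set.mem_image_of_mem _ hα))
      hβ.2 hδ (hγbounds t ht).2 fun α hα => hγAB t ht α hα.1 β hβ.1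
end

section
/- Let A and B be non-empty closed discrete subsets of ℂ, A' := A∖{0}, B' := B∖{0}, a := min{|α| : α ∈ A'}. Let γ : [0,1] → ℂ be a C¹ path with Lipschitz derivative and δ, M > 0 with δ ≤ |γ(t)| ≤ M and |γ(t) − αβ| ≥ δ for all (α,β) ∈ A × B and t ∈ [0,1]. Choose ε > 0 with ε < a/2 and aδ/ε > M + (2M/a)ε, set η(ζ) := min(dist(ζ, A')/ε, 1) and c(t,ζ) := η(ζ)·ζ/γ(t). Then c : [0,1] × ℂ → ℂ is locally Lipschitz, |c(t,ζ)| ≤ |ζ|/δ for all (t,ζ), c(t,α) = 0 for all t ∈ [0,1] and α ∈ {0} ∪ A', and c(t, γ(t)/β) = 1/β for all t ∈ [0,1] and β ∈ B'. -/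
/-!
The cutoff `η` is Lipschitz and `γ` is Lipschitz and bounded away from `0`, so `c` is the
composition of a locally Lipschitz map with the smooth function `(r, z, w) ↦ r • z / w` on
`{w ≠ 0}`. The interpolation property says that `η = 1` at `γ t / β`, that is, that no `α ∈ A'`
is within `ε` of `γ t / β`. For such an `α`, the separation hypothesis gives `δ < ε ‖β‖`, while
`a ‖β‖ ≤ ‖α * β‖ ≤ M + ε ‖β‖`. As `ε < a / 2`, the latter forces `‖β‖ < 2 * M / a`, and
reinserting this bound contradicts the smallness condition on `ε`.
-/

open Metric Set Filter Topology

section LocallyLipschitz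

variable {X Y Z : Type*} [PseudoEMetricSpace X] [PseudoEMetricSpace Y] [PseudoEMetricSpace Z]
  {s : Set X}

theorem locallyLipschitzOn_comp {t : Set Y} {g : Y → Z} {f : X → Y}
    (hg : LocallyLipschitzOn t g) (hf : LocallyLipschitzOn s f) (hst : MapsTo f s t) :
    LocallyLipschitzOn s (g ∘ f) := by
  intro x hx
  obtain ⟨Kg, v, hv, hgv⟩ := hg (hst hx)
  obtain ⟨Kf, u, hu, hfu⟩ := hf hx
  have hfx : Tendsto f (𝓝[s] x) (𝓝[t] f x) := (hf.continuousOn x hx).tendsto_nhdsWithin hst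
  exact ⟨Kg * Kf, u ∩ f ⁻¹' v, inter_mem hu (hfx hv),
    hgv.comp (hfu.mono inter_subset_left) fun _ hy ↦ hy.2⟩

theorem locallyLipschitzOn_prodMk {f : X → Y} {g : X → Z}
    (hf : LocallyLipschitzOn s f) (hg : LocallyLipschitzOn s g) :
    LocallyLipschitzOn s fun x ↦ (f x, g x) := by
  intro x hx
  obtain ⟨Kf, u, hu, hfu⟩ := hf hx
  obtain ⟨Kg, v, hv, hgv⟩ := hg hx
  exact ⟨max Kf Kg, u ∩ v, inter_mem hu hv,
    (hfu.mono inter_subset_left).prodMk (hgv.mono inter_subset_right)⟩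

variable {E F : Type*} [NormedAddCommGroup E] [NormedSpace ℝ E]
  [NormedAddCommGroup F] [NormedSpace ℝ F]

theorem locallyLipschitzOn_of_contDiffAt {f : E → F} {s : Set E}
    (hf : ∀ x ∈ s, ContDiffAt ℝ 1 f x) : LocallyLipschitzOn s f := by
  intro x hx
  obtain ⟨K, u, hu, hfu⟩ := (hf x hx).exists_lipschitzOnWith
  exact ⟨K, u, mem_nhdsWithin_of_mem_nhds hu, hfu⟩

theorem locallyLipschitzOn_of_hasDerivWithinAt {s : Set ℝ} (hs : Convex ℝ s)
    (hs' : UniqueDiffOn ℝ s) {f f' : ℝ → F} (hf : ∀ t ∈ s, HasDerivWithinAt f (f' t) s t)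
    (hf' : ContinuousOn f' s) : LocallyLipschitzOn s f := by
  have hderiv : ∀ t ∈ s, derivWithin f s t = f' t := fun t ht ↦ (hf t ht).derivWithin (hs' t ht)
  have hC1 : ContDiffOn ℝ 1 f s := (contDiffOn_one_iff_derivWithin hs').2
    ⟨fun t ht ↦ (hf t ht).differentiableWithinAt, hf'.congr hderiv⟩
  exact hC1.locallyLipschitzOn hs

theorem locallyLipschitzOn_smul_div {𝕜 : Type*} [NormedField 𝕜] [NormedAlgebra ℝ 𝕜]
    {r : X → ℝ} {f g : X → 𝕜} (hr : LocallyLipschitzOn s r) (hf : LocallyLipschitzOn s f)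
    (hg : LocallyLipschitzOn s g) (hg0 : ∀ x ∈ s, g x ≠ 0) :
    LocallyLipschitzOn s fun x ↦ r x • f x / g x := by
  have hsmooth : LocallyLipschitzOn {q : ℝ × 𝕜 × 𝕜 | q.2.2 ≠ 0} fun q ↦ q.1 • q.2.1 / q.2.2 := by
    refine locallyLipschitzOn_of_contDiffAt fun q (hq : q.2.2 ≠ 0) ↦ ?_
    simp only [div_eq_mul_inv]
    exact (contDiffAt_fst.smul contDiffAt_snd.fst).mul (contDiffAt_snd.snd.inv hq)
  exact locallyLipschitzOn_comp hsmooth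
    (locallyLipschitzOn_prodMk hr (locallyLipschitzOn_prodMk hf hg)) hg0

end LocallyLipschitz

section DistCutoff

variable {X : Type*} [PseudoMetricSpace X]

/-- The cutoff `η(x) = min(dist(x, S)/ε, 1)`, which vanishes on `S` and equals `1` at distance
at least `ε` from `S`. Since `infDist x ∅ = 0`, it is identically `0` for `S = ∅`. -/
noncomputable def distCutoff (ε : ℝ) (S : Set X) (x : X) : ℝ :=
  min (infDist x S / ε) 1

variable {ε : ℝ} {S : Set X} {x : X}

theorem abs_distCutoff_le_one (hε : 0 ≤ ε) : |distCutoff ε S x| ≤ 1 := by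
  have hnonneg : 0 ≤ distCutoff ε S x := le_min (div_nonneg infDist_nonneg hε) zero_le_one
  exact (abs_of_nonneg hnonneg).trans_le (min_le_right _ _)

theorem distCutoff_of_mem (hx : x ∈ S) : distCutoff ε S x = 0 := by
  simp [distCutoff, infDist_zero_of_mem hx]

theorem distCutoff_eq_one (hε : 0 < ε) (hS : S.Nonempty) (hx : ∀ y ∈ S, ε ≤ dist x y) :
    distCutoff ε S x = 1 :=
  min_eq_right ((one_le_div hε).2 ((le_infDist hS).2 hx))

theorem lipschitzWith_distCutoff (ε : ℝ) (S : Set X) :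
    LipschitzWith ‖ε⁻¹‖₊ (distCutoff ε S) := by
  have hscaled : LipschitzWith ‖ε⁻¹‖₊ fun x ↦ infDist x S / ε := by
    simpa only [Function.comp_def, smul_eq_mul, mul_one, ← div_eq_inv_mul] using
      (lipschitzWith_smul ε⁻¹).comp (lipschitz_infDist_pt S)
  exact hscaled.min_const 1

end DistCutoff

theorem le_dist_div_of_le_norm_sub_mul {𝕜 : Type*} [NormedField 𝕜] {a δ ε M : ℝ} {w α β : 𝕜}
    (hε0 : 0 < ε) (hε1 : ε < a / 2) (hε2 : M + 2 * M / a * ε < a * δ / ε) (hα : a ≤ ‖α‖)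
    (hβ : β ≠ 0) (hw : ‖w‖ ≤ M) (hsep : δ ≤ ‖w - α * β‖) : ε ≤ dist (w / β) α := by
  by_contra! hclose
  have ha : 0 < a := by linarith
  have hβ0 : 0 < ‖β‖ := norm_pos_iff.2 hβ
  have hnear : ‖w - α * β‖ < ε * ‖β‖ := calc
    ‖w - α * β‖ = dist (w / β) α * ‖β‖ := by
      rw [dist_eq_norm, ← norm_mul, sub_mul, div_mul_cancel₀ _ hβ]
    _ < ε * ‖β‖ := mul_lt_mul_of_pos_right hclose hβ0
  have hupper : a * ‖β‖ ≤ M + ε * ‖β‖ := calc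
    a * ‖β‖ ≤ ‖α * β‖ := by rw [norm_mul]; gcongr
    _ ≤ ‖w‖ + ‖w - α * β‖ := norm_le_norm_add_norm_sub _ _
    _ ≤ M + ε * ‖β‖ := add_le_add hw hnear.le
  have hβbound : ‖β‖ < 2 * M / a := by
    have hhalf : ε * ‖β‖ < a / 2 * ‖β‖ := by gcongr
    rw [lt_div_iff₀ ha]
    linarith
  have hlt : a * ‖β‖ < a * ‖β‖ := calc
    a * ‖β‖ ≤ M + ‖β‖ * ε := by rwa [mul_comm ‖β‖]
    _ < M + 2 * M / a * ε := by gcongr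
    _ < a * δ / ε := hε2
    _ ≤ a * (ε * ‖β‖) / ε := by gcongr; exact hsep.trans hnear.le
    _ = a * ‖β‖ := by field_simp
  exact hlt.false

section CField

variable {X 𝕜 : Type*} [NormedField 𝕜] [NormedAlgebra ℝ 𝕜]

/-- The field `c(t, ζ) = η(ζ) ζ / γ(t)` on `X × 𝕜` (in the theorem, `[0,1] × ℂ`), where `η` is
the cutoff at distance `ε` from the set `A` of nonzero singularities. It is uncurried, so that
local Lipschitz continuity refers to both variables jointly. -/
noncomputable def cField (ε : ℝ) (A : Set 𝕜) (γ : X → 𝕜) (p : X × 𝕜) : 𝕜 :=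
  distCutoff ε A p.2 • p.2 / γ p.1

variable {A : Set 𝕜} {γ : X → 𝕜} {ε : ℝ} {t : X}

theorem locallyLipschitzOn_cField [PseudoEMetricSpace X] {T : Set X} (ε : ℝ) (A : Set 𝕜)
    (hγ : LocallyLipschitzOn T γ) (hγ0 : ∀ t ∈ T, γ t ≠ 0) :
    LocallyLipschitzOn (T ×ˢ univ) (cField ε A γ) :=
  locallyLipschitzOn_smul_div
    ((lipschitzWith_distCutoff ε A).comp LipschitzWith.prod_snd).locallyLipschitz.locallyLipschitzOn
    LipschitzWith.prod_snd.locallyLipschitz.locallyLipschitzOn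
    (locallyLipschitzOn_comp hγ LipschitzWith.prod_fst.locallyLipschitz.locallyLipschitzOn
      fun _ hp ↦ hp.1)
    fun p hp ↦ hγ0 p.1 hp.1

theorem norm_cField_le {δ : ℝ} (hε : 0 ≤ ε) (hδ : 0 < δ) (hγ : δ ≤ ‖γ t‖) (ζ : 𝕜) :
    ‖cField ε A γ (t, ζ)‖ ≤ ‖ζ‖ / δ := by
  rw [cField, norm_div, norm_smul, Real.norm_eq_abs]
  have hη : |distCutoff ε A ζ| * ‖ζ‖ ≤ ‖ζ‖ :=
    mul_le_of_le_one_left (norm_nonneg ζ) (abs_distCutoff_le_one hε)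
  gcongr

theorem cField_eq_zero {α : 𝕜} (hα : α ∈ ({0} : Set 𝕜) ∪ A) : cField ε A γ (t, α) = 0 := by
  rcases hα with rfl | hα
  · simp [cField]
  · simp [cField, distCutoff_of_mem hα]

theorem cField_div (hγ : γ t ≠ 0) {β : 𝕜} (hη : distCutoff ε A (γ t / β) = 1) :
    cField ε A γ (t, γ t / β) = 1 / β := by
  rw [cField, hη, one_smul, div_right_comm, div_self hγ]

/-- `A` and `B` play the roles of `A'` and `B'`. -/
theorem c_field_properties_general [PseudoMetricSpace X] {B : Set 𝕜}
    (hA : A.Nonempty) (hB : 0 ∉ B) {a : ℝ} (ha : ∀ α ∈ A, a ≤ ‖α‖)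
    {T : Set X} (hγlip : LocallyLipschitzOn T γ) {δ M : ℝ} (hδ : 0 < δ)
    (hγ : ∀ t ∈ T, δ ≤ ‖γ t‖ ∧ ‖γ t‖ ≤ M)
    (hγAB : ∀ t ∈ T, ∀ α ∈ A, ∀ β ∈ B, δ ≤ ‖γ t - α * β‖)
    (hε0 : 0 < ε) (hε1 : ε < a / 2) (hε2 : M + 2 * M / a * ε < a * δ / ε) :
    LocallyLipschitzOn (T ×ˢ univ) (cField ε A γ) ∧
    (∀ t ∈ T, ∀ ζ, ‖cField ε A γ (t, ζ)‖ ≤ ‖ζ‖ / δ) ∧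
    (∀ t ∈ T, ∀ α ∈ ({0} : Set 𝕜) ∪ A, cField ε A γ (t, α) = 0) ∧
    (∀ t ∈ T, ∀ β ∈ B, cField ε A γ (t, γ t / β) = 1 / β) := by
  have hγ0 : ∀ t ∈ T, γ t ≠ 0 := fun t ht ↦ norm_pos_iff.1 (hδ.trans_le (hγ t ht).1)
  refine ⟨locallyLipschitzOn_cField ε A hγlip hγ0,
    fun t ht ↦ norm_cField_le hε0.le hδ (hγ t ht).1,
    fun t _ α ↦ cField_eq_zero,
    fun t ht β hβ ↦ cField_div (hγ0 t ht) (distCutoff_eq_one hε0 hA fun α hα ↦ ?_)⟩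
  exact le_dist_div_of_le_norm_sub_mul hε0 hε1 hε2 (ha α hα) (ne_of_mem_of_not_mem hβ hB)
    (hγ t ht).2 (hγAB t ht α hα β hβ)

end CField

/-- **Section 3.2.** With `A`, `B` non-empty closed discrete, `A' := A ∖ {0}`,
`B' := B ∖ {0}`, `a := min {|α| : α ∈ A'}`, `γ : [0,1] → ℂ` a `C¹` path with Lipschitz
derivative satisfying `δ ≤ |γ(t)| ≤ M` and `|γ(t) − αβ| ≥ δ` for all `(α,β) ∈ A × B`,
and `ε > 0` with `ε < a/2` and `aδ/ε > M + (2M/a)ε`, the function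
`c(t,ζ) := η(ζ)·ζ/γ(t)`, where `η(ζ) := min(dist(ζ,A')/ε, 1)`, is locally Lipschitz on
`[0,1] × ℂ`, bounded by `|ζ|/δ`, vanishes at the points of `{0} ∪ A'`, and satisfies
`c(t, γ(t)/β) = 1/β` for every `β ∈ B'`. -/
theorem c_field_properties
    (A B : Set ℂ) (hA : A.Nonempty) (hB : B.Nonempty)
    (hAclosed : IsClosed A) (hBclosed : IsClosed B)
    (hAdisc : DiscreteTopology A) (hBdisc : DiscreteTopology B)
    (a : ℝ) (ha : IsLeast ((fun α : ℂ => ‖α‖) '' (A \ {0})) a)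
    (γ γ' : ℝ → ℂ)
    (hγderiv : ∀ t ∈ Set.Icc (0:ℝ) 1, HasDerivWithinAt γ (γ' t) (Set.Icc (0:ℝ) 1) t)
    (L : NNReal) (hγ'lip : LipschitzOnWith L γ' (Set.Icc 0 1))
    (δ M : ℝ) (hδ : 0 < δ) (hM : 0 < M)
    (hγbounds : ∀ t ∈ Set.Icc (0:ℝ) 1, δ ≤ ‖γ t‖ ∧ ‖γ t‖ ≤ M)
    (hγAB : ∀ t ∈ Set.Icc (0:ℝ) 1, ∀ α ∈ A, ∀ β ∈ B, δ ≤ ‖γ t - α * β‖)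
    (ε : ℝ) (hε0 : 0 < ε) (hε1 : ε < a / 2) (hε2 : M + (2 * M / a) * ε < a * δ / ε) :
    LocallyLipschitzOn ((Set.Icc (0:ℝ) 1) ×ˢ (Set.univ : Set ℂ))
      (fun p : ℝ × ℂ =>
        ((min (Metric.infDist p.2 (A \ {0}) / ε) 1 : ℝ) : ℂ) * p.2 / γ p.1) ∧
    (∀ t ∈ Set.Icc (0:ℝ) 1, ∀ ζ : ℂ,
      ‖((min (Metric.infDist ζ (A \ {0}) / ε) 1 : ℝ) : ℂ) * ζ / γ t‖ ≤ ‖ζ‖ / δ) ∧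
    (∀ t ∈ Set.Icc (0:ℝ) 1, ∀ α ∈ ({0} : Set ℂ) ∪ A \ {0},
      ((min (Metric.infDist α (A \ {0}) / ε) 1 : ℝ) : ℂ) * α / γ t = 0) ∧
    (∀ t ∈ Set.Icc (0:ℝ) 1, ∀ β ∈ B \ ({0} : Set ℂ),
      ((min (Metric.infDist (γ t / β) (A \ {0}) / ε) 1 : ℝ) : ℂ) * (γ t / β) / γ t
        = 1 / β) := by
  have hγlip := locallyLipschitzOn_of_hasDerivWithinAt (convex_Icc 0 1)
    (uniqueDiffOn_Icc zero_lt_one) hγderiv hγ'lip.continuousOn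
  exact c_field_properties_general (image_nonempty.1 ⟨a, ha.1⟩) (fun h ↦ h.2 rfl)
    (fun α hα ↦ ha.2 ⟨α, hα, rfl⟩) hγlip hδ hγbounds
    (fun t ht α hα β hβ ↦ hγAB t ht α hα.1 β hβ.1) hε0 hε1 hε2
end

section
/- Let A be a non-empty closed discrete subset of ℂ with A∖{0} non-empty, and set a := min{|α| : α ∈ A∖{0}}. If f is an A-continuable holomorphic germ at 0, then the radius of convergence of f is at least a. -/
open Filter

/-!
A power series with finite radius of convergence `R` has a singular point on the circle of radius
`R`: otherwise local analytic extensions at the points of the circle, which agree with the sum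
inside the disc, glue to an analytic function on a neighbourhood of the closed disc, and Cauchy's
formula makes the Taylor series converge on a larger disc. On the other hand, continuing the germ
along a radius that avoids `A` shows that the endpoint of this radius is not singular. So the radius
to the singular point meets `A` away from the origin.
-/

open Metric Set Topology
open scoped NNReal ENNReal

theorem exists_forall_eqOn_of_eqOn_inter {ι α β : Type*} [Nonempty β] {U : ι → Set α}
    {G : ι → α → β} (hG : ∀ i j, EqOn (G i) (G j) (U i ∩ U j)) :
    ∃ g : α → β, ∀ i, EqOn g (G i) (U i) := by
  classical
  refine ⟨fun x => if hx : ∃ i, x ∈ U i then G hx.choose x else Classical.arbitrary β,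
    fun i x hxi => ?_⟩
  have hx : ∃ i, x ∈ U i := ⟨i, hxi⟩
  simpa only [dif_pos hx] using hG hx.choose i ⟨hx.choose_spec, hxi⟩

section RegularPoint

variable {𝕜 E F : Type*} [NontriviallyNormedField 𝕜] [NormedAddCommGroup E] [NormedSpace 𝕜 E]
  [NormedAddCommGroup F] [NormedSpace 𝕜 F] {f : E → F} {U : Set E}

variable (𝕜) in
/-- The function `f`, considered on `U` only, extends analytically to a neighbourhood of `w`.
This is meant for `w ∈ closure U`; unlike for `AnalyticWithinAt 𝕜 f U w`, the value `f w` does not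
matter when `w ∉ U`. -/
def IsRegularPoint (f : E → F) (U : Set E) (w : E) : Prop :=
  ∃ g : E → F, AnalyticAt 𝕜 g w ∧ g =ᶠ[𝓝[U] w] f

theorem IsRegularPoint.exists_ball [CompleteSpace F] {w : E} (hw : IsRegularPoint 𝕜 f U w) :
    ∃ r > 0, ∃ g : E → F, AnalyticOnNhd 𝕜 g (ball w r) ∧ EqOn g f (ball w r ∩ U) := by
  obtain ⟨g, hg, hgf⟩ := hw
  obtain ⟨r, hr, hball⟩ := eventually_nhds_iff_ball.1
    (hg.eventually_analyticAt.and (eventually_nhdsWithin_iff.1 hgf))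
  exact ⟨r, hr, g, fun z hz => (hball z hz).1, fun z hz => (hball z hz.1).2 hz.2⟩

variable [NormedSpace ℝ E] {g₁ g₂ : E → F} {x y : E} {r s : ℝ}

theorem eqOn_ball_inter_ball_of_mem_closure (hU : IsOpen U)
    (hg₁ : AnalyticOnNhd 𝕜 g₁ (ball x r)) (hg₂ : AnalyticOnNhd 𝕜 g₂ (ball y s))
    (hf₁ : EqOn g₁ f (ball x r ∩ U)) (hf₂ : EqOn g₂ f (ball y s ∩ U))
    (hy : y ∈ closure U) (hyx : y ∈ ball x r) (hs : 0 < s) :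
    EqOn g₁ g₂ (ball x r ∩ ball y s) := by
  have hopen : IsOpen (ball x r ∩ ball y s) := isOpen_ball.inter isOpen_ball
  obtain ⟨p, hp, hpU⟩ := mem_closure_iff.1 hy _ hopen ⟨hyx, mem_ball_self hs⟩
  have hgp : g₁ =ᶠ[𝓝 p] g₂ := by
    filter_upwards [hopen.mem_nhds hp, hU.mem_nhds hpU] with z hz hzU
    rw [hf₁ ⟨hz.1, hzU⟩, hf₂ ⟨hz.2, hzU⟩]
  exact (hg₁.mono inter_subset_left).eqOn_of_preconnected_of_eventuallyEq
    (hg₂.mono inter_subset_right) ((convex_ball x r).inter (convex_ball y s)).isPreconnected hp hgp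

-- The radii are halved so that, if the small balls meet, then the larger of the original balls
-- contains the centre of the other one.
theorem eqOn_ball_half_inter_ball_half (hU : IsOpen U)
    (hg₁ : AnalyticOnNhd 𝕜 g₁ (ball x r)) (hg₂ : AnalyticOnNhd 𝕜 g₂ (ball y s))
    (hf₁ : EqOn g₁ f (ball x r ∩ U)) (hf₂ : EqOn g₂ f (ball y s ∩ U))
    (hx : x ∈ closure U) (hy : y ∈ closure U) :
    EqOn g₁ g₂ (ball x (r / 2) ∩ ball y (s / 2)) := by
  rintro z ⟨hzx, hzy⟩
  have hr : 0 < r := by linarith [pos_of_mem_ball hzx]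
  have hs : 0 < s := by linarith [pos_of_mem_ball hzy]
  have hzx' : z ∈ ball x r := ball_subset_ball (by linarith) hzx
  have hzy' : z ∈ ball y s := ball_subset_ball (by linarith) hzy
  have hxy : dist x y < r / 2 + s / 2 :=
    (dist_triangle_left x y z).trans_lt (add_lt_add hzx hzy)
  rcases le_total s r with hsr | hrs
  · have hyx : y ∈ ball x r := mem_ball'.2 (by linarith)
    exact eqOn_ball_inter_ball_of_mem_closure hU hg₁ hg₂ hf₁ hf₂ hy hyx hs ⟨hzx', hzy'⟩
  · have hxy : x ∈ ball y s := mem_ball.2 (by linarith)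
    exact (eqOn_ball_inter_ball_of_mem_closure hU hg₂ hg₁ hf₂ hf₁ hx hxy hr ⟨hzy', hzx'⟩).symm

theorem exists_analyticOnNhd_closure_of_isRegularPoint [CompleteSpace F] (hU : IsOpen U)
    (hf : ∀ w ∈ closure U, IsRegularPoint 𝕜 f U w) :
    ∃ g : E → F, AnalyticOnNhd 𝕜 g (closure U) ∧ EqOn g f U := by
  choose r hr G hG hGf using fun w : closure U => (hf w w.2).exists_ball
  obtain ⟨g, hg⟩ := exists_forall_eqOn_of_eqOn_inter fun w w' : closure U =>
    eqOn_ball_half_inter_ball_half hU (hG w) (hG w') (hGf w) (hGf w') w.2 w'.2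
  refine ⟨g, fun w hw => ?_, fun w hw => ?_⟩
  · have hgG : g =ᶠ[𝓝 w] G ⟨w, hw⟩ :=
      (hg ⟨w, hw⟩).eventuallyEq_of_mem (ball_mem_nhds w (half_pos (hr _)))
    exact (hG ⟨w, hw⟩ w (mem_ball_self (hr _))).congr hgG.symm
  · let w' : closure U := ⟨w, subset_closure hw⟩
    exact (hg w' (mem_ball_self (half_pos (hr w')))).trans (hGf w' ⟨mem_ball_self (hr w'), hw⟩)

end RegularPoint

section PowerSeries

variable {F : Type*} [NormedAddCommGroup F] [NormedSpace ℂ F] [CompleteSpace F] {f : ℂ → F}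
  {p : FormalMultilinearSeries ℂ ℂ F} {x : ℂ} {R : ℝ≥0}

theorem lt_radius_of_analyticOnNhd_closedBall (hp : HasFPowerSeriesAt f p x)
    (hf : AnalyticOnNhd ℂ f (closedBall x R)) : (R : ℝ≥0∞) < p.radius := by
  obtain ⟨δ, hδ, hsub⟩ :=
    (isCompact_closedBall x (R : ℝ)).exists_cthickening_subset_open (isOpen_analyticAt ℂ f) hf
  rw [cthickening_closedBall hδ.le R.coe_nonneg] at hsub
  lift δ to ℝ≥0 using hδ.le
  have hδR : R < δ + R := lt_add_of_pos_left R (NNReal.coe_pos.1 hδ)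
  have hdiff : DifferentiableOn ℂ f (closedBall x (δ + R : ℝ≥0)) := fun z hz =>
    (hsub hz).differentiableAt.differentiableWithinAt
  have hcauchy := hdiff.hasFPowerSeriesOnBall (pos_of_gt hδR)
  rw [hp.eq_formalMultilinearSeries hcauchy.hasFPowerSeriesAt]
  exact (ENNReal.coe_lt_coe.2 hδR).trans_le hcauchy.r_le

theorem exists_mem_sphere_not_isRegularPoint (hp : HasFPowerSeriesOnBall f p x R)
    (hR : p.radius ≤ R) : ∃ w ∈ sphere x R, ¬ IsRegularPoint ℂ f (ball x R) w := by
  by_contra! hreg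
  have hRpos : 0 < (R : ℝ) := by exact_mod_cast hp.r_pos
  have hclosure : closure (ball x (R : ℝ)) = closedBall x R := closure_ball x hRpos.ne'
  have hf : AnalyticOnNhd ℂ f (ball x R) := by simpa only [eball_coe] using hp.analyticOnNhd
  have hreg' : ∀ w ∈ closure (ball x (R : ℝ)), IsRegularPoint ℂ f (ball x R) w := by
    rw [hclosure, ← ball_union_sphere]
    rintro w (hw | hw)
    exacts [⟨f, hf w hw, EventuallyEq.rfl⟩, hreg w hw]
  obtain ⟨g, hg, hgf⟩ := exists_analyticOnNhd_closure_of_isRegularPoint isOpen_ball hreg'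
  have hgp : HasFPowerSeriesAt g p x := hp.hasFPowerSeriesAt.congr
    (hgf.eventuallyEq_of_mem (ball_mem_nhds x hRpos)).symm
  exact (lt_radius_of_analyticOnNhd_closedBall hgp (hclosure ▸ hg)).not_ge hR

end PowerSeries

section Continuation

variable {𝕜 E F T : Type*} [NontriviallyNormedField 𝕜] [NormedAddCommGroup E] [NormedSpace 𝕜 E]
  [NormedAddCommGroup F] [NormedSpace 𝕜 F] [TopologicalSpace T]

variable (𝕜) in
/-- The germs of `Φ t` at `γ t`, for `t ∈ S`, continue each other analytically along `γ`. Unlike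
`AnalyticContinuationAlong`, this allows for paths without their endpoint, as needed for
continuation to a boundary point. -/
structure IsAnalyticContinuationOn (Φ : T → E → F) (γ : T → E) (S : Set T) : Prop where
  analyticAt : ∀ t ∈ S, AnalyticAt 𝕜 (Φ t) (γ t)
  eventuallyEq : ∀ t ∈ S, ∀ᶠ s in 𝓝[S] t, Φ s =ᶠ[𝓝 (γ s)] Φ t

variable {Φ Ψ : T → E → F} {γ : T → E} {S S' : Set T}

theorem IsAnalyticContinuationOn.mono (hΦ : IsAnalyticContinuationOn 𝕜 Φ γ S) (hS : S' ⊆ S) :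
    IsAnalyticContinuationOn 𝕜 Φ γ S' where
  analyticAt t ht := hΦ.analyticAt t (hS ht)
  eventuallyEq t ht := (hΦ.eventuallyEq t (hS ht)).filter_mono (nhdsWithin_mono t hS)

theorem isAnalyticContinuationOn_const {f : E → F} {U : Set E} (hf : AnalyticOnNhd 𝕜 f U)
    (hγ : MapsTo γ S U) : IsAnalyticContinuationOn 𝕜 (fun _ => f) γ S where
  analyticAt t ht := hf (γ t) (hγ ht)
  eventuallyEq _ _ := Eventually.of_forall fun _ => EventuallyEq.rfl

variable [NormedSpace ℝ E] [CompleteSpace F]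

theorem eventually_eventuallyEq_nhds_iff_of_analyticAt {f g : E → F} {z : E}
    (hf : AnalyticAt 𝕜 f z) (hg : AnalyticAt 𝕜 g z) :
    ∀ᶠ w in 𝓝 z, (f =ᶠ[𝓝 z] g ↔ f =ᶠ[𝓝 w] g) := by
  obtain ⟨r, hr, hball⟩ :=
    eventually_nhds_iff_ball.1 (hf.eventually_analyticAt.and hg.eventually_analyticAt)
  have eqOn_ball {w : E} (hw : w ∈ ball z r) (hfg : f =ᶠ[𝓝 w] g) : EqOn f g (ball z r) :=
    AnalyticOnNhd.eqOn_of_preconnected_of_eventuallyEq (fun u hu => (hball u hu).1)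
      (fun u hu => (hball u hu).2) (convex_ball z r).isPreconnected hw hfg
  filter_upwards [ball_mem_nhds z hr] with w hw
  exact ⟨fun h => (eqOn_ball (mem_ball_self hr) h).eventuallyEq_of_mem (isOpen_ball.mem_nhds hw),
    fun h => (eqOn_ball hw h).eventuallyEq_of_mem (ball_mem_nhds z hr)⟩

theorem IsAnalyticContinuationOn.eventuallyEq_of_isPreconnected
    (hΦ : IsAnalyticContinuationOn 𝕜 Φ γ S) (hΨ : IsAnalyticContinuationOn 𝕜 Ψ γ S)
    (hγ : ContinuousOn γ S) (hS : IsPreconnected S) {a b : T} (ha : a ∈ S) (hb : b ∈ S)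
    (hab : Φ a =ᶠ[𝓝 (γ a)] Ψ a) : Φ b =ᶠ[𝓝 (γ b)] Ψ b := by
  suffices (Φ a =ᶠ[𝓝 (γ a)] Ψ a) ↔ (Φ b =ᶠ[𝓝 (γ b)] Ψ b) from this.1 hab
  refine hS.induction₂ (fun s t => (Φ s =ᶠ[𝓝 (γ s)] Ψ s) ↔ (Φ t =ᶠ[𝓝 (γ t)] Ψ t))
    (fun t ht => ?_) (fun _ _ _ _ _ _ => Iff.trans) (fun _ _ _ _ => Iff.symm) ha hb
  have hlocal := (hγ t ht).eventually
    (eventually_eventuallyEq_nhds_iff_of_analyticAt (hΦ.analyticAt t ht) (hΨ.analyticAt t ht))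
  filter_upwards [hlocal, hΦ.eventuallyEq t ht, hΨ.eventuallyEq t ht] with s hs hΦs hΨs
  exact hs.trans ⟨fun h => hΦs.trans (h.trans hΨs.symm), fun h => hΦs.symm.trans (h.trans hΨs)⟩

end Continuation

namespace AnalyticContinuationAlong

variable {f : ℂ → ℂ} {γ : ℝ → ℂ} {Φ : ℝ → ℂ → ℂ} {U : Set ℂ}

theorem isAnalyticContinuationOn (hΦ : AnalyticContinuationAlong f γ Φ) :
    IsAnalyticContinuationOn ℂ Φ γ (Icc 0 1) :=
  ⟨hΦ.1, hΦ.2.2⟩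

theorem eventuallyEq_of_mem_Ico (hΦ : AnalyticContinuationAlong f γ Φ)
    (hγ : ContinuousOn γ (Ico 0 1)) (hf : AnalyticOnNhd ℂ f U) (hγU : MapsTo γ (Ico 0 1) U)
    {t : ℝ} (ht : t ∈ Ico (0 : ℝ) 1) : Φ t =ᶠ[𝓝 (γ t)] f :=
  (hΦ.isAnalyticContinuationOn.mono Ico_subset_Icc_self).eventuallyEq_of_isPreconnected
    (isAnalyticContinuationOn_const hf hγU) hγ isPreconnected_Ico
    (left_mem_Ico.2 one_pos) ht hΦ.2.1

theorem isRegularPoint (hΦ : AnalyticContinuationAlong f γ Φ) (hγ : ContinuousOn γ (Icc 0 1))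
    (hU : Convex ℝ U) (hf : AnalyticOnNhd ℂ f U) (hγU : MapsTo γ (Ico 0 1) U) :
    IsRegularPoint ℂ f U (γ 1) := by
  have hone : (1 : ℝ) ∈ Icc (0 : ℝ) 1 := right_mem_Icc.2 zero_le_one
  obtain ⟨r, hr, hΦ₁⟩ := (hΦ.1 1 hone).exists_ball_analyticOnNhd
  have hΦ_near : ∀ᶠ s in 𝓝[Ico 0 1] 1, Φ s =ᶠ[𝓝 (γ s)] Φ 1 :=
    (hΦ.2.2 1 hone).filter_mono (nhdsWithin_mono 1 Ico_subset_Icc_self)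
  have hγ_near : ∀ᶠ s in 𝓝[Ico 0 1] 1, γ s ∈ ball (γ 1) r :=
    ((hγ 1 hone).mono Ico_subset_Icc_self).eventually (ball_mem_nhds (γ 1) hr)
  have : (𝓝[Ico 0 1] (1 : ℝ)).NeBot := by
    rwa [← mem_closure_iff_nhdsWithin_neBot, closure_Ico zero_ne_one]
  obtain ⟨s, hs, hΦs, hγs⟩ := (eventually_mem_nhdsWithin.and (hΦ_near.and hγ_near)).exists
  have hΦf : Φ 1 =ᶠ[𝓝 (γ s)] f := hΦs.symm.trans
    (hΦ.eventuallyEq_of_mem_Ico (hγ.mono Ico_subset_Icc_self) hf hγU hs)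
  have heqOn : EqOn (Φ 1) f (ball (γ 1) r ∩ U) :=
    (hΦ₁.mono inter_subset_left).eqOn_of_preconnected_of_eventuallyEq (hf.mono inter_subset_right)
      ((convex_ball (γ 1) r).inter hU).isPreconnected ⟨hγs, hγU hs⟩ hΦf
  exact ⟨Φ 1, hΦ.1 1 hone, heqOn.eventuallyEq_of_mem
    (inter_comm _ _ ▸ inter_mem_nhdsWithin U (ball_mem_nhds (γ 1) hr))⟩

end AnalyticContinuationAlong

theorem hasFPowerSeriesOnBall_seriesSum {c : ℕ → ℂ} (hc : 0 < radiusOf c) :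
    HasFPowerSeriesOnBall (seriesSum c) (FormalMultilinearSeries.ofScalars ℂ c) 0 (radiusOf c) := by
  have hsum : seriesSum c = (FormalMultilinearSeries.ofScalars ℂ c).sum :=
    (FormalMultilinearSeries.ofScalarsSum_eq_tsum (E := ℂ) c).symm
  rw [hsum]
  exact FormalMultilinearSeries.hasFPowerSeriesOnBall _ hc

theorem ContinuableGerm.isRegularPoint {A : Set ℂ} {c : ℕ → ℂ} (hc : ContinuableGerm A c) {w : ℂ}
    (hw₀ : w ≠ 0) (hw : ‖w‖ₑ ≤ radiusOf c) (hA : ∀ t ∈ Ioc (0 : ℝ) 1, t • w ∉ A) :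
    IsRegularPoint ℂ (seriesSum c) (ball 0 ‖w‖) w := by
  -- The path has to start inside the disc of convergence, and away from `0`, which may lie in `A`.
  let γ : ℝ → ℂ := fun t => ((1 + t) / 2) • w
  have hγ : ContinuousOn γ (Icc 0 1) := by fun_prop
  have hγ_one : γ 1 = w := by simp [γ]
  have hγ_norm {t : ℝ} (ht : t ∈ Ico (0 : ℝ) 1) : ‖γ t‖ < ‖w‖ := by
    rw [norm_smul, Real.norm_of_nonneg (by linarith [ht.1])]
    exact mul_lt_of_lt_one_left (norm_pos_iff.2 hw₀) (by linarith [ht.2])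
  have hγA : ∀ t ∈ Icc (0 : ℝ) 1, γ t ∉ A := fun t ht =>
    hA _ ⟨by linarith [ht.1], by linarith [ht.2]⟩
  have hγ_zero : ‖γ 0‖ₑ < radiusOf c :=
    (ENNReal.coe_lt_coe.2 (hγ_norm (left_mem_Ico.2 one_pos))).trans_le hw
  have hanalytic : AnalyticOnNhd ℂ (seriesSum c) (ball 0 ‖w‖) := by
    rw [← eball_ofReal, ofReal_norm]
    exact (hasFPowerSeriesOnBall_seriesSum hc.1).analyticOnNhd.mono (eball_subset_eball hw)
  obtain ⟨Φ, hΦ⟩ := hc.2 γ hγ hγA hγ_zero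
  simpa only [hγ_one] using hΦ.isRegularPoint hγ (convex_ball 0 ‖w‖) hanalytic
    fun t ht => mem_ball_zero_iff.2 (hγ_norm ht)

theorem radius_of_continuable_germ_general {A : Set ℂ} {c : ℕ → ℂ} (hc : ContinuableGerm A c) :
    (⨅ α ∈ A \ {0}, ‖α‖ₑ) ≤ radiusOf c := by
  by_contra! hlt
  obtain ⟨R, hR⟩ : ∃ R : ℝ≥0, (R : ℝ≥0∞) = radiusOf c := ⟨_, ENNReal.coe_toNNReal hlt.ne_top⟩
  have hseries := hasFPowerSeriesOnBall_seriesSum hc.1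
  rw [← hR] at hseries
  obtain ⟨w, hw, hsingular⟩ := exists_mem_sphere_not_isRegularPoint hseries hR.ge
  have hw_norm : ‖w‖ = R := mem_sphere_zero_iff_norm.1 hw
  have hw_enorm : ‖w‖ₑ = radiusOf c := by
    rw [← hR, ← ofReal_norm, hw_norm, ENNReal.ofReal_coe_nnreal]
  have hw₀ : w ≠ 0 := enorm_pos.1 (hw_enorm ▸ hc.1)
  rw [← hw_norm] at hsingular
  refine hsingular (hc.isRegularPoint hw₀ hw_enorm.le fun t ht htA => hlt.not_ge ?_)
  calc (⨅ α ∈ A \ {0}, ‖α‖ₑ) ≤ ‖t • w‖ₑ := iInf₂_le _ ⟨htA, smul_ne_zero ht.1.ne' hw₀⟩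
    _ ≤ ‖w‖ₑ := by
      rw [enorm_le_iff_norm_le, norm_smul, Real.norm_of_nonneg ht.1.le]
      exact mul_le_of_le_one_left (norm_nonneg w) ht.2
    _ = radiusOf c := hw_enorm

/-- If `A` is a non-empty closed discrete subset of `ℂ` with `A ∖ {0}` non-empty and
`a := min {|α| : α ∈ A ∖ {0}}`, then every `A`-continuable germ has radius of
convergence at least `a`. -/
theorem radius_of_continuable_germ
    (A : Set ℂ) (hA : A.Nonempty)
    (hAclosed : IsClosed A) (hAdisc : DiscreteTopology A)
    (hA' : (A \ {0} : Set ℂ).Nonempty)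
    (a : ℝ) (ha : IsLeast ((fun α : ℂ => ‖α‖) '' (A \ {0})) a)
    (coeffs : ℕ → ℂ) (hf : ContinuableGerm A coeffs) :
    ENNReal.ofReal a ≤ radiusOf coeffs := by
  refine (le_iInf₂ fun α hα => ?_).trans (radius_of_continuable_germ_general hf)
  simpa only [ofReal_norm] using ENNReal.ofReal_le_ofReal (ha.2 (mem_image_of_mem _ hα))
end
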